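/- arXiv:1504.02583 — 4 statements merged into one kernel-verified Lean document; each statement's English description precedes it below -/
import Mathlib

section
/- If G is a simple graph of sufficiently large maximum degree Δ (i.e., there exists Δ₀ such that for all graphs G with Δ(G) = Δ ≥ Δ₀), then the strong chromatic index of G satisfies χ'ₛ(G) ≤ 1.93·Δ². -/
/-- Two unordered pairs of vertices share a vertex. -/
def sharesVertex {V : Type*} (e f : Sym2 V) : Prop := ∃ v, v ∈ e ∧ v ∈ f

/-- The square of the line graph of `G`: vertices are the edges of `G`, and two distinct
edges are adjacent if they are at distance at most 1 in `G`, i.e. they share a vertex or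
some edge of `G` shares a vertex with both. -/
def lineGraphSq {V : Type*} (G : SimpleGraph V) : SimpleGraph G.edgeSet where
  Adj e f := e ≠ f ∧ (sharesVertex e.1 f.1 ∨
    ∃ g : G.edgeSet, sharesVertex e.1 g.1 ∧ sharesVertex g.1 f.1)
  symm := by
    constructor
    rintro e f ⟨hne, h⟩
    refine ⟨hne.symm, ?_⟩
    rcases h with ⟨v, hv1, hv2⟩ | ⟨g, ⟨v, hv1, hv2⟩, ⟨w, hw1, hw2⟩⟩
    · exact Or.inl ⟨v, hv2, hv1⟩
    · exact Or.inr ⟨g, ⟨w, hw2, hw1⟩, ⟨v, hv2, hv1⟩⟩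
  loopless := ⟨fun e h => h.1 rfl⟩

open Finset
open scoped BigOperators

/-- Events of a finite product space determined by complementary sets of coordinates are
independent. -/
lemma card_filter_and_mul_card_pi {ι α : Type*} [Fintype ι] [DecidableEq ι] [Fintype α]
    (T : Finset ι) (P Q : (ι → α) → Prop) [DecidablePred P] [DecidablePred Q]
    (hP : ∀ x y, (∀ i ∈ T, x i = y i) → P x → P y)
    (hQ : ∀ x y, (∀ i ∉ T, x i = y i) → Q x → Q y) :
    #{x | P x ∧ Q x} * Fintype.card (ι → α) = #{x | P x} * #{x | Q x} := by
  rw [← card_univ, ← card_product, ← card_product]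
  refine card_nbij' (fun z => (T.piecewise z.1 z.2, T.piecewise z.2 z.1))
    (fun z => (T.piecewise z.1 z.2, T.piecewise z.2 z.1)) ?_ ?_ ?_ ?_
  · rintro ⟨x, y⟩ h
    simp only [coe_product, coe_filter, mem_univ, true_and, coe_univ, Set.mem_prod,
      Set.mem_ofPred_eq, Set.mem_univ, and_true] at h ⊢
    exact ⟨hP x _ (fun i hi => by simp [hi]) h.1, hQ x _ (fun i hi => by simp [hi]) h.2⟩
  · rintro ⟨x, y⟩ h
    simp only [coe_product, coe_filter, mem_univ, true_and, coe_univ, Set.mem_prod,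
      Set.mem_ofPred_eq, Set.mem_univ, and_true] at h ⊢
    exact ⟨hP x _ (fun i hi => by simp [hi]) h.1, hQ y _ (fun i hi => by simp [hi]) h.2⟩
  · rintro ⟨x, y⟩ -
    ext i <;> by_cases hi : i ∈ T <;> simp [hi]
  · rintro ⟨x, y⟩ -
    ext i <;> by_cases hi : i ∈ T <;> simp [hi]

/-- The symmetric Lovász local lemma for events of a finite product space: if each event `B v`
is determined by the coordinates in `T v`, has probability at most `p`, and `T v` meets at most
`D` of the sets `T w`, where `4 * p * D ≤ 1`, then some point avoids all events. -/
theorem exists_forall_not_of_lovasz {ι α κ : Type*} [Fintype ι] [DecidableEq ι] [Fintype α]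
    [Nonempty α] [Fintype κ] [DecidableEq κ] (B : κ → (ι → α) → Prop) (T : κ → Finset ι)
    (hB : ∀ v x y, (∀ i ∈ T v, x i = y i) → B v x → B v y) (p : ℝ) (D : ℕ) (hp : 4 * p < 1)
    (hpB : ∀ v, (Nat.card {x // B v x} : ℝ) ≤ p * Fintype.card (ι → α))
    (hD : ∀ v, #{w | ¬ Disjoint (T v) (T w)} ≤ D) (hpD : 4 * p * D ≤ 1) :
    ∃ x, ∀ v, ¬ B v x := by
  classical
  have hΩ : (0 : ℝ) < Fintype.card (ι → α) := by exact_mod_cast Fintype.card_pos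
  replace hpB : ∀ v, (#{x | B v x} : ℝ) ≤ p * Fintype.card (ι → α) := by
    intro v
    have := hpB v
    rwa [Nat.card_eq_fintype_card, Fintype.card_subtype] at this
  by_cases hκ : Nonempty κ
  swap
  · exact ⟨fun _ => Classical.arbitrary α, fun v => (hκ ⟨v⟩).elim⟩
  have hp0 : 0 ≤ p := by
    obtain ⟨v⟩ := hκ
    by_contra h
    have := (Nat.cast_nonneg (α := ℝ) _).trans (hpB v)
    nlinarith
  let N : Finset κ → ℝ := fun S => #{x | ∀ w ∈ S, ¬ B w x}
  have hN0 : ∀ S, 0 ≤ N S := fun S => Nat.cast_nonneg _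
  have key : ∀ n, ∀ S : Finset κ, #S = n → ∀ v,
      (#{x | B v x ∧ ∀ w ∈ S, ¬ B w x} : ℝ) ≤ 2 * p * N S := by
    intro n
    induction n using Nat.strong_induction_on with
    | _ n ih =>
      intro S hS v
      set S₁ := S.filter (fun w => ¬ Disjoint (T v) (T w))
      set S₂ := S.filter (fun w => Disjoint (T v) (T w))
      have hfar : (#{x | B v x ∧ ∀ w ∈ S₂, ¬ B w x} : ℝ) ≤ p * N S₂ := by
        have h := card_filter_and_mul_card_pi (T v) (B v) (fun x => ∀ w ∈ S₂, ¬ B w x) (hB v)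
          (fun x y hxy hx w hw hy => hx w hw (hB w y x (fun i hi => (hxy i fun hiv => by
            have := (mem_filter.1 hw).2
            exact (Finset.disjoint_left.1 this hiv hi)).symm) hy))
        have h' : (#{x | B v x ∧ ∀ w ∈ S₂, ¬ B w x} : ℝ) * Fintype.card (ι → α)
            = #{x | B v x} * N S₂ := by simp only [N]; exact_mod_cast h
        have h2 := mul_le_mul_of_nonneg_right (hpB v) (hN0 S₂)
        have h3 : (#{x | B v x ∧ ∀ w ∈ S₂, ¬ B w x} : ℝ) * Fintype.card (ι → α)
          ≤ (p * N S₂) * Fintype.card (ι → α) := by rw [h']; linarith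
        exact le_of_mul_le_mul_right h3 hΩ
      have hsub : (#{x | B v x ∧ ∀ w ∈ S, ¬ B w x} : ℝ)
          ≤ #{x | B v x ∧ ∀ w ∈ S₂, ¬ B w x} := by
        refine Nat.cast_le.2 (card_le_card fun x hx => ?_)
        simp only [mem_filter, mem_univ, true_and] at hx ⊢
        exact ⟨hx.1, fun w hw => hx.2 w (mem_filter.1 hw).1⟩
      have hhalf : N S₂ ≤ 2 * N S := by
        rcases S₁.eq_empty_or_nonempty with h0 | h0
        · have : S₂ = S := by
            refine filter_true_of_mem fun w hw => ?_
            by_contra hd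
            exact notMem_empty w (h0 ▸ mem_filter.2 ⟨hw, hd⟩)
          rw [this]; linarith [hN0 S]
        · have hlt : #S₂ < n := by
            obtain ⟨w, hw⟩ := h0
            rw [← hS]
            exact card_lt_card (filter_ssubset.2 ⟨w, mem_filter.1 hw⟩)
          have hun : (univ.filter fun x => ∀ w ∈ S₂, ¬ B w x) ⊆
              (univ.filter fun x => ∀ w ∈ S, ¬ B w x) ∪
                S₁.biUnion (fun u => univ.filter fun x => B u x ∧ ∀ w ∈ S₂, ¬ B w x) := by
            intro x hx
            simp only [mem_filter, mem_univ, true_and, mem_union, mem_biUnion] at hx ⊢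
            by_cases h : ∀ w ∈ S, ¬ B w x
            · exact Or.inl h
            · push Not at h
              obtain ⟨w, hw, hwx⟩ := h
              refine Or.inr ⟨w, mem_filter.2 ⟨hw, fun hd => ?_⟩, hwx, hx⟩
              exact hx w (mem_filter.2 ⟨hw, hd⟩) hwx
          have h1 := (card_le_card hun).trans (card_union_le _ _)
          have h2 := h1.trans (Nat.add_le_add_left card_biUnion_le _)
          have h3 : N S₂ ≤ N S + ∑ u ∈ S₁, (#{x | B u x ∧ ∀ w ∈ S₂, ¬ B w x} : ℝ) := by
            simp only [N]
            exact_mod_cast h2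
          have h4 : ∑ u ∈ S₁, (#{x | B u x ∧ ∀ w ∈ S₂, ¬ B w x} : ℝ) ≤ #S₁ * (2 * p * N S₂) := by
            rw [← nsmul_eq_mul]
            exact sum_le_card_nsmul _ _ _ fun u _ => ih _ hlt S₂ rfl u
          have h5 : (#S₁ : ℝ) ≤ D := by
            exact_mod_cast (card_le_card (filter_subset_filter _ (subset_univ S))).trans (hD v)
          have h6 : (#S₁ : ℝ) * (2 * p * N S₂) ≤ D * (2 * p * N S₂) :=
            mul_le_mul_of_nonneg_right h5 (by have := hN0 S₂; positivity)
          nlinarith [mul_le_mul_of_nonneg_right hpD (hN0 S₂)]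
      calc _ ≤ _ := hsub
        _ ≤ _ := hfar
        _ ≤ p * (2 * N S) := mul_le_mul_of_nonneg_left hhalf hp0
        _ = _ := by ring
  have hpos : ∀ S : Finset κ, 0 < N S := by
    intro S
    induction S using Finset.induction_on with
    | empty => simpa [N] using hΩ
    | insert v S _ ih =>
      have h := key _ S rfl v
      have hsplit : N S = N (insert v S) + #{x | B v x ∧ ∀ w ∈ S, ¬ B w x} := by
        have h := card_filter_add_card_filter_not
          (s := univ.filter fun x => ∀ w ∈ S, ¬ B w x) (fun x => ¬ B v x)
        simp only [filter_filter, not_not] at h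
        simp only [N, forall_mem_insert]
        rw [← h]
        push_cast
        congr 3 <;> ext x <;> simp [and_comm]
      nlinarith
  have := hpos univ
  simp only [N, Nat.cast_pos, card_pos] at this
  obtain ⟨x, hx⟩ := this
  exact ⟨x, fun v => (mem_filter.1 hx).2 v (mem_univ v)⟩

/-- Exponential moment of a bounded function that is constant off a small set. -/
lemma expect_exp_le_exp_expect {α : Type*} [Fintype α] [Nonempty α] (g : α → ℝ) (S : Finset α)
    (L p : ℝ) (hL : L ≤ 1) (hg : ∀ a b, |g a - g b| ≤ L)
    (hS : ∀ a b, a ∉ S → b ∉ S → g a = g b) (hp : (#S : ℝ) ≤ p * Fintype.card α) :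
    𝔼 a, Real.exp (g a) ≤ Real.exp (L ^ 2 * p) * Real.exp (𝔼 a, g a) := by
  obtain ⟨c, hc, hcS⟩ : ∃ c, (∀ a, |g a - c| ≤ L) ∧ ∀ a ∉ S, g a = c := by
    by_cases h : ∃ b, b ∉ S
    · obtain ⟨b, hb⟩ := h
      exact ⟨g b, fun a => hg a b, fun a ha => hS a b ha hb⟩
    · push Not at h
      exact ⟨g (Classical.arbitrary α), fun a => hg a _, fun a ha => (ha (h a)).elim⟩
  have hα : (0 : ℝ) < Fintype.card α := by exact_mod_cast Fintype.card_pos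
  have hsq : 𝔼 a, (g a - c) ^ 2 ≤ L ^ 2 * p := by
    rw [Fintype.expect_eq_sum_div_card, div_le_iff₀ hα]
    calc ∑ a, (g a - c) ^ 2 = ∑ a ∈ S, (g a - c) ^ 2 :=
          (sum_subset (subset_univ S) fun a _ ha => by simp [hcS a ha]).symm
      _ ≤ #S • L ^ 2 := sum_le_card_nsmul _ _ _ fun a _ =>
          sq_le_sq' (by linarith [(abs_le.1 (hc a)).1]) (abs_le.1 (hc a)).2
      _ ≤ L ^ 2 * p * Fintype.card α := by
          rw [nsmul_eq_mul]; nlinarith [sq_nonneg L]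
  have hpt : ∀ a, Real.exp (g a) ≤ Real.exp c * (1 + (g a - c) + (g a - c) ^ 2) := by
    intro a
    have h := Real.abs_exp_sub_one_sub_id_le ((hc a).trans hL)
    have h' : Real.exp (g a) = Real.exp c * Real.exp (g a - c) := by
      rw [← Real.exp_add]; ring_nf
    rw [h']
    exact mul_le_mul_of_nonneg_left (by linarith [(abs_le.1 h).2]) (Real.exp_pos _).le
  calc 𝔼 a, Real.exp (g a) ≤ 𝔼 a, Real.exp c * (1 + (g a - c) + (g a - c) ^ 2) :=
        expect_le_expect fun a _ => hpt a
    _ = Real.exp c * (1 + (𝔼 a, g a - c) + 𝔼 a, (g a - c) ^ 2) := by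
        rw [← mul_expect, expect_add_distrib, expect_add_distrib, expect_sub_distrib,
          Fintype.expect_const, Fintype.expect_const]
    _ ≤ Real.exp c * Real.exp ((𝔼 a, g a - c) + L ^ 2 * p) := by
        refine mul_le_mul_of_nonneg_left ?_ (Real.exp_pos _).le
        linarith [Real.add_one_le_exp ((𝔼 a, g a - c) + L ^ 2 * p)]
    _ = _ := by rw [← Real.exp_add, ← Real.exp_add]; ring_nf

section Concentration

variable {ι α : Type*} [Fintype ι] [DecidableEq ι] [Fintype α]

open Function in
/-- Averaging one coordinate preserves the expectation. -/
lemma expect_expect_update (i : ι) (f : (ι → α) → ℝ) :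
    𝔼 x, 𝔼 a, f (update x i a) = 𝔼 x, f x := by
  rcases isEmpty_or_nonempty α with hα | hα
  · have : IsEmpty (ι → α) := ⟨fun x => hα.elim (x i)⟩
    simp
  rw [← expect_product' univ univ (fun x a => f (update x i a))]
  calc _ = 𝔼 z ∈ (univ : Finset (ι → α)) ×ˢ (univ : Finset α), f z.1 := by
        refine expect_nbij' (fun z => (update z.1 i z.2, z.1 i))
          (fun z => (update z.1 i z.2, z.1 i)) ?_ ?_ ?_ ?_ ?_ <;> simp
    _ = _ := by
        rw [expect_product]
        simp

open Function in
/-- Averaging out a set `s` of coordinates costs only a controlled factor in the exponential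
moment, provided the set of values of `i ∈ s` that matter does not depend on `s`. -/
lemma exists_average_exp_moment [Nonempty α] (L : ℝ) (hL : L ≤ 1) (S : ι → (ι → α) → Finset α)
    (p : ι → ℝ) (s : Finset ι) (f : (ι → α) → ℝ)
    (hf : ∀ i x a b, |f (update x i a) - f (update x i b)| ≤ L)
    (hSs : ∀ i ∈ s, ∀ j ∈ s, ∀ x a, S i (update x j a) = S i x)
    (hp : ∀ i ∈ s, ∀ x, (#(S i x) : ℝ) ≤ p i * Fintype.card α)
    (hS : ∀ i ∈ s, ∀ x a b, a ∉ S i x → b ∉ S i x → f (update x i a) = f (update x i b)) :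
    ∃ g : (ι → α) → ℝ, (∀ i x a b, |g (update x i a) - g (update x i b)| ≤ L) ∧
      𝔼 x, g x = 𝔼 x, f x ∧
      𝔼 x, Real.exp (f x) ≤ Real.exp (L ^ 2 * ∑ i ∈ s, p i) * 𝔼 x, Real.exp (g x) ∧
      (∀ i ∈ s, ∀ x a, g (update x i a) = g x) ∧
      ∀ i, (∀ x a, f (update x i a) = f x) → ∀ x a, g (update x i a) = g x := by
  induction s using Finset.induction_on generalizing f with
  | empty => exact ⟨f, hf, rfl, by simp, by simp, fun _ h => h⟩
  | insert j s hj ih =>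
    set f₁ : (ι → α) → ℝ := fun x => 𝔼 a, f (update x j a) with hf₁
    have hinv : ∀ x a, f₁ (update x j a) = f₁ x := fun x a => by simp [hf₁]
    have hinv' : ∀ i, (∀ x a, f (update x i a) = f x) → ∀ x a, f₁ (update x i a) = f₁ x := by
      intro i hi x a
      rcases eq_or_ne i j with rfl | hij
      · exact hinv x a
      · simp only [hf₁]
        exact expect_congr rfl fun b _ => by rw [update_comm hij, hi]
    have hL0 : 0 ≤ L := by
      exact (abs_nonneg _).trans (hf j (fun _ => Classical.arbitrary α)
        (Classical.arbitrary α) (Classical.arbitrary α))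
    have hlip : ∀ i x a b, |f₁ (update x i a) - f₁ (update x i b)| ≤ L := by
      intro i x a b
      rcases eq_or_ne i j with rfl | hij
      · simpa [hinv] using hL0
      · simp only [hf₁]
        rw [← expect_sub_distrib]
        refine (abs_expect_le _ _).trans ((expect_le_expect (g := fun _ => L) fun c _ => ?_).trans
          (by simp))
        rw [update_comm hij, update_comm hij]
        exact hf i _ a b
    obtain ⟨g, hg, hgE, hgexp, hgs, hginv⟩ := ih f₁ hlip
      (fun i hi k hk => hSs i (mem_insert_of_mem hi) k (mem_insert_of_mem hk))
      (fun i hi => hp i (mem_insert_of_mem hi))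
      (fun i hi x a b ha hb => by
        have hij : i ≠ j := fun h => hj (h ▸ hi)
        simp only [hf₁]
        refine expect_congr rfl fun c _ => ?_
        rw [update_comm hij, update_comm hij]
        have h := hSs i (mem_insert_of_mem hi) j (mem_insert_self j s) x c
        exact hS i (mem_insert_of_mem hi) _ a b (h ▸ ha) (h ▸ hb))
    refine ⟨g, hg, ?_, ?_, ?_, fun i hi => hginv i (hinv' i hi)⟩
    · rw [hgE]; exact expect_expect_update j f
    · have hstep : 𝔼 x, Real.exp (f x) ≤ Real.exp (L ^ 2 * p j) * 𝔼 x, Real.exp (f₁ x) := by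
        rw [← expect_expect_update j, mul_expect]
        exact expect_le_expect fun x _ => expect_exp_le_exp_expect (fun a => f (update x j a))
          (S j x) L (p j) hL (hf j x) (hS j (mem_insert_self j s) x)
          (hp j (mem_insert_self j s) x)
      rw [sum_insert hj, mul_add, Real.exp_add, mul_assoc]
      exact hstep.trans (mul_le_mul_of_nonneg_left hgexp (Real.exp_pos _).le)
    · intro i hi
      rcases mem_insert.1 hi with rfl | hi
      · exact hginv i hinv
      · exact hgs i hi

open Function in
/-- Exponential moment of a function with bounded differences such that the coordinates outside
`R` matter only with small probability, given those in `R`. -/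
theorem expect_exp_le_of_bounded_differences [Nonempty α] (L : ℝ) (hL : L ≤ 1)
    (S : ι → (ι → α) → Finset α) (p : ι → ℝ) (R : Finset ι) (f : (ι → α) → ℝ)
    (hf : ∀ i x a b, |f (update x i a) - f (update x i b)| ≤ L)
    (hSR : ∀ i ∉ R, ∀ j ∉ R, ∀ x a, S i (update x j a) = S i x)
    (hp : ∀ i ∉ R, ∀ x, (#(S i x) : ℝ) ≤ p i * Fintype.card α)
    (hS : ∀ i ∉ R, ∀ x a b, a ∉ S i x → b ∉ S i x → f (update x i a) = f (update x i b)) :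
    𝔼 x, Real.exp (f x) ≤ Real.exp (𝔼 x, f x + L ^ 2 * (∑ i ∈ Rᶜ, p i + #R)) := by
  obtain ⟨g, hg, hgE, hgexp, hgs, -⟩ := exists_average_exp_moment L hL S p Rᶜ f hf
    (by simpa using hSR) (by simpa using hp) (by simpa using hS)
  obtain ⟨k, -, hkE, hkexp, hks, hkinv⟩ := exists_average_exp_moment L hL (fun _ _ => univ)
    (fun _ => 1) R g hg (by simp) (by simp) (by simp)
  have hinv : ∀ i x a, k (update x i a) = k x := fun i => by
    by_cases hi : i ∈ R
    · exact hks i hi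
    · exact hkinv i (hgs i (mem_compl.2 hi))
  have hconst : ∀ x y, k x = k y := by
    intro x y
    have : ∀ s : Finset ι, k (s.piecewise y x) = k x := by
      intro s
      induction s using Finset.induction_on with
      | empty => simp
      | insert i s _ ih => rw [piecewise_insert, hinv, ih]
    rw [← this univ]; simp
  obtain ⟨c, hc⟩ : ∃ c, ∀ x, k x = c :=
    ⟨k fun _ => Classical.arbitrary α, fun x => hconst _ _⟩
  have hcE : 𝔼 x, f x = c := by
    rw [← hgE, ← hkE]; simp [hc]
  simp only [hc, Fintype.expect_const] at hkexp
  rw [hcE]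
  calc _ ≤ _ := hgexp
    _ ≤ _ := mul_le_mul_of_nonneg_left hkexp (Real.exp_pos _).le
    _ = _ := by
      rw [← Real.exp_add, ← Real.exp_add]; simp; ring

end Concentration

section RandomColoring

variable {V : Type*} [Fintype V] [DecidableEq V] (H : SimpleGraph V) [DecidableRel H.Adj]
  {C m : ℕ}

/-- In an assignment of colours and priorities, a vertex retains its colour if no neighbour of
the same colour has smaller or equal priority. -/
def Retains (x : V → Fin C × Fin m) (u : V) : Prop :=
  ∀ w, H.Adj u w → ¬ ((x w).1 = (x u).1 ∧ (x w).2 ≤ (x u).2)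

instance Retains.decidablePred (x : V → Fin C × Fin m) : DecidablePred (Retains H x) :=
  fun _ => inferInstanceAs (Decidable (∀ _, _ → _))

/-- The neighbours of `v` that retain the colour `c`. -/
def retainedClass (x : V → Fin C × Fin m) (v : V) (c : Fin C) : Finset V :=
  {u ∈ H.neighborFinset v | Retains H x u ∧ (x u).1 = c}

/-- The number of repeated colours in the neighbourhood of `v`, truncated at two repetitions
per colour. -/
def savings (v : V) (x : V → Fin C × Fin m) : ℕ :=
  ∑ c, min (#(retainedClass H x v c) - 1) 2

/-- The vertices whose values determine `savings H v`. -/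
def savingsSupport (v : V) : Finset V :=
  H.neighborFinset v ∪ (H.neighborFinset v).biUnion fun u => H.neighborFinset u

variable {H}

lemma mem_retainedClass {x : V → Fin C × Fin m} {v u : V} {c : Fin C} :
    u ∈ retainedClass H x v c ↔ H.Adj v u ∧ Retains H x u ∧ (x u).1 = c := by
  simp [retainedClass]

lemma retainedClass_congr {x y : V → Fin C × Fin m} {v : V} {c : Fin C}
    (h : ∀ u, H.Adj v u → ((x u).1 = c ∨ (y u).1 = c) →
      x u = y u ∧ ∀ w, H.Adj u w → ((x w).1 = c ∨ (y w).1 = c) → x w = y w) :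
    retainedClass H x v c = retainedClass H y v c := by
  ext u
  simp only [mem_retainedClass, Retains]
  constructor
  · rintro ⟨hu, hr, hc⟩
    obtain ⟨h1, h2⟩ := h u hu (Or.inl hc)
    refine ⟨hu, fun w hw hk => hr w hw ?_, h1 ▸ hc⟩
    rw [h2 w hw (Or.inr (by rw [hk.1, ← h1, hc])), h1]
    exact hk
  · rintro ⟨hu, hr, hc⟩
    obtain ⟨h1, h2⟩ := h u hu (Or.inr hc)
    refine ⟨hu, fun w hw hk => hr w hw ?_, h1 ▸ hc⟩
    rw [← h2 w hw (Or.inl (by rw [hk.1, h1, hc])), ← h1]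
    exact hk

lemma savings_congr {x y : V → Fin C × Fin m} {v : V}
    (h : ∀ i ∈ savingsSupport H v, x i = y i) : savings H v x = savings H v y := by
  refine sum_congr rfl fun c _ => ?_
  rw [retainedClass_congr fun u hu _ => ⟨h u ?_, fun w hw _ => h w ?_⟩]
  · simp [savingsSupport, hu]
  · simp only [savingsSupport, mem_union, mem_biUnion, SimpleGraph.mem_neighborFinset]
    exact Or.inr ⟨u, hu, hw⟩

open Function in
lemma abs_savings_update_sub_le (v i : V) (x : V → Fin C × Fin m) (a b : Fin C × Fin m) :
    |(savings H v (update x i a) : ℝ) - savings H v (update x i b)| ≤ 4 := by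
  have hne : ∀ c ∉ ({a.1, b.1} : Finset (Fin C)),
      retainedClass H (update x i a) v c = retainedClass H (update x i b) v c := by
    intro c hc
    simp only [mem_insert, mem_singleton, not_or] at hc
    have key : ∀ u, ((update x i a u).1 = c ∨ (update x i b u).1 = c) →
        update x i a u = update x i b u := by
      intro u hu
      rcases eq_or_ne u i with rfl | hui
      · simp only [update_self] at hu
        rcases hu with hu | hu
        · exact (hc.1 hu.symm).elim
        · exact (hc.2 hu.symm).elim
      · simp [hui]
    exact retainedClass_congr fun u _ hu => ⟨key u hu, fun w _ hw => key w hw⟩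
  simp only [savings, Nat.cast_sum]
  rw [← sum_sub_distrib, ← sum_subset (subset_univ ({a.1, b.1} : Finset (Fin C)))
    fun c _ hc => by rw [hne c hc, sub_self]]
  refine (abs_sum_le_sum_abs _ _).trans ((sum_le_card_nsmul _ _ 2 fun c _ => ?_).trans ?_)
  · have h1 : ((min (#(retainedClass H (update x i a) v c) - 1) 2 : ℕ) : ℝ) ≤ 2 := by
      exact_mod_cast min_le_right _ _
    have h2 : ((min (#(retainedClass H (update x i b) v c) - 1) 2 : ℕ) : ℝ) ≤ 2 := by
      exact_mod_cast min_le_right _ _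
    have h3 : (0 : ℝ) ≤ ((min (#(retainedClass H (update x i a) v c) - 1) 2 : ℕ) : ℝ) :=
      Nat.cast_nonneg _
    have h4 : (0 : ℝ) ≤ ((min (#(retainedClass H (update x i b) v c) - 1) 2 : ℕ) : ℝ) :=
      Nat.cast_nonneg _
    rw [abs_le]
    constructor <;> linarith
  · have : (#({a.1, b.1} : Finset (Fin C)) : ℝ) ≤ 2 := by exact_mod_cast card_le_two
    rw [nsmul_eq_mul]; linarith

variable (H) in
/-- The values of the coordinate `i` that may influence the savings at `v`, given the colours
around `v`. -/
def influential (v i : V) (x : V → Fin C × Fin m) : Finset (Fin C × Fin m) :=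
  ((H.neighborFinset v ∩ H.neighborFinset i).image fun u => (x u).1) ×ˢ univ

open Function in
lemma savings_update_eq {v i : V} (hi : i ∉ H.neighborFinset v) {x : V → Fin C × Fin m}
    {a b : Fin C × Fin m} (ha : a ∉ influential H v i x) (hb : b ∉ influential H v i x) :
    savings H v (update x i a) = savings H v (update x i b) := by
  simp only [influential, mem_product, mem_image, mem_inter, SimpleGraph.mem_neighborFinset,
    mem_univ, and_true, not_exists, not_and, and_imp] at ha hb
  simp only [SimpleGraph.mem_neighborFinset] at hi
  refine sum_congr rfl fun c _ => ?_
  rw [retainedClass_congr fun u hu hc => ?_]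
  have hui : u ≠ i := fun h => hi (h ▸ hu)
  simp only [update_of_ne hui, or_self] at hc
  refine ⟨by simp [hui], fun w hw hwc => ?_⟩
  rcases eq_or_ne w i with rfl | hwi
  · simp only [update_self] at hwc
    rcases hwc with h | h
    · exact (ha u hu hw.symm (hc.trans h.symm)).elim
    · exact (hb u hu hw.symm (hc.trans h.symm)).elim
  · simp [hwi]

/-- The savings at a vertex of a regular graph rarely fall short of their mean. -/
lemma card_savings_le_tail {r : ℕ} (hr : ∀ v, H.degree v = r) (hC : 0 < C) (hm : 0 < m)
    (hCr : (r : ℝ) ≤ 2 * C) (v : V) {η : ℝ} (hη : 0 ≤ η) (hη1 : η ≤ 24) :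
    (Nat.card {x : V → Fin C × Fin m //
      (savings H v x : ℝ) ≤ (𝔼 y : V → Fin C × Fin m, (savings H v y : ℝ)) - η * r} : ℝ) ≤
      Real.exp (-(η ^ 2 / 192 * r)) * Fintype.card (V → Fin C × Fin m) := by
  classical
  have : NeZero C := ⟨hC.ne'⟩
  have : NeZero m := ⟨hm.ne'⟩
  have hC' : (0 : ℝ) < C := by exact_mod_cast hC
  set lam : ℝ := η / 96 with hlam
  set E : ℝ := 𝔼 y : V → Fin C × Fin m, (savings H v y : ℝ) with hE
  have hdeg : ∀ u, #(H.neighborFinset u) = r := fun u => by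
    rw [SimpleGraph.card_neighborFinset_eq_degree, hr]
  have hsum : ∑ i ∈ (H.neighborFinset v)ᶜ, (#(H.neighborFinset v ∩ H.neighborFinset i) : ℝ) / C
      ≤ 2 * r := by
    rw [← sum_div, div_le_iff₀ hC']
    have h1 : ∑ i, #(H.neighborFinset v ∩ H.neighborFinset i) = r * r := by
      have h2 : ∀ i, #(H.neighborFinset v ∩ H.neighborFinset i)
          = ∑ u ∈ H.neighborFinset v, if H.Adj u i then 1 else 0 := by
        intro i
        rw [← card_filter]
        congr 1
        ext u
        simp [H.adj_comm]
      simp_rw [h2]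
      rw [sum_comm]
      have h3 : ∀ u, (∑ i, if H.Adj u i then 1 else 0) = r := by
        intro u
        rw [← card_filter, ← hdeg u]
        congr 1
        ext; simp
      simp [h3, hdeg]
    have h2 : ∑ i ∈ (H.neighborFinset v)ᶜ, (#(H.neighborFinset v ∩ H.neighborFinset i) : ℝ)
        ≤ r * r := by
      refine (sum_le_sum_of_subset_of_nonneg (subset_univ _) fun _ _ _ =>
        Nat.cast_nonneg _).trans ?_
      exact_mod_cast h1.le
    nlinarith [Nat.cast_nonneg (α := ℝ) r]
  have hmgf := expect_exp_le_of_bounded_differences (4 * lam) (by linarith)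
    (influential (C := C) (m := m) H v)
    (fun i => (#(H.neighborFinset v ∩ H.neighborFinset i) : ℝ) / C) (H.neighborFinset v)
    (fun x => -lam * (savings H v x : ℝ))
    (fun i x a b => by
      rw [← mul_sub, abs_mul, abs_neg, abs_of_nonneg (by positivity : 0 ≤ lam), mul_comm 4]
      exact mul_le_mul_of_nonneg_left (abs_savings_update_sub_le v i x a b) (by positivity))
    (fun i _ j hj x a => by
      unfold influential
      congr 1
      refine image_congr fun u hu => ?_
      have : u ≠ j := fun h => hj (h ▸ (mem_inter.1 hu).1)
      simp [this])
    (fun i _ x => by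
      have h1 : #(influential H v i x) ≤ #(H.neighborFinset v ∩ H.neighborFinset i) * m := by
        unfold influential
        rw [card_product, card_univ, Fintype.card_fin]
        exact Nat.mul_le_mul_right _ card_image_le
      rw [Fintype.card_prod, Fintype.card_fin, Fintype.card_fin, Nat.cast_mul, ← mul_assoc,
        div_mul_cancel₀ _ hC'.ne']
      exact_mod_cast h1)
    (fun i hi x a b ha hb => by simp only [savings_update_eq hi ha hb])
  rw [← mul_expect, ← hE, hdeg] at hmgf
  have hΩ : (0 : ℝ) < Fintype.card (V → Fin C × Fin m) := by exact_mod_cast Fintype.card_pos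
  rw [Fintype.expect_eq_sum_div_card, div_le_iff₀ hΩ] at hmgf
  rw [Nat.card_eq_fintype_card, Fintype.card_subtype]
  set Bad : Finset (V → Fin C × Fin m) := {x | (savings H v x : ℝ) ≤ E - η * r}
  have h1 : (#Bad : ℝ) * Real.exp (-lam * (E - η * r)) ≤
      ∑ x : V → Fin C × Fin m, Real.exp (-lam * (savings H v x : ℝ)) := by
    rw [← nsmul_eq_mul]
    refine (card_nsmul_le_sum Bad (fun x => Real.exp (-lam * (savings H v x : ℝ))) _
      fun x hx => ?_).trans
      (sum_le_sum_of_subset_of_nonneg (subset_univ _) fun _ _ _ => (Real.exp_pos _).le)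
    refine Real.exp_le_exp.2 ?_
    have := (mem_filter.1 hx).2
    have hl : 0 ≤ lam := by positivity
    nlinarith
  have h2 := h1.trans hmgf
  rw [← le_div_iff₀ (Real.exp_pos _)] at h2
  refine h2.trans ?_
  rw [mul_div_right_comm, ← Real.exp_sub]
  refine mul_le_mul_of_nonneg_right (Real.exp_le_exp.2 ?_) hΩ.le
  have h3 : (4 * lam) ^ 2 * (∑ i ∈ (H.neighborFinset v)ᶜ,
      (#(H.neighborFinset v ∩ H.neighborFinset i) : ℝ) / C + r) ≤ (4 * lam) ^ 2 * (3 * r) :=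
    mul_le_mul_of_nonneg_left (by linarith) (sq_nonneg _)
  have h4 : (4 * lam) ^ 2 * (3 * r) - lam * (η * r) = -(η ^ 2 / 192 * r) := by
    rw [hlam]; ring
  linarith

end RandomColoring

/-- A graph with `P` ordered edges has at most `P ^ (3 / 2)` ordered triangles. -/
lemma card_triangles_le {V : Type*} [DecidableEq V] (s : Finset V) (R : V → V → Prop)
    [DecidableRel R] :
    (#{p ∈ (s ×ˢ s) ×ˢ s | R p.1.1 p.1.2 ∧ R p.1.1 p.2 ∧ R p.1.2 p.2} : ℝ) ≤
      #{p ∈ s ×ˢ s | R p.1 p.2} * √(#{p ∈ s ×ˢ s | R p.1 p.2} : ℝ) := by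
  set P := #{p ∈ s ×ˢ s | R p.1 p.2} with hP
  let d : V → ℕ := fun u => #{w ∈ s | R u w}
  let t : V → ℕ := fun u => #{p ∈ s ×ˢ s | R u p.1 ∧ R u p.2 ∧ R p.1 p.2}
  have hPd : P = ∑ u ∈ s, d u := by
    simp only [hP, d, card_filter, sum_product]
  have hT : #{p ∈ (s ×ˢ s) ×ˢ s | R p.1.1 p.1.2 ∧ R p.1.1 p.2 ∧ R p.1.2 p.2} = ∑ u ∈ s, t u := by
    simp only [t, card_filter, sum_product]
  have htP : ∀ u, t u ≤ P := fun u => card_le_card fun p hp => by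
    simp only [mem_filter] at hp ⊢
    exact ⟨hp.1, hp.2.2.2⟩
  have htd : ∀ u, t u ≤ d u * d u := fun u => by
    rw [← card_product]
    refine card_le_card fun p hp => ?_
    simp only [mem_filter, mem_product] at hp ⊢
    tauto
  have ht : ∀ u, (t u : ℝ) ≤ d u * √(P : ℝ) := fun u => by
    have h1 : (t u : ℝ) ≤ P := by exact_mod_cast htP u
    have h2 : (t u : ℝ) ≤ d u * d u := by exact_mod_cast htd u
    refine abs_le_of_sq_le_sq' ?_ (by positivity) |>.2
    rw [mul_pow, Real.sq_sqrt (Nat.cast_nonneg _)]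
    nlinarith [Nat.cast_nonneg (α := ℝ) (t u), Nat.cast_nonneg (α := ℝ) P]
  rw [hT, Nat.cast_sum]
  calc ∑ u ∈ s, (t u : ℝ) ≤ ∑ u ∈ s, (d u : ℝ) * √(P : ℝ) := sum_le_sum fun u _ => ht u
    _ = P * √(P : ℝ) := by rw [← sum_mul, ← Nat.cast_sum, ← hPd]

lemma Retains.not_adj {V : Type*} {H : SimpleGraph V} {C m : ℕ} {x : V → Fin C × Fin m} {u w : V}
    (hu : Retains H x u) (hw : Retains H x w) (hc : (x u).1 = (x w).1) : ¬ H.Adj u w := fun h => by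
  rcases le_total (x u).2 (x w).2 with h' | h'
  · exact hw u h.symm ⟨hc, h'⟩
  · exact hu w h ⟨hc.symm, h'⟩

lemma prod_ite_adj {V : Type*} [Fintype V] {H : SimpleGraph V} [DecidableRel H.Adj] (u : V) (k : ℝ) :
    ∏ z, (if H.Adj u z then k else 1) = k ^ H.degree u := by
  rw [prod_ite, prod_const, prod_const_one, mul_one, ← SimpleGraph.card_neighborFinset_eq_degree]
  congr 2
  ext; simp

lemma pairs_sub_triples_le_min (k : ℕ) :
    3 * ((k : ℝ) * (k - 1)) - k * (k - 1) * (k - 2) ≤ 6 * ((min (k - 1) 2 : ℕ) : ℝ) := by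
  match k with
  | 0 => norm_num
  | 1 => norm_num
  | 2 => norm_num
  | 3 => norm_num
  | k + 4 =>
    have : min (k + 4 - 1) 2 = 2 := by omega
    rw [this]
    push_cast
    have : (0 : ℝ) ≤ k := Nat.cast_nonneg k
    nlinarith [mul_nonneg this (sq_nonneg (k : ℝ)), mul_nonneg this this]

lemma card_distinct_triples {V : Type*} [DecidableEq V] (s : Finset V) :
    (#{p ∈ s.offDiag ×ˢ s | p.2 ≠ p.1.1 ∧ p.2 ≠ p.1.2} : ℝ) = #s * (#s - 1) * (#s - 2) := by
  have h : ∀ p ∈ s.offDiag, (#{y ∈ s | y ≠ p.1 ∧ y ≠ p.2} : ℝ) = #s - 2 := by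
    intro p hp
    obtain ⟨h1, h2, h3⟩ := mem_offDiag.1 hp
    have : #{y ∈ s | y ≠ p.1 ∧ y ≠ p.2} + 2 = #s := by
      rw [← card_pair h3, ← card_union_of_disjoint]
      · congr 1
        ext y
        simp only [mem_union, mem_filter, mem_insert, mem_singleton]
        by_cases hy1 : y = p.1
        · simp [hy1, h1]
        · by_cases hy2 : y = p.2
          · simp [hy2, h2]
          · simp [hy1, hy2]
      · rw [disjoint_left]
        simp +contextual
    rw [← this]; push_cast; ring
  rw [card_filter, sum_product]
  simp only [← card_filter]
  push_cast
  rw [sum_congr rfl h, sum_const, nsmul_eq_mul, offDiag_card]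
  rw [Nat.cast_sub (Nat.le_mul_self _)]
  push_cast; ring

section RandomColoring

variable {V : Type*} [Fintype V] [DecidableEq V] (H : SimpleGraph V) [DecidableRel H.Adj]
  {C m : ℕ}

/-- The ordered pairs of distinct non-adjacent neighbours of `v`. -/
def nonadjPairs (v : V) : Finset (V × V) :=
  {p ∈ H.neighborFinset v ×ˢ H.neighborFinset v | p.1 ≠ p.2 ∧ ¬ H.Adj p.1 p.2}

/-- The ordered triples of distinct pairwise non-adjacent neighbours of `v`. -/
def nonadjTriples (v : V) : Finset ((V × V) × V) :=
  {p ∈ (H.neighborFinset v ×ˢ H.neighborFinset v) ×ˢ H.neighborFinset v |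
    (p.1.1 ≠ p.1.2 ∧ ¬ H.Adj p.1.1 p.1.2) ∧ (p.1.1 ≠ p.2 ∧ ¬ H.Adj p.1.1 p.2) ∧
      (p.1.2 ≠ p.2 ∧ ¬ H.Adj p.1.2 p.2)}

variable {H}

lemma card_nonadjTriples_le (v : V) :
    (#(nonadjTriples H v) : ℝ) ≤ #(nonadjPairs H v) * √(#(nonadjPairs H v) : ℝ) :=
  card_triangles_le (H.neighborFinset v) fun a b => a ≠ b ∧ ¬ H.Adj a b

/-- Lower bound for the savings by inclusion-exclusion. -/
lemma pairs_sub_triples_le_savings (v : V) (x : V → Fin C × Fin m) :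
    3 * (#{p ∈ nonadjPairs H v |
        (x p.2).1 = (x p.1).1 ∧ Retains H x p.1 ∧ Retains H x p.2} : ℝ) -
      #{p ∈ nonadjTriples H v | (x p.1.2).1 = (x p.1.1).1 ∧ (x p.2).1 = (x p.1.1).1 ∧
        Retains H x p.1.1 ∧ Retains H x p.1.2 ∧ Retains H x p.2} ≤ 6 * savings H v x := by
  rw [card_eq_sum_card_fiberwise (f := fun p => (x p.1).1) (t := univ) (by simp),
    card_eq_sum_card_fiberwise (s := filter _ (nonadjTriples H v))
      (f := fun p => (x p.1.1).1) (t := univ) (by simp)]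
  simp only [savings, Nat.cast_sum]
  rw [mul_sum, mul_sum, ← sum_sub_distrib]
  refine sum_le_sum fun c _ => ?_
  refine le_trans ?_ (pairs_sub_triples_le_min _)
  have h1 : (#(retainedClass H x v c).offDiag : ℝ) =
      #(retainedClass H x v c) * (#(retainedClass H x v c) - 1) := by
    rw [offDiag_card, Nat.cast_sub (Nat.le_mul_self _)]
    push_cast; ring
  rw [← card_distinct_triples, ← h1]
  refine sub_le_sub (mul_le_mul_of_nonneg_left (Nat.cast_le.2 (card_le_card ?_)) (by norm_num))
    (Nat.cast_le.2 (card_le_card ?_))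
  · intro p hp
    simp only [nonadjPairs, mem_filter, mem_product, SimpleGraph.mem_neighborFinset,
      mem_offDiag, mem_retainedClass] at hp ⊢
    obtain ⟨⟨⟨⟨h1, h2⟩, h3, h4⟩, h5, h6, h7⟩, h8⟩ := hp
    exact ⟨⟨h1, h6, h8⟩, ⟨h2, h7, h5.trans h8⟩, h3⟩
  · intro p hp
    simp only [nonadjTriples, mem_filter, mem_product, SimpleGraph.mem_neighborFinset,
      mem_offDiag, mem_retainedClass] at hp ⊢
    obtain ⟨⟨⟨⟨a1, a2, a3⟩, ⟨b1, b2, b3⟩, h3⟩, c1, c2, c3⟩, h5, h6⟩ := hp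
    exact ⟨⟨⟨⟨⟨a1, b1⟩, c1⟩, ⟨h3, a2.not_adj b2 (a3.trans b3.symm)⟩,
      ⟨h5.symm, a2.not_adj c2 (a3.trans c3.symm)⟩, ⟨h6.symm, b2.not_adj c2 (b3.trans c3.symm)⟩⟩,
      ⟨b3.trans a3.symm, c3.trans a3.symm, a2, b2, c2⟩⟩, a3⟩

/-- The number of values that do not make a neighbour of colour `c` and priority `s` lose its
colour. -/
lemma card_not_conflict (c : Fin C) (s : Fin m) :
    (#{y : Fin C × Fin m | ¬ (y.1 = c ∧ y.2 ≤ s)} : ℝ) = (C * m : ℕ) - ((s : ℕ) + 1 : ℝ) := by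
  have h1 : ({y : Fin C × Fin m | y.1 = c ∧ y.2 ≤ s} : Finset _) = {c} ×ˢ Iic s := by
    ext y
    simp only [mem_filter, mem_univ, true_and, mem_product, mem_singleton, mem_Iic]
  have h2 := card_filter_add_card_filter_not (s := (univ : Finset (Fin C × Fin m)))
    (fun y => y.1 = c ∧ y.2 ≤ s)
  rw [h1, card_product, card_singleton, Fin.card_Iic, card_univ, Fintype.card_prod,
    Fintype.card_fin, Fintype.card_fin] at h2
  rw [← h2]; push_cast; ring

/-- Probability that two non-adjacent vertices receive given values and both retain their common
colour. -/
lemma le_card_retains_pair (hC : 0 < C) (hm : 0 < m) {u w : V} (huw : u ≠ w)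
    (hadj : ¬ H.Adj u w) (c : Fin C) (s t : Fin m) :
    (1 / (C * m : ℕ) : ℝ) ^ 2 * (1 - ((s : ℕ) + 1 : ℝ) / (C * m : ℕ)) ^ H.degree u *
      (1 - ((t : ℕ) + 1 : ℝ) / (C * m : ℕ)) ^ H.degree w * Fintype.card (V → Fin C × Fin m) ≤
    #{x : V → Fin C × Fin m | x u = (c, s) ∧ x w = (c, t) ∧ Retains H x u ∧ Retains H x w} := by
  set M : ℝ := ((C * m : ℕ) : ℝ) with hM
  have hMpos : 0 < M := by rw [hM]; exact_mod_cast Nat.mul_pos hC hm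
  have hmM : (m : ℝ) ≤ M := by rw [hM]; exact_mod_cast Nat.le_mul_of_pos_left m hC
  have hfrac : ∀ s : Fin m, 0 ≤ ((s : ℕ) + 1 : ℝ) / M ∧ ((s : ℕ) + 1 : ℝ) / M ≤ 1 := by
    intro s
    refine ⟨by positivity, (div_le_one hMpos).2 (le_trans ?_ hmM)⟩
    exact_mod_cast s.2
  let B : V → Finset (Fin C × Fin m) := fun z =>
    if z = u then {(c, s)} else if z = w then {(c, t)} else
      univ.filter fun y : Fin C × Fin m =>
        (H.Adj u z → ¬ (y.1 = c ∧ y.2 ≤ s)) ∧ (H.Adj w z → ¬ (y.1 = c ∧ y.2 ≤ t))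
  have hsub : Fintype.piFinset B ⊆
      ({x : V → Fin C × Fin m | x u = (c, s) ∧ x w = (c, t) ∧ Retains H x u ∧ Retains H x w} :
        Finset _) := by
    intro x hx
    rw [Fintype.mem_piFinset] at hx
    have hu : x u = (c, s) := by simpa [B] using hx u
    have hw : x w = (c, t) := by simpa [B, huw.symm] using hx w
    simp only [mem_filter, mem_univ, true_and]
    refine ⟨hu, hw, fun z hz => ?_, fun z hz => ?_⟩
    · have h1 : z ≠ u := fun h => H.loopless.irrefl _ (h ▸ hz)
      have h2 : z ≠ w := fun h => hadj (h ▸ hz)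
      have := hx z
      simp only [B, h1, h2, if_false, mem_filter, mem_univ, true_and] at this
      rw [hu]; exact this.1 hz
    · have h1 : z ≠ u := fun h => hadj (h ▸ hz).symm
      have h2 : z ≠ w := fun h => H.loopless.irrefl _ (h ▸ hz)
      have := hx z
      simp only [B, h1, h2, if_false, mem_filter, mem_univ, true_and] at this
      rw [hw]; exact this.2 hz
  refine le_trans ?_ (Nat.cast_le.2 (card_le_card hsub))
  have hcard : (Fintype.card (V → Fin C × Fin m) : ℝ) = ∏ _z : V, M := by
    rw [Fintype.card_fun, Fintype.card_prod, Fintype.card_fin, Fintype.card_fin, prod_const,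
      card_univ]
    exact Nat.cast_pow _ _
  have hprod : (1 / M : ℝ) ^ 2 * (1 - ((s : ℕ) + 1 : ℝ) / M) ^ H.degree u *
      (1 - ((t : ℕ) + 1 : ℝ) / M) ^ H.degree w * Fintype.card (V → Fin C × Fin m) =
      ∏ z, ((if z = u then 1 / M else 1) * (if z = w then 1 / M else 1) *
        (if H.Adj u z then 1 - ((s : ℕ) + 1 : ℝ) / M else 1) *
        (if H.Adj w z then 1 - ((t : ℕ) + 1 : ℝ) / M else 1) * M) := by
    rw [prod_mul_distrib, prod_mul_distrib, prod_mul_distrib, prod_mul_distrib, prod_ite_adj,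
      prod_ite_adj, hcard]
    simp only [prod_ite_eq', mem_univ, if_true]
    ring
  rw [hprod, Fintype.card_piFinset, Nat.cast_prod]
  have hs := hfrac s
  have ht := hfrac t
  refine prod_le_prod (fun z _ => ?_) fun z _ => ?_
  · have h1 : 0 ≤ 1 - ((s : ℕ) + 1 : ℝ) / M := by linarith
    have h2 : 0 ≤ 1 - ((t : ℕ) + 1 : ℝ) / M := by linarith
    split_ifs <;> positivity
  · rcases eq_or_ne z u with rfl | hzu
    · have : ¬ H.Adj w z := fun h => hadj h.symm
      simp [B, huw, this, hMpos.ne']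
    rcases eq_or_ne z w with rfl | hzw
    · simp [B, hzu, hadj, hMpos.ne']
    have ecard : ∀ s : Fin m, (#{y : Fin C × Fin m | ¬ (y.1 = c ∧ y.2 ≤ s)} : ℝ)
        = (1 - ((s : ℕ) + 1 : ℝ) / M) * M := fun s => by
      rw [card_not_conflict, ← hM, sub_mul, div_mul_cancel₀ _ hMpos.ne', one_mul]
    simp only [B, hzu, hzw, if_false, one_mul]
    by_cases hu : H.Adj u z <;> by_cases hw : H.Adj w z
    · simp only [hu, hw, if_true, true_imp_iff]
      rcases le_total s t with hst | hst
      · rw [filter_congr (q := fun y : Fin C × Fin m => ¬ (y.1 = c ∧ y.2 ≤ t)) fun y _ =>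
          ⟨fun h => h.2, fun h => ⟨fun h' => h ⟨h'.1, h'.2.trans hst⟩, h⟩⟩, ecard]
        refine mul_le_mul_of_nonneg_right ?_ hMpos.le
        nlinarith
      · rw [filter_congr (q := fun y : Fin C × Fin m => ¬ (y.1 = c ∧ y.2 ≤ s)) fun y _ =>
          ⟨fun h => h.1, fun h => ⟨h, fun h' => h ⟨h'.1, h'.2.trans hst⟩⟩⟩, ecard]
        refine mul_le_mul_of_nonneg_right ?_ hMpos.le
        nlinarith
    · simp only [hu, hw, if_true, if_false, true_imp_iff, false_imp_iff, and_true, mul_one]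
      rw [ecard]
    · simp only [hu, hw, if_true, if_false, true_imp_iff, false_imp_iff, true_and, one_mul]
      rw [ecard]
    · simp [hu, hw, hM]

/-- Probability that three vertices receive given values and the first one retains its colour. -/
lemma card_retains_triple_le (hC : 0 < C) (hm : 0 < m) {u w y : V} (huw : u ≠ w) (huy : u ≠ y)
    (hwy : w ≠ y) (hadjw : ¬ H.Adj u w) (hadjy : ¬ H.Adj u y) (c : Fin C) (s : Fin m)
    (a b : Fin C × Fin m) :
    (#{x : V → Fin C × Fin m | x u = (c, s) ∧ x w = a ∧ x y = b ∧ Retains H x u} : ℝ) ≤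
    (1 / (C * m : ℕ) : ℝ) ^ 3 * (1 - ((s : ℕ) + 1 : ℝ) / (C * m : ℕ)) ^ H.degree u *
      Fintype.card (V → Fin C × Fin m) := by
  set M : ℝ := ((C * m : ℕ) : ℝ) with hM
  have hMpos : 0 < M := by rw [hM]; exact_mod_cast Nat.mul_pos hC hm
  let B : V → Finset (Fin C × Fin m) := fun z =>
    if z = u then {(c, s)} else if z = w then {a} else if z = y then {b} else
      univ.filter fun y : Fin C × Fin m => H.Adj u z → ¬ (y.1 = c ∧ y.2 ≤ s)
  have hsub : ({x : V → Fin C × Fin m | x u = (c, s) ∧ x w = a ∧ x y = b ∧ Retains H x u} :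
      Finset _) ⊆ Fintype.piFinset B := by
    intro x hx
    simp only [mem_filter, mem_univ, true_and] at hx
    obtain ⟨hu, hw, hy, hr⟩ := hx
    rw [Fintype.mem_piFinset]
    intro z
    simp only [B]
    split_ifs with h1 h2 h3
    · rw [h1, hu, mem_singleton]
    · rw [h2, hw, mem_singleton]
    · rw [h3, hy, mem_singleton]
    · simp only [mem_filter, mem_univ, true_and]
      intro hz
      have := hr z hz
      rwa [hu] at this
  refine le_trans (Nat.cast_le.2 (card_le_card hsub)) ?_
  have hcard : (Fintype.card (V → Fin C × Fin m) : ℝ) = ∏ _z : V, M := by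
    rw [Fintype.card_fun, Fintype.card_prod, Fintype.card_fin, Fintype.card_fin, prod_const,
      card_univ]
    exact Nat.cast_pow _ _
  have hprod : (1 / M : ℝ) ^ 3 * (1 - ((s : ℕ) + 1 : ℝ) / M) ^ H.degree u *
      Fintype.card (V → Fin C × Fin m) =
      ∏ z, ((if z = u then 1 / M else 1) * (if z = w then 1 / M else 1) *
        (if z = y then 1 / M else 1) *
        (if H.Adj u z then 1 - ((s : ℕ) + 1 : ℝ) / M else 1) * M) := by
    rw [prod_mul_distrib, prod_mul_distrib, prod_mul_distrib, prod_mul_distrib, prod_ite_adj,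
      hcard]
    simp only [prod_ite_eq', mem_univ, if_true]
    ring
  rw [hprod, Fintype.card_piFinset, Nat.cast_prod]
  refine (prod_congr rfl fun z _ => ?_).le
  rcases eq_or_ne z u with rfl | hzu
  · simp [B, huw, huy, hMpos.ne']
  rcases eq_or_ne z w with rfl | hzw
  · simp [B, hzu, hadjw, hwy, hMpos.ne']
  rcases eq_or_ne z y with rfl | hzy
  · simp [B, hzu, hzw, hadjy, hMpos.ne']
  simp only [B, hzu, hzw, hzy, if_false, one_mul]
  by_cases hu : H.Adj u z
  · simp only [hu, if_true, true_imp_iff]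
    rw [card_not_conflict, ← hM, sub_mul, div_mul_cancel₀ _ hMpos.ne', one_mul]
  · simp [hu, hM]

end RandomColoring

lemma sum_max_max (g : ℕ → ℝ) (m : ℕ) :
    ∑ i ∈ range m, ∑ j ∈ range m, ∑ k ∈ range m, g (max i (max j k)) =
      ∑ k ∈ range m, (((k : ℝ) + 1) ^ 3 - (k : ℝ) ^ 3) * g k := by
  induction m with
  | zero => simp
  | succ m ih =>
    have h2 : ∀ i ∈ range m, ∀ j ∈ range m, g (max i (max j m)) = g m := fun i hi j hj => by
      rw [mem_range] at hi hj; congr 1; omega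
    have h3 : ∀ i ∈ range m, ∀ k ∈ range m, g (max i (max m k)) = g m := fun i hi j hj => by
      rw [mem_range] at hi hj; congr 1; omega
    have h4 : ∀ j ∈ range m, ∀ k ∈ range m, g (max m (max j k)) = g m := fun i hi j hj => by
      rw [mem_range] at hi hj; congr 1; omega
    have h5 : ∀ i ∈ range m, g (max i (max m m)) = g m := fun i hi => by
      rw [mem_range] at hi; congr 1; omega
    have h6 : ∀ i ∈ range m, g (max m (max i m)) = g m := fun i hi => by
      rw [mem_range] at hi; congr 1; omega
    have h7 : ∀ i ∈ range m, g (max m (max m i)) = g m := fun i hi => by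
      rw [mem_range] at hi; congr 1; omega
    rw [sum_range_succ _ m]
    simp only [sum_range_succ _ m, sum_add_distrib]
    rw [ih, sum_congr rfl fun i hi => sum_congr rfl (h2 i hi),
      sum_congr rfl fun i hi => sum_congr rfl (h3 i hi),
      sum_congr rfl fun i hi => sum_congr rfl (h4 i hi), sum_congr rfl h5, sum_congr rfl h6,
      sum_congr rfl h7]
    simp only [sum_const, card_range, nsmul_eq_mul, max_self]
    ring

section RandomColoring

variable {V : Type*} [Fintype V] [DecidableEq V] {H : SimpleGraph V} [DecidableRel H.Adj]
  {C m : ℕ}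

lemma le_card_retains_same_color {r : ℕ} (hr : ∀ v, H.degree v = r) (hC : 0 < C) (hm : 0 < m)
    {u w : V} (huw : u ≠ w) (hadj : ¬ H.Adj u w) :
    C * (1 / (C * m : ℕ) : ℝ) ^ 2 *
      (∑ k ∈ range m, (1 - ((k : ℝ) + 1) / (C * m : ℕ)) ^ r) ^ 2 *
        Fintype.card (V → Fin C × Fin m) ≤
    #{x : V → Fin C × Fin m | (x w).1 = (x u).1 ∧ Retains H x u ∧ Retains H x w} := by
  rw [card_eq_sum_card_fiberwise (f := fun x => ((x u).1, (x u).2, (x w).2)) (t := univ) (by simp),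
    Nat.cast_sum, Fintype.sum_prod_type, sq (∑ k ∈ range m, _), ← Fin.sum_univ_eq_sum_range
      (fun k => (1 - ((k : ℝ) + 1) / (C * m : ℕ)) ^ r), sum_mul_sum, ← Fintype.sum_prod_type']
  have key : ∀ c : Fin C, ∀ p : Fin m × Fin m,
      (1 / (C * m : ℕ) : ℝ) ^ 2 * ((1 - ((p.1 : ℕ) + 1 : ℝ) / (C * m : ℕ)) ^ r *
      (1 - ((p.2 : ℕ) + 1 : ℝ) / (C * m : ℕ)) ^ r) * Fintype.card (V → Fin C × Fin m) ≤
      #{x ∈ ({x : V → Fin C × Fin m |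
          (x w).1 = (x u).1 ∧ Retains H x u ∧ Retains H x w} : Finset _) |
        ((x u).1, (x u).2, (x w).2) = (c, p)} := by
    rintro c ⟨s, t⟩
    have h := le_card_retains_pair hC hm huw hadj c s t
    rw [hr, hr] at h
    rw [← mul_assoc]
    refine h.trans (Nat.cast_le.2 (card_le_card fun x hx => ?_))
    simp only [mem_filter, mem_univ, true_and] at hx ⊢
    obtain ⟨h1, h2, h3, h4⟩ := hx
    simp [h1, h2, h3, h4]
  refine le_trans (le_of_eq ?_) (sum_le_sum fun c _ => sum_le_sum fun p _ => key c p)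
  rw [sum_const, card_univ, Fintype.card_fin, nsmul_eq_mul, ← sum_mul, ← mul_sum]
  ring

lemma card_retains_same_color_triple_le {r : ℕ} (hr : ∀ v, H.degree v = r) (hC : 0 < C)
    (hm : 0 < m) {u w y : V} (huw : u ≠ w ∧ ¬ H.Adj u w) (huy : u ≠ y ∧ ¬ H.Adj u y)
    (hwy : w ≠ y ∧ ¬ H.Adj w y) :
    (#{x : V → Fin C × Fin m | (x w).1 = (x u).1 ∧ (x y).1 = (x u).1 ∧
      Retains H x u ∧ Retains H x w ∧ Retains H x y} : ℝ) ≤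
    C * (1 / (C * m : ℕ) : ℝ) ^ 3 *
      (∑ k ∈ range m, (((k : ℝ) + 1) ^ 3 - (k : ℝ) ^ 3) *
        (1 - ((k : ℝ) + 1) / (C * m : ℕ)) ^ r) * Fintype.card (V → Fin C × Fin m) := by
  set g : ℕ → ℝ := fun k => (1 - ((k : ℝ) + 1) / (C * m : ℕ)) ^ r with hg
  rw [card_eq_sum_card_fiberwise (f := fun x => ((x u).1, (x u).2, (x w).2, (x y).2)) (t := univ)
    (by simp), Nat.cast_sum, Fintype.sum_prod_type]
  have hsum : ∑ k ∈ range m, (((k : ℝ) + 1) ^ 3 - (k : ℝ) ^ 3) *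
        (1 - ((k : ℝ) + 1) / (C * m : ℕ)) ^ r =
      ∑ p : Fin m × Fin m × Fin m, g (max p.1 (max p.2.1 p.2.2)) := by
    rw [Fintype.sum_prod_type, ← sum_max_max g m]
    simp_rw [Fintype.sum_prod_type]
    rw [← Fin.sum_univ_eq_sum_range
      (fun i => ∑ j ∈ range m, ∑ k ∈ range m, g (max i (max j k)))]
    refine sum_congr rfl fun i _ => ?_
    rw [← Fin.sum_univ_eq_sum_range (fun j => ∑ k ∈ range m, g (max i (max j k)))]
    refine sum_congr rfl fun j _ => ?_
    rw [← Fin.sum_univ_eq_sum_range (fun k => g (max i (max j k)))]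
  rw [hsum]
  have key : ∀ c : Fin C, ∀ p : Fin m × Fin m × Fin m,
      (#{x ∈ ({x : V → Fin C × Fin m | (x w).1 = (x u).1 ∧ (x y).1 = (x u).1 ∧
          Retains H x u ∧ Retains H x w ∧ Retains H x y} : Finset _) |
        ((x u).1, (x u).2, (x w).2, (x y).2) = (c, p)} : ℝ) ≤
      (1 / (C * m : ℕ) : ℝ) ^ 3 * g (max p.1 (max p.2.1 p.2.2)) *
        Fintype.card (V → Fin C × Fin m) := by
    rintro c ⟨s, t, q⟩
    have hval : ∀ x ∈ ({x ∈ ({x : V → Fin C × Fin m | (x w).1 = (x u).1 ∧ (x y).1 = (x u).1 ∧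
          Retains H x u ∧ Retains H x w ∧ Retains H x y} : Finset _) |
        ((x u).1, (x u).2, (x w).2, (x y).2) = (c, s, t, q)} : Finset _),
        x u = (c, s) ∧ x w = (c, t) ∧ x y = (c, q) ∧
          Retains H x u ∧ Retains H x w ∧ Retains H x y := by
      intro x hx
      simp only [mem_filter, mem_univ, true_and, Prod.mk.injEq] at hx
      obtain ⟨⟨h1, h2, h3⟩, h4, h5, h6, h7⟩ := hx
      exact ⟨Prod.ext h4 h5, Prod.ext (h1.trans h4) h6, Prod.ext (h2.trans h4) h7, h3⟩
    have hmax : max (s : ℕ) (max t q) = s ∨ max (s : ℕ) (max t q) = t ∨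
        max (s : ℕ) (max t q) = q := by omega
    rcases hmax with h | h | h <;> simp only [h, hg]
    · have h' := card_retains_triple_le hC hm huw.1 huy.1 hwy.1 huw.2 huy.2 c s (c, t) (c, q)
      rw [hr] at h'
      refine le_trans (Nat.cast_le.2 (card_le_card fun x hx => ?_)) h'
      obtain ⟨h1, h2, h3, h4, h5, h6⟩ := hval x hx
      simp [h1, h2, h3, h4]
    · have h' := card_retains_triple_le hC hm huw.1.symm hwy.1 huy.1
        (fun h => huw.2 h.symm) hwy.2 c t (c, s) (c, q)
      rw [hr] at h'
      refine le_trans (Nat.cast_le.2 (card_le_card fun x hx => ?_)) h'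
      obtain ⟨h1, h2, h3, h4, h5, h6⟩ := hval x hx
      simp [h1, h2, h3, h5]
    · have h' := card_retains_triple_le hC hm huy.1.symm hwy.1.symm huw.1
        (fun h => huy.2 h.symm) (fun h => hwy.2 h.symm) c q (c, s) (c, t)
      rw [hr] at h'
      refine le_trans (Nat.cast_le.2 (card_le_card fun x hx => ?_)) h'
      obtain ⟨h1, h2, h3, h4, h5, h6⟩ := hval x hx
      simp [h1, h2, h3, h6]
  refine le_trans (sum_le_sum fun c _ => sum_le_sum fun p _ => key c p) (le_of_eq ?_)
  rw [sum_const, card_univ, Fintype.card_fin, nsmul_eq_mul, ← sum_mul, ← mul_sum]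
  ring

lemma le_expect_savings {r : ℕ} (hr : ∀ v, H.degree v = r) (hC : 0 < C) (hm : 0 < m) (v : V) :
    3 * #(nonadjPairs H v) * (C * (1 / (C * m : ℕ) : ℝ) ^ 2 *
      (∑ k ∈ range m, (1 - ((k : ℝ) + 1) / (C * m : ℕ)) ^ r) ^ 2) -
    #(nonadjTriples H v) * (C * (1 / (C * m : ℕ) : ℝ) ^ 3 *
      (∑ k ∈ range m, (((k : ℝ) + 1) ^ 3 - (k : ℝ) ^ 3) *
        (1 - ((k : ℝ) + 1) / (C * m : ℕ)) ^ r)) ≤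
    6 * 𝔼 x : V → Fin C × Fin m, (savings H v x : ℝ) := by
  have : Nonempty (V → Fin C × Fin m) := ⟨fun _ => (⟨0, hC⟩, ⟨0, hm⟩)⟩
  have hN : (0 : ℝ) < Fintype.card (V → Fin C × Fin m) := by exact_mod_cast Fintype.card_pos
  set N : ℝ := (Fintype.card (V → Fin C × Fin m) : ℝ) with hNdef
  set P : ℝ := C * (1 / (C * m : ℕ) : ℝ) ^ 2 *
      (∑ k ∈ range m, (1 - ((k : ℝ) + 1) / (C * m : ℕ)) ^ r) ^ 2 with hP
  set Q : ℝ := C * (1 / (C * m : ℕ) : ℝ) ^ 3 *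
      (∑ k ∈ range m, (((k : ℝ) + 1) ^ 3 - (k : ℝ) ^ 3) *
        (1 - ((k : ℝ) + 1) / (C * m : ℕ)) ^ r) with hQ
  rw [Fintype.expect_eq_sum_div_card, ← hNdef, ← mul_div_assoc, le_div_iff₀ hN, mul_sum]
  have h1 := sum_le_sum fun (x : V → Fin C × Fin m) (_ : x ∈ univ) =>
    pairs_sub_triples_le_savings (H := H) v x
  refine le_trans ?_ h1
  rw [sum_sub_distrib, ← mul_sum, sub_mul]
  refine sub_le_sub ?_ ?_
  · rw [← Nat.cast_sum]
    simp only [card_filter]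
    rw [sum_comm]
    simp only [← card_filter]
    rw [mul_assoc, mul_assoc, Nat.cast_sum, ← nsmul_eq_mul, ← sum_const]
    refine mul_le_mul_of_nonneg_left (sum_le_sum fun p hp => ?_) (by norm_num)
    simp only [nonadjPairs, mem_filter] at hp
    exact le_card_retains_same_color hr hC hm hp.2.1 hp.2.2
  · rw [← Nat.cast_sum]
    simp only [card_filter]
    rw [sum_comm]
    simp only [← card_filter]
    rw [mul_assoc, Nat.cast_sum, ← nsmul_eq_mul, ← sum_const]
    refine sum_le_sum fun p hp => ?_
    simp only [nonadjTriples, mem_filter] at hp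
    exact card_retains_same_color_triple_le hr hC hm hp.2.1 hp.2.2.1 hp.2.2.2

end RandomColoring

lemma one_sub_pow_le_of_le {C r : ℕ} (hC : 0 < C) (hCr : (C : ℝ) ≤ 0.965 * r) {k : ℕ}
    (hk : k < 20) : (1 - ((k : ℝ) + 1) / (C * 20 : ℕ)) ^ r ≤ (0.94951 : ℝ) ^ (k + 1) := by
  have hC' : (1 : ℝ) ≤ C := by exact_mod_cast hC
  have hk' : (k : ℝ) + 1 ≤ 20 := by exact_mod_cast hk
  have h0 : 0 ≤ 1 - ((k : ℝ) + 1) / (C * 20 : ℕ) := by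
    rw [sub_nonneg, div_le_one (by positivity)]; push_cast; linarith
  have h1 : 1 - ((k : ℝ) + 1) / (C * 20 : ℕ) ≤ Real.exp (-(((k : ℝ) + 1) / (C * 20 : ℕ))) :=
    Real.one_sub_le_exp_neg _
  have h2 : Real.exp (-(1 / 19.3 : ℝ)) ≤ 0.94951 := by
    rw [Real.exp_neg, inv_le_comm₀ (Real.exp_pos _) (by norm_num)]
    refine le_trans ?_ (Real.sum_le_exp_of_nonneg (by norm_num) 4)
    norm_num [Finset.sum_range_succ, Nat.factorial]
  calc _ ≤ Real.exp (-(((k : ℝ) + 1) / (C * 20 : ℕ))) ^ r := pow_le_pow_left₀ h0 h1 r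
    _ = Real.exp (-(r / (C * 20))) ^ (k + 1) := by
      rw [← Real.exp_nat_mul, ← Real.exp_nat_mul]; congr 1; push_cast; ring
    _ ≤ Real.exp (-(1 / 19.3 : ℝ)) ^ (k + 1) := by
      refine pow_le_pow_left₀ (Real.exp_pos _).le (Real.exp_le_exp.2 (neg_le_neg ?_)) _
      rw [div_le_div_iff₀ (by norm_num) (by positivity)]
      linarith
    _ ≤ _ := by gcongr

lemma le_one_sub_pow_of_le {C r : ℕ} (hC : 1 < C) (hCr : (r : ℝ) ≤ 1.04 * (C - 1)) {k : ℕ}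
    (hk : k < 20) : (0.94932 : ℝ) ^ (k + 1) ≤ (1 - ((k : ℝ) + 1) / (C * 20 : ℕ)) ^ r := by
  have hC' : (1 : ℝ) < C := by exact_mod_cast hC
  have hk' : (k : ℝ) + 1 ≤ 20 := by exact_mod_cast hk
  have hMk : 0 < (C : ℝ) * 20 - (k + 1) := by linarith
  have hM : (0 : ℝ) < C * 20 := by linarith
  have h1 : Real.exp (-((k + 1 : ℝ) / (C * 20 - (k + 1)))) ≤
      1 - ((k : ℝ) + 1) / (C * 20 : ℕ) := by
    have h := Real.one_sub_inv_le_log_of_pos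
      (x := 1 - ((k : ℝ) + 1) / (C * 20)) (by rw [sub_pos, div_lt_one hM]; linarith)
    push_cast
    rw [← Real.le_log_iff_exp_le (by rw [sub_pos, div_lt_one hM]; linarith)]
    refine le_trans (le_of_eq ?_) h
    field_simp
    ring
  have h2 : (0.94932 : ℝ) ≤ Real.exp (-0.052) := by
    rw [Real.exp_neg, le_inv_comm₀ (by norm_num) (Real.exp_pos _)]
    have := Real.exp_bound' (x := 0.052) (by norm_num) (by norm_num) (n := 4) (by norm_num)
    refine this.trans ?_
    norm_num [Finset.sum_range_succ, Nat.factorial]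
  calc (0.94932 : ℝ) ^ (k + 1) ≤ Real.exp (-0.052) ^ (k + 1) := by gcongr
    _ ≤ Real.exp (-((k + 1 : ℝ) / (C * 20 - (k + 1)))) ^ r := by
      rw [← Real.exp_nat_mul, ← Real.exp_nat_mul, Real.exp_le_exp]
      have : (r : ℝ) * ((k + 1 : ℝ) / (C * 20 - (k + 1))) ≤ 0.052 * (k + 1) := by
        rw [← mul_div_assoc, div_le_iff₀ hMk]
        have := mul_le_mul_of_nonneg_right hCr (by positivity : (0 : ℝ) ≤ k + 1)
        nlinarith
      push_cast
      linarith
    _ ≤ _ := by gcongr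

lemma le_sq_sub_cube {s t : ℝ} (hs : 0.4988 ≤ s) (hs1 : s ≤ 1) (ht : 1 / 0.965 ≤ t)
    (ht1 : t ≤ 1.04) :
    6 * 0.0365 ≤ 3 * (s ^ 2 * t) * 0.3664 - s ^ 3 * t ^ 2 * 0.4582 := by
  have h1 : s ^ 3 * t ^ 2 ≤ s ^ 3 * 1.04 ^ 2 := by
    have : 0 ≤ t := le_trans (by norm_num) ht
    have : 0 ≤ s := le_trans (by norm_num) hs
    gcongr
  have h2 : s ^ 2 * (1 / 0.965) ≤ s ^ 2 * t := by gcongr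
  have h3 : (0.4988 : ℝ) ^ 2 * 1.139 - 0.4988 ^ 3 * 0.4957 ≤ s ^ 2 * 1.139 - s ^ 3 * 0.4957 := by
    have : 0 ≤ (s - 0.4988) * ((s + 0.4988) * (1.139 - 0.4957 * (s + 0.4988)) + 0.4957 * (s * 0.4988)) :=
      mul_nonneg (by linarith) (add_nonneg (mul_nonneg (by linarith) (by linarith)) (by linarith))
    nlinarith
  have h4 : 0 ≤ s ^ 2 := by positivity
  have h5 : 0 ≤ s ^ 3 := pow_nonneg (le_trans (by norm_num) hs) 3
  norm_num at *
  nlinarith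

section RandomColoring

variable {V : Type*} [Fintype V] [DecidableEq V] {H : SimpleGraph V} [DecidableRel H.Adj]

lemma le_expect_savings_of_card_nonadjPairs {r C : ℕ} (hr : ∀ v, H.degree v = r) (hC : 1 < C)
    (hCr : (C : ℝ) ≤ 0.965 * r) (hrC : (r : ℝ) ≤ 1.04 * (C - 1)) (v : V)
    (hv : 0.2489 * (r : ℝ) ^ 2 ≤ #(nonadjPairs H v)) :
    0.0365 * (r : ℝ) ≤ 𝔼 x : V → Fin C × Fin 20, (savings H v x : ℝ) := by
  have h := le_expect_savings (C := C) (m := 20) hr (by omega) (by norm_num) v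
  set g : ℕ → ℝ := fun k => (1 - ((k : ℝ) + 1) / (C * 20 : ℕ)) ^ r with hg
  have hlow : 20 * 0.6054 ≤ ∑ k ∈ range 20, g k := by
    refine le_trans ?_ (sum_le_sum fun k hk => le_one_sub_pow_of_le hC hrC (mem_range.1 hk))
    norm_num [Finset.sum_range_succ]
  have hup : ∑ k ∈ range 20, (((k : ℝ) + 1) ^ 3 - (k : ℝ) ^ 3) * g k ≤ 8000 * 0.4582 := by
    refine le_trans (sum_le_sum fun k hk => mul_le_mul_of_nonneg_left
      (one_sub_pow_le_of_le (by omega) hCr (mem_range.1 hk)) ?_) ?_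
    · nlinarith [(Nat.cast_nonneg k : (0 : ℝ) ≤ k)]
    · norm_num [Finset.sum_range_succ]
  have hC0 : (1 : ℝ) < C := by exact_mod_cast hC
  have hr0 : (0 : ℝ) < r := by nlinarith
  set NA : ℝ := (#(nonadjPairs H v) : ℝ) with hNA
  have hNA1 : NA ≤ (r : ℝ) ^ 2 := by
    have : #(nonadjPairs H v) ≤ r * r := by
      refine (card_filter_le _ _).trans ?_
      rw [card_product, SimpleGraph.card_neighborFinset_eq_degree, hr]
    rw [hNA, sq]; exact_mod_cast this
  have hNA3 := card_nonadjTriples_le (H := H) v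
  have hNA0 : 0 ≤ NA := Nat.cast_nonneg _
  obtain ⟨s, hs0, hs⟩ : ∃ s : ℝ, 0 ≤ s ∧ √NA = s * r :=
    ⟨√NA / r, by positivity, by field_simp⟩
  have hNAs : NA = s ^ 2 * (r : ℝ) ^ 2 := by rw [← mul_pow, ← hs, Real.sq_sqrt hNA0]
  have hs1 : 0.4988 ≤ s := by
    rw [hNAs] at hv
    have := le_of_mul_le_mul_right hv (by positivity)
    nlinarith
  have hs2 : s ≤ 1 := by
    rw [hNAs] at hNA1
    have : s ^ 2 ≤ 1 := le_of_mul_le_mul_right (by linarith) (by positivity : (0 : ℝ) < r ^ 2)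
    nlinarith
  rw [← hNA, hs, hNAs] at hNA3
  have hfin := le_sq_sub_cube (t := r / C) hs1 hs2
    (by rw [div_le_div_iff₀ (by norm_num) (by linarith)]; linarith)
    (by rw [div_le_iff₀ (by linarith)]; linarith)
  have e1 : 3 * (s ^ 2 * (r / C : ℝ)) * 0.3664 * r ≤ 3 * NA * (C * (1 / (C * 20 : ℕ) : ℝ) ^ 2 *
      (∑ k ∈ range 20, g k) ^ 2) := by
    have : (20 : ℝ) ^ 2 * 0.3664 ≤ (∑ k ∈ range 20, g k) ^ 2 := by nlinarith
    calc _ = 3 * NA * (C * (1 / (C * 20 : ℕ) : ℝ) ^ 2 * (20 ^ 2 * 0.3664)) := by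
          rw [hNAs]; push_cast; field_simp
      _ ≤ _ := by gcongr
  have e2 : #(nonadjTriples H v) * (C * (1 / (C * 20 : ℕ) : ℝ) ^ 3 *
      (∑ k ∈ range 20, (((k : ℝ) + 1) ^ 3 - (k : ℝ) ^ 3) * g k)) ≤
      s ^ 3 * (r / C : ℝ) ^ 2 * 0.4582 * r := by
    calc _ ≤ #(nonadjTriples H v) * (C * (1 / (C * 20 : ℕ) : ℝ) ^ 3 * (8000 * 0.4582)) := by
          gcongr
      _ ≤ (s ^ 2 * (r : ℝ) ^ 2 * (s * r)) * (C * (1 / (C * 20 : ℕ) : ℝ) ^ 3 *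
          (8000 * 0.4582)) := by gcongr
      _ = _ := by push_cast; field_simp; norm_num
  have := mul_le_mul_of_nonneg_right hfin hr0.le
  linarith

variable {C m : ℕ}

/-- A partial proper colouring extends greedily if at every vertex the colours used in the
neighbourhood, together with the uncoloured neighbours, are fewer than the colours available. -/
lemma colorable_of_partial_coloring (R : Finset V) (f : V → Fin C)
    (hf : ∀ u ∈ R, ∀ w ∈ R, H.Adj u w → f u ≠ f w)
    (hv : ∀ v, #((H.neighborFinset v ∩ R).image f) + #(H.neighborFinset v \ R) < C) :
    H.Colorable C := by
  have key : ∀ S : Finset V, ∃ g : V → Fin C, (∀ u ∈ R, g u = f u) ∧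
      ∀ u ∈ R ∪ S, ∀ w ∈ R ∪ S, H.Adj u w → g u ≠ g w := by
    intro S
    induction S using Finset.induction_on with
    | empty => exact ⟨f, fun _ _ => rfl, by simpa using hf⟩
    | insert v S hvS ih =>
      obtain ⟨g, hg, hgp⟩ := ih
      by_cases hvR : v ∈ R
      · refine ⟨g, hg, ?_⟩
        rwa [union_insert, insert_eq_of_mem (mem_union_left _ hvR)]
      have hcard : #((H.neighborFinset v).image g) < #(univ : Finset (Fin C)) := by
        rw [card_univ, Fintype.card_fin]
        refine lt_of_le_of_lt ?_ (hv v)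
        calc #((H.neighborFinset v).image g)
            = #((H.neighborFinset v ∩ R).image g ∪ (H.neighborFinset v \ R).image g) := by
              rw [← image_union, union_comm, sdiff_union_inter]
          _ ≤ _ := (card_union_le _ _).trans (add_le_add (le_of_eq ?_) card_image_le)
        rw [image_congr (g := f) fun u hu => hg u (mem_inter.1 hu).2]
      obtain ⟨c, -, hc⟩ := exists_mem_notMem_of_card_lt_card hcard
      have hc' : ∀ w, H.Adj v w → g w ≠ c := fun w hw h =>
        hc (mem_image.2 ⟨w, by simpa using hw, h⟩)
      refine ⟨Function.update g v c, fun u hu => ?_, fun u hu w hw huw => ?_⟩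
      · rw [Function.update_of_ne (fun h : u = v => hvR (h ▸ hu)), hg u hu]
      · rcases eq_or_ne u v with rfl | huv
        · rw [Function.update_self, Function.update_of_ne huw.ne']
          exact (hc' w huw).symm
        rcases eq_or_ne w v with rfl | hwv
        · rw [Function.update_self, Function.update_of_ne huw.ne]
          exact hc' u huw.symm
        rw [Function.update_of_ne huv, Function.update_of_ne hwv]
        refine hgp u ?_ w ?_ huw
        · rw [union_insert, mem_insert] at hu; exact hu.resolve_left huv
        · rw [union_insert, mem_insert] at hw; exact hw.resolve_left hwv
  obtain ⟨g, -, hg⟩ := key univ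
  exact ⟨SimpleGraph.Coloring.mk g fun {u w} huw => hg u (by simp) w (by simp) huw⟩

lemma colorable_of_degree_lt_savings (x : V → Fin C × Fin m)
    (hx : ∀ v, H.degree v < C + savings H v x) : H.Colorable C := by
  refine colorable_of_partial_coloring ({u | Retains H x u} : Finset V) (fun u => (x u).1)
    (fun u hu w hw huw h => ?_) fun v => ?_
  · simp only [mem_filter, mem_univ, true_and] at hu hw
    exact hu.not_adj hw h huw
  · set R : Finset V := {u | Retains H x u} with hR
    have hcls : ∀ c, #{u ∈ H.neighborFinset v ∩ R | (x u).1 = c} = #(retainedClass H x v c) := by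
      intro c
      congr 1
      ext u
      simp [retainedClass, hR, and_assoc]
    have h1 : #((H.neighborFinset v ∩ R).image fun u => (x u).1) + savings H v x ≤
        #(H.neighborFinset v ∩ R) := by
      rw [card_eq_sum_card_fiberwise (s := H.neighborFinset v ∩ R) (f := fun u => (x u).1)
        (t := univ) (by simp), ← filter_univ_mem (image _ _), card_filter, savings,
        ← sum_add_distrib]
      refine sum_le_sum fun c _ => ?_
      rw [hcls]
      split_ifs with h
      · have : 0 < #(retainedClass H x v c) := by
          rw [← hcls, card_pos]
          obtain ⟨u, hu, hc⟩ := mem_image.1 h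
          exact ⟨u, mem_filter.2 ⟨hu, hc⟩⟩
        omega
      · omega
    have h2 := card_inter_add_card_sdiff (H.neighborFinset v) R
    have h3 := hx v
    rw [SimpleGraph.card_neighborFinset_eq_degree] at h2
    omega

lemma card_savingsSupport_le {r : ℕ} (hr : ∀ v, H.degree v = r) (v : V) :
    #(savingsSupport H v) ≤ r + r * r := by
  refine (card_union_le _ _).trans (add_le_add ?_ ?_)
  · rw [SimpleGraph.card_neighborFinset_eq_degree, hr]
  · refine (card_biUnion_le_card_mul _ _ r fun u _ => ?_).trans ?_
    · rw [SimpleGraph.card_neighborFinset_eq_degree, hr]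
    · rw [SimpleGraph.card_neighborFinset_eq_degree, hr]

lemma mem_savingsSupport_comm {v w : V} :
    v ∈ savingsSupport H w ↔ w ∈ savingsSupport H v := by
  simp only [savingsSupport, mem_union, mem_biUnion, SimpleGraph.mem_neighborFinset]
  constructor <;>
  · rintro (h | ⟨u, h1, h2⟩)
    · exact Or.inl h.symm
    · exact Or.inr ⟨u, h2.symm, h1.symm⟩

lemma card_not_disjoint_savingsSupport_le {r : ℕ} (hr : ∀ v, H.degree v = r) (v : V) :
    #{w | ¬ Disjoint (savingsSupport H v) (savingsSupport H w)} ≤ (r + r * r) * (r + r * r) := by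
  refine (card_le_card (t := (savingsSupport H v).biUnion (savingsSupport H)) fun w hw => ?_).trans
    ((card_biUnion_le_card_mul _ _ (r + r * r) fun u _ => card_savingsSupport_le hr u).trans
      (Nat.mul_le_mul_right _ (card_savingsSupport_le hr v)))
  simp only [mem_filter, mem_univ, true_and, not_disjoint_iff] at hw
  obtain ⟨z, h1, h2⟩ := hw
  exact mem_biUnion.2 ⟨z, h1, mem_savingsSupport_comm.1 h2⟩

lemma card_nonadjPairs_eq {r : ℕ} (hr : ∀ v, H.degree v = r) (v : V) :
    #(nonadjPairs H v) +
      #{p ∈ H.neighborFinset v ×ˢ H.neighborFinset v | H.Adj p.1 p.2} + r = r * r := by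
  have h1 : #(H.neighborFinset v ×ˢ H.neighborFinset v) = r * r := by
    rw [card_product, SimpleGraph.card_neighborFinset_eq_degree, hr]
  have h2 : #(H.neighborFinset v).diag = r := by
    rw [diag_card, SimpleGraph.card_neighborFinset_eq_degree, hr]
  have h3 := card_filter_add_card_filter_not (s := H.neighborFinset v ×ˢ H.neighborFinset v)
    (fun p => H.Adj p.1 p.2)
  have h4 := card_filter_add_card_filter_not
    (s := {p ∈ H.neighborFinset v ×ˢ H.neighborFinset v | ¬ H.Adj p.1 p.2})
    (fun p => p.1 = p.2)
  have h5 : ({p ∈ {p ∈ H.neighborFinset v ×ˢ H.neighborFinset v | ¬ H.Adj p.1 p.2} | p.1 = p.2} :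
      Finset (V × V)) = (H.neighborFinset v).diag := by
    ext ⟨a, b⟩
    simp only [mem_filter, mem_product, mem_diag]
    constructor
    · rintro ⟨⟨⟨h1, -⟩, -⟩, h2⟩; exact ⟨h1, h2⟩
    · rintro ⟨h1, rfl⟩; exact ⟨⟨⟨h1, h1⟩, H.loopless.irrefl _⟩, rfl⟩
  have h6 : ({p ∈ {p ∈ H.neighborFinset v ×ˢ H.neighborFinset v | ¬ H.Adj p.1 p.2} | ¬ p.1 = p.2} :
      Finset (V × V)) = nonadjPairs H v := by
    ext ⟨a, b⟩
    simp only [nonadjPairs, mem_filter, mem_product]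
    tauto
  rw [h5, h6] at h4
  omega

end RandomColoring

lemma exists_forall_exp_mul_le : ∃ r₀ : ℕ, ∀ r : ℕ, r₀ ≤ r →
    4 * Real.exp (-(0.001 ^ 2 / 192 * r)) * ((r + r * r) * (r + r * r) : ℕ) ≤ 1 ∧
    4 * Real.exp (-(0.001 ^ 2 / 192 * r)) < 1 := by
  have h1 : Filter.Tendsto (fun r : ℕ => (r : ℝ) ^ 4 * Real.exp (-(0.001 ^ 2 / 192) * r))
      Filter.atTop (nhds 0) := by
    have := (Real.tendsto_pow_mul_exp_neg_atTop_nhds_zero 4).comp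
      ((tendsto_natCast_atTop_atTop (R := ℝ)).const_mul_atTop
        (by norm_num : (0 : ℝ) < 0.001 ^ 2 / 192))
    have h := this.const_mul ((192 / 0.001 ^ 2 : ℝ) ^ 4)
    rw [mul_zero] at h
    refine h.congr fun r => ?_
    simp only [Function.comp]
    rw [mul_pow, ← mul_assoc, ← mul_assoc, ← mul_pow, neg_mul]
    norm_num
  have h2 := h1.eventually (gt_mem_nhds (by norm_num : (0 : ℝ) < 1 / 17))
  obtain ⟨r₀, h⟩ := Filter.eventually_atTop.1 h2
  refine ⟨max r₀ 1, fun r hr => ?_⟩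
  have h3 := h r (le_of_max_le_left hr)
  have hr1 : (1 : ℝ) ≤ r := by exact_mod_cast le_of_max_le_right hr
  rw [neg_mul] at h3
  set E := Real.exp (-(0.001 ^ 2 / 192 * r))
  have hE : 0 < E := Real.exp_pos _
  have h4 : (r : ℝ) + r * r ≤ 2 * r ^ 2 := by nlinarith
  have h5 : ((r : ℝ) + r * r) * (r + r * r) ≤ (2 * r ^ 2) * (2 * r ^ 2) := by gcongr
  have h6 : (1 : ℝ) ≤ (r : ℝ) ^ 4 := one_le_pow₀ hr1
  push_cast
  constructor <;> nlinarith

/-- Regular graphs with sparse neighbourhoods have chromatic number at most `0.965` times the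
degree. -/
lemma exists_forall_colorable_of_regular : ∃ r₀ : ℕ, ∀ r : ℕ, r₀ ≤ r →
    ∀ (V : Type) [Fintype V] [DecidableEq V] (H : SimpleGraph V) [DecidableRel H.Adj],
    (∀ v, H.degree v = r) →
    (∀ v, (#{p ∈ H.neighborFinset v ×ˢ H.neighborFinset v | H.Adj p.1 p.2} : ℝ) ≤
      0.751 * (r : ℝ) ^ 2) →
    H.Colorable ⌊0.965 * (r : ℝ)⌋₊ := by
  obtain ⟨r₀, h₀⟩ := exists_forall_exp_mul_le
  refine ⟨max r₀ 10000, fun r hr V _ _ H _ hdeg hsparse => ?_⟩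
  obtain ⟨hp1, hp2⟩ := h₀ r (le_of_max_le_left hr)
  have hr1 : (10000 : ℝ) ≤ r := by exact_mod_cast le_of_max_le_right hr
  set C := ⌊0.965 * (r : ℝ)⌋₊ with hCdef
  have hC1 : (C : ℝ) ≤ 0.965 * r := Nat.floor_le (by positivity)
  have hC2 : 0.965 * (r : ℝ) < C + 1 := Nat.lt_floor_add_one _
  have hC : 1 < C := by
    have : (1 : ℝ) < C := by linarith
    exact_mod_cast this
  have hE : ∀ v, 0.0365 * (r : ℝ) ≤ 𝔼 x : V → Fin C × Fin 20, (savings H v x : ℝ) := fun v => by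
    refine le_expect_savings_of_card_nonadjPairs hdeg hC hC1 (by linarith) v ?_
    have h1 : (#(nonadjPairs H v) : ℝ) +
        #{p ∈ H.neighborFinset v ×ˢ H.neighborFinset v | H.Adj p.1 p.2} + r = r * r := by
      exact_mod_cast card_nonadjPairs_eq hdeg v
    have h2 := hsparse v
    nlinarith
  have : Nonempty (Fin C × Fin 20) := ⟨⟨0, by omega⟩, 0⟩
  obtain ⟨x, hx⟩ := exists_forall_not_of_lovasz
    (fun (v : V) (x : V → Fin C × Fin 20) => (savings H v x : ℝ) ≤
      (𝔼 y : V → Fin C × Fin 20, (savings H v y : ℝ)) - 0.001 * r)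
    (savingsSupport H) (fun v x y h => by simp only [savings_congr h]; exact id)
    (Real.exp (-(0.001 ^ 2 / 192 * r))) ((r + r * r) * (r + r * r)) hp2
    (fun v => card_savings_le_tail hdeg (by omega) (by norm_num) (by linarith) v (by norm_num)
      (by norm_num))
    (fun v => card_not_disjoint_savingsSupport_le hdeg v) hp1
  refine colorable_of_degree_lt_savings x fun v => ?_
  have h1 := hx v
  have h2 := hE v
  push Not at h1
  have : (H.degree v : ℝ) < C + savings H v x := by rw [hdeg]; linarith
  exact_mod_cast this

lemma update_not_ne_self {ι : Type*} [DecidableEq ι] (x : ι → Bool) (i : ι) :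
    Function.update x i (!x i) ≠ x := fun h => by
  have := congrFun h i
  simp at this

lemma update_not_involutive {ι : Type*} [DecidableEq ι] (x : ι → Bool) (i : ι) :
    Function.update (Function.update x i (!x i)) i (!(Function.update x i (!x i)) i) = x := by
  simp

lemma update_not_injective {ι : Type*} [DecidableEq ι] (x : ι → Bool) :
    Function.Injective fun i => Function.update x i (!x i) := fun i j h => by
  by_contra hij
  have := congrFun h i
  simp [Function.update_of_ne hij] at this

lemma update_not_update_not_ne {ι : Type*} [DecidableEq ι] (x : ι → Bool) (i j k : ι) :
    Function.update x j (!x j) ≠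
      Function.update (Function.update x i (!x i)) k (!(Function.update x i (!x i)) k) := by
  intro h
  rcases eq_or_ne k i with rfl | hki
  · rw [update_not_involutive] at h
    exact update_not_ne_self x j h
  have h1 := congrFun h i
  have h2 := congrFun h k
  rw [Function.update_of_ne hki.symm, Function.update_self] at h1
  rw [Function.update_self, Function.update_of_ne hki] at h2
  rcases eq_or_ne i j with rfl | hij
  · rw [Function.update_of_ne hki] at h2
    simp at h2
  · rw [Function.update_of_ne hij] at h1
    simp at h1

section Regularization

variable {V : Type*} [Fintype V] [DecidableEq V] (H : SimpleGraph V) [DecidableRel H.Adj] (r : ℕ)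

/-- Copies of `H` indexed by the vertices of a hypercube; each vertex of degree less than `r` is
joined to its copies along as many directions of the cube as its degree falls short of `r`. -/
def regularization : SimpleGraph (V × (Fin r → Bool)) where
  Adj a b := (H.Adj a.1 b.1 ∧ a.2 = b.2) ∨
    (a.1 = b.1 ∧ ∃ i : Fin r, (i : ℕ) < r - H.degree a.1 ∧ b.2 = Function.update a.2 i (!a.2 i))
  symm := by
    constructor
    rintro ⟨a, x⟩ ⟨b, y⟩ (⟨h1, h2⟩ | ⟨h1, i, hi, h2⟩)
    · exact Or.inl ⟨h1.symm, h2.symm⟩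
    · dsimp only at h1 h2
      subst h1 h2
      exact Or.inr ⟨rfl, i, hi, (update_not_involutive x i).symm⟩
  loopless := by
    constructor
    rintro ⟨a, x⟩ (⟨h1, -⟩ | ⟨-, i, -, h2⟩)
    · exact H.loopless.irrefl _ h1
    · exact update_not_ne_self x i h2.symm

variable {H r}

lemma neighborFinset_regularization [DecidableRel (regularization H r).Adj] (v : V)
    (x : Fin r → Bool) :
    (regularization H r).neighborFinset (v, x) = (H.neighborFinset v).image (fun w => (w, x)) ∪
      ({i : Fin r | (i : ℕ) < r - H.degree v} : Finset _).image
        (fun i => (v, Function.update x i (!x i))) := by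
  ext ⟨w, y⟩
  simp only [SimpleGraph.mem_neighborFinset, mem_union, mem_image, mem_filter, mem_univ, true_and,
    Prod.mk.injEq]
  constructor
  · rintro (⟨h1, h2⟩ | ⟨h1, i, hi, h2⟩)
    · exact Or.inl ⟨w, h1, rfl, h2⟩
    · exact Or.inr ⟨i, hi, h1, h2.symm⟩
  · rintro (⟨w', h1, rfl, h2⟩ | ⟨i, hi, h1, h2⟩)
    · exact Or.inl ⟨h1, h2⟩
    · exact Or.inr ⟨h1, i, hi, h2.symm⟩

lemma degree_regularization [DecidableRel (regularization H r).Adj] (hr : ∀ v, H.degree v ≤ r)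
    (a : V × (Fin r → Bool)) : (regularization H r).degree a = r := by
  obtain ⟨v, x⟩ := a
  rw [← SimpleGraph.card_neighborFinset_eq_degree, neighborFinset_regularization,
    card_union_of_disjoint, card_image_of_injective, card_image_of_injective,
    SimpleGraph.card_neighborFinset_eq_degree, Fin.card_filter_val_lt]
  · have := hr v
    omega
  · exact fun i j h => update_not_injective x (Prod.mk.inj h).2
  · exact fun i j h => (Prod.mk.inj h).1
  · rw [disjoint_left]
    rintro ⟨w, y⟩ h1 h2
    simp only [mem_image, mem_filter, Prod.mk.injEq] at h1 h2
    obtain ⟨w', h3, rfl, rfl⟩ := h1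
    obtain ⟨i, -, -, h4⟩ := h2
    exact update_not_ne_self _ i h4

lemma card_adj_pairs_regularization_le [DecidableRel (regularization H r).Adj] (v : V)
    (x : Fin r → Bool) :
    #{p ∈ (regularization H r).neighborFinset (v, x) ×ˢ
        (regularization H r).neighborFinset (v, x) | (regularization H r).Adj p.1 p.2} ≤
      #{p ∈ H.neighborFinset v ×ˢ H.neighborFinset v | H.Adj p.1 p.2} := by
  refine (card_le_card fun p hp => ?_).trans
    (card_image_le (f := fun p : V × V => ((p.1, x), (p.2, x))))
  obtain ⟨⟨a, y⟩, b, z⟩ := p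
  rw [mem_filter, mem_product, SimpleGraph.mem_neighborFinset, SimpleGraph.mem_neighborFinset] at hp
  obtain ⟨⟨h1, h2⟩, h3⟩ := hp
  simp only [mem_image, mem_filter, mem_product, SimpleGraph.mem_neighborFinset]
  rcases h1 with ⟨h1, h1'⟩ | ⟨h1, i, hi, h1'⟩ <;> rcases h2 with ⟨h2, h2'⟩ | ⟨h2, j, hj, h2'⟩ <;>
    rcases h3 with ⟨h3, h3'⟩ | ⟨h3, k, hk, h3'⟩ <;> dsimp only at * <;> subst h1' h2'
  · exact ⟨(a, b), ⟨⟨h1, h2⟩, h3⟩, rfl⟩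
  · exact absurd h3'.symm (update_not_ne_self _ k)
  · exact absurd h3'.symm (update_not_ne_self _ j)
  · exact absurd (h2.trans h3.symm) h1.ne
  · exact absurd h3' (update_not_ne_self _ i)
  · exact absurd (h1.trans h3) h2.ne
  · exact absurd (h1.symm.trans h2) h3.ne
  · exact absurd h3' (update_not_update_not_ne _ i j k)

end Regularization

/-- Graphs with sparse neighbourhoods have chromatic number at most `0.965` times their maximum
degree. -/
lemma exists_forall_colorable_of_degree_le : ∃ r₀ : ℕ, ∀ r : ℕ, r₀ ≤ r →
    ∀ (V : Type) [Fintype V] [DecidableEq V] (H : SimpleGraph V) [DecidableRel H.Adj],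
    (∀ v, H.degree v ≤ r) →
    (∀ v, (#{p ∈ H.neighborFinset v ×ˢ H.neighborFinset v | H.Adj p.1 p.2} : ℝ) ≤
      0.751 * (r : ℝ) ^ 2) →
    H.Colorable ⌊0.965 * (r : ℝ)⌋₊ := by
  classical
  obtain ⟨r₀, h⟩ := exists_forall_colorable_of_regular
  refine ⟨r₀, fun r hr V _ _ H _ hdeg hsparse => ?_⟩
  have hK := h r hr _ (regularization H r) (degree_regularization hdeg) fun a =>
    (Nat.cast_le.2 (card_adj_pairs_regularization_le a.1 a.2)).trans (hsparse a.1)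
  let φ : H →g regularization H r :=
    ⟨fun v => (v, fun _ => false), fun {v w} hvw => Or.inl ⟨hvw, rfl⟩⟩
  obtain ⟨c⟩ := hK
  exact ⟨c.comp φ⟩

section LinkCount

variable {V : Type*}

/-- Alternating 4-cycles through a vertex set `A`, embedded into the pairs of parallel edges of
4-cycles. -/
lemma alternating_cycles_le [DecidableEq V] {a d t : V → V → ℝ} (ha0 : ∀ x y, 0 ≤ a x y)
    (hsymm : ∀ x y, a x y = a y x) (A : Finset V)
    (hd : ∀ x y, d x y = if x ∈ A ∨ y ∈ A then a x y else 0)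
    (ht : ∀ x y, t x y = if x ∈ A ∧ y ∉ A then a x y else 0) (x y x' y' : V) :
    t x y * t y' y * (t x x' * t y' x') + t y x * t x' x * (t y y' * t x' y') ≤
      d x y * d x' y' * (a x x' * a y y') := by
  have ht0 : ∀ x y, 0 ≤ t x y := fun x y => by rw [ht]; split_ifs <;> simp [ha0]
  have hta : ∀ x y, t x y ≤ a x y := fun x y => by rw [ht]; split_ifs <;> simp [ha0]
  have hd0 : ∀ x y, 0 ≤ d x y := fun x y => by rw [hd]; split_ifs <;> simp [ha0]
  have hr : 0 ≤ d x y * d x' y' * (a x x' * a y y') :=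
    mul_nonneg (mul_nonneg (hd0 _ _) (hd0 _ _)) (mul_nonneg (ha0 _ _) (ha0 _ _))
  by_cases hx : x ∈ A
  · rw [ht y x, if_neg fun h => h.2 hx, zero_mul, zero_mul, add_zero]
    by_cases hy' : y' ∈ A
    · rw [hd x y, if_pos (Or.inl hx), hd x' y', if_pos (Or.inr hy'), hsymm x' y', hsymm y y']
      calc t x y * t y' y * (t x x' * t y' x') ≤ a x y * a y' y * (a x x' * a y' x') := by
            gcongr <;> simp only [ht0, hta, ha0, mul_nonneg]
        _ = _ := by ring
    · rw [ht y' y, if_neg fun h => hy' h.1, mul_zero, zero_mul]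
      exact hr
  · rw [ht x y, if_neg fun h => hx h.1, zero_mul, zero_mul, zero_add]
    by_cases hy : y ∈ A
    · by_cases hx' : x' ∈ A
      · rw [hd x y, if_pos (Or.inr hy), hd x' y', if_pos (Or.inl hx'), hsymm x y, hsymm x x']
        calc t y x * t x' x * (t y y' * t x' y') ≤ a y x * a x' x * (a y y' * a x' y') := by
              gcongr <;> simp only [ht0, hta, ha0, mul_nonneg]
          _ = _ := by ring
      · rw [ht x' x, if_neg fun h => hx' h.1, mul_zero, zero_mul]
        exact hr
    · rw [ht y x, if_neg fun h => hy h.1, zero_mul, zero_mul]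
      exact hr

variable [Fintype V]

lemma sum_sum_mul_fst_fst (d k : V → V → ℝ) :
    ∑ p : V × V, ∑ q : V × V, d p.1 p.2 * d q.1 q.2 * k p.1 q.1 =
      ∑ x, ∑ z, k x z * (∑ y, d x y) * ∑ y, d z y := by
  simp only [Fintype.sum_prod_type]
  refine sum_congr rfl fun x _ => ?_
  rw [sum_comm]
  refine sum_congr rfl fun z _ => ?_
  rw [mul_assoc, sum_mul_sum, mul_sum]
  refine sum_congr rfl fun y _ => ?_
  rw [mul_sum]
  exact sum_congr rfl fun w _ => by ring

lemma sum_sum_swap_left (F : V × V → V × V → ℝ) :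
    ∑ p : V × V, ∑ q : V × V, F p.swap q = ∑ p : V × V, ∑ q : V × V, F p q :=
  (Equiv.prodComm V V).sum_comp fun p => ∑ q, F p q

lemma sum_sum_swap_right (F : V × V → V × V → ℝ) :
    ∑ p : V × V, ∑ q : V × V, F p q.swap = ∑ p : V × V, ∑ q : V × V, F p q :=
  sum_congr rfl fun p _ => (Equiv.prodComm V V).sum_comp fun q => F p q

lemma sum_sum_mul_ends {d : V → V → ℝ} (hd : ∀ x y, d x y = d y x) (k : V → V → ℝ) :
    ∑ p : V × V, ∑ q : V × V, d p.1 p.2 * d q.1 q.2 *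
        (k p.1 q.1 + k p.1 q.2 + k p.2 q.1 + k p.2 q.2) =
      4 * ∑ x, ∑ z, k x z * (∑ y, d x y) * ∑ y, d z y := by
  have h1 := sum_sum_swap_left fun p q => d p.1 p.2 * d q.1 q.2 * k p.1 q.1
  have h2 := sum_sum_swap_right fun p q => d p.1 p.2 * d q.1 q.2 * k p.1 q.1
  have h3 := sum_sum_swap_left fun p q => d p.1 p.2 * d q.1 q.2 * k p.1 q.2
  have h2' := sum_sum_mul_fst_fst d k
  simp only [Prod.fst_swap, Prod.snd_swap, fun p : V × V => hd p.2 p.1] at h1 h2 h3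
  simp only [mul_add, sum_add_distrib]
  linarith

/-- The number of 4-cycles of a bipartite graph, bounded below by Cauchy-Schwarz applied to the
codegrees. -/
lemma sq_sum_sq_le_mul_sum_cycles (A : Finset V) {t : V → V → ℝ}
    (ht : ∀ x y, x ∉ A → t x y = 0) :
    (∑ y, (∑ x, t x y) ^ 2) ^ 2 ≤ (#A : ℝ) ^ 2 * ∑ p : V × V, ∑ q : V × V,
      t p.1 p.2 * t q.2 p.2 * (t p.1 q.1 * t q.2 q.1) := by
  obtain ⟨cod, hcod⟩ : ∃ cod : V → V → ℝ, ∀ x z, cod x z = ∑ y, t x y * t z y :=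
    ⟨_, fun _ _ => rfl⟩
  have hQ : ∑ p : V × V, ∑ q : V × V,
      t p.1 p.2 * t q.2 p.2 * (t p.1 q.1 * t q.2 q.1) = ∑ x, ∑ z, cod x z ^ 2 := by
    simp only [Fintype.sum_prod_type]
    refine sum_congr rfl fun x _ => ?_
    calc ∑ y, ∑ x', ∑ z, t x y * t z y * (t x x' * t z x')
        = ∑ y, ∑ z, ∑ x', t x y * t z y * (t x x' * t z x') :=
          sum_congr rfl fun y _ => sum_comm
      _ = ∑ z, ∑ y, ∑ x', t x y * t z y * (t x x' * t z x') := sum_comm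
      _ = _ := sum_congr rfl fun z _ => by rw [hcod, sq, sum_mul_sum]
  have hW : ∑ y, (∑ x, t x y) ^ 2 = ∑ p ∈ A ×ˢ A, cod p.1 p.2 := by
    have h1 : ∑ y, (∑ x, t x y) ^ 2 = ∑ x, ∑ z, cod x z := by
      calc _ = ∑ y, ∑ x, ∑ z, t x y * t z y := sum_congr rfl fun y _ => by
            rw [sq, sum_mul_sum]
        _ = ∑ x, ∑ y, ∑ z, t x y * t z y := sum_comm
        _ = ∑ x, ∑ z, ∑ y, t x y * t z y := sum_congr rfl fun x _ => sum_comm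
        _ = _ := by simp only [hcod]
    rw [h1, ← Fintype.sum_prod_type']
    refine (sum_subset (subset_univ _) fun p _ hp => ?_).symm
    rw [hcod]
    refine sum_eq_zero fun y _ => ?_
    rw [mem_product, not_and_or] at hp
    rcases hp with h | h
    · rw [ht _ _ h, zero_mul]
    · rw [ht _ _ h, mul_zero]
  have h2 : ∑ p ∈ A ×ˢ A, cod p.1 p.2 ^ 2 ≤ ∑ x, ∑ z, cod x z ^ 2 := by
    rw [← Fintype.sum_prod_type']
    exact sum_le_sum_of_subset_of_nonneg (subset_univ _) fun p _ _ => sq_nonneg _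
  have h1 := sq_sum_le_card_mul_sum_sq (s := A ×ˢ A) (f := fun p : V × V => cod p.1 p.2)
  rw [hQ, hW]
  refine h1.trans ?_
  rw [card_product, sq (#A : ℝ), Nat.cast_mul]
  gcongr

/-- The weighted number of links between edges of the graph `a` that meet `A`, where pairs of edges
lying on a common 4-cycle are discounted. -/
lemma sum_links_le [DecidableEq V] (a : V → V → ℝ) (ha : ∀ x y, a x y = 0 ∨ a x y = 1)
    (hsymm : ∀ x y, a x y = a y x) {Δ : ℝ} (hΔ : 0 < Δ) (hrow : ∀ x, ∑ y, a x y ≤ Δ)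
    (A : Finset V) (hA : (#A : ℝ) ≤ 2 * Δ) {d : V → V → ℝ}
    (hd : ∀ x y, d x y = if x ∈ A ∨ y ∈ A then a x y else 0) :
    ∑ p : V × V, ∑ q : V × V, d p.1 p.2 * d q.1 q.2 *
      (((if p.1 = q.1 then 1 else 0) + (if p.1 = q.2 then 1 else 0) +
        (if p.2 = q.1 then 1 else 0) + (if p.2 = q.2 then 1 else 0)) +
        (a p.1 q.1 + a p.1 q.2 + a p.2 q.1 + a p.2 q.2) -
        (a p.1 q.1 * a p.2 q.2 + a p.1 q.2 * a p.2 q.1)) ≤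
      4 * (3 * Δ ^ 4 + 4 * Δ ^ 3) := by
  have ha0 : ∀ x y, 0 ≤ a x y := fun x y => by rcases ha x y with h | h <;> simp [h]
  have ha1 : ∀ x y, a x y ≤ 1 := fun x y => by rcases ha x y with h | h <;> simp [h]
  have hdsymm : ∀ x y, d x y = d y x := fun x y => by simp only [hd, hsymm x y, or_comm]
  obtain ⟨t, ht⟩ : ∃ t : V → V → ℝ, ∀ x y, t x y = if x ∈ A ∧ y ∉ A then a x y else 0 :=
    ⟨_, fun _ _ => rfl⟩
  have ht0 : ∀ x y, 0 ≤ t x y := fun x y => by rw [ht]; split_ifs <;> simp [ha0]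
  have hta : ∀ x y, t x y ≤ a x y := fun x y => by rw [ht]; split_ifs <;> simp [ha0]
  have hd0 : ∀ x y, 0 ≤ d x y := fun x y => by rw [hd]; split_ifs <;> simp [ha0]
  have hda : ∀ x y, d x y ≤ a x y := fun x y => by rw [hd]; split_ifs <;> simp [ha0]
  set w : V → ℝ := fun x => ∑ y, d x y with hw
  set n : V → ℝ := fun y => ∑ x, t x y with hn
  set W : ℝ := ∑ y, n y ^ 2 with hW
  have hw0 : ∀ x, 0 ≤ w x := fun x => sum_nonneg fun y _ => hd0 x y
  have hn0 : ∀ x, 0 ≤ n x := fun x => sum_nonneg fun y _ => ht0 y x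
  have hwΔ : ∀ x, w x ≤ Δ := fun x => (sum_le_sum fun y _ => hda x y).trans (hrow x)
  have hnΔ : ∀ x, n x ≤ Δ := fun x =>
    (sum_le_sum fun y _ => (hta y x).trans (hsymm y x).le).trans (hrow x)
  have hW0 : 0 ≤ W := sum_nonneg fun y _ => sq_nonneg _
  have hw2 : ∑ x, w x ^ 2 ≤ 2 * Δ ^ 3 + W := by
    have h1 : ∀ x, w x ^ 2 ≤ (if x ∈ A then Δ ^ 2 else 0) + n x ^ 2 := fun x => by
      split_ifs with hx
      · have := pow_le_pow_left₀ (hw0 x) (hwΔ x) 2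
        nlinarith [sq_nonneg (n x)]
      · rw [zero_add]
        refine pow_le_pow_left₀ (hw0 x) (sum_le_sum fun y _ => ?_) 2
        simp only [hd, ht, hx, false_or, not_false_eq_true, and_true, hsymm x y, le_refl]
    refine (sum_le_sum fun x _ => h1 x).trans ?_
    rw [sum_add_distrib, sum_ite_mem, univ_inter, sum_const, nsmul_eq_mul]
    nlinarith [sq_nonneg Δ]
  have hWle : W ≤ 2 * Δ ^ 3 := by
    have h1 : ∑ x, ∑ y, t x y ≤ #A * Δ := by
      rw [← nsmul_eq_mul, ← sum_const, ← univ_inter A, ← sum_ite_mem]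
      refine sum_le_sum fun x _ => ?_
      split_ifs with hx
      · exact (sum_le_sum fun y _ => hta x y).trans (hrow x)
      · exact (sum_eq_zero fun y _ => by rw [ht, if_neg fun h => hx h.1]).le
    calc W ≤ ∑ y, Δ * n y := sum_le_sum fun y _ => by
          rw [sq]; exact mul_le_mul_of_nonneg_right (hnΔ y) (hn0 y)
      _ = Δ * ∑ x, ∑ y, t x y := by rw [← mul_sum, sum_comm]
      _ ≤ Δ * (#A * Δ) := by gcongr
      _ ≤ Δ * (2 * Δ * Δ) := by gcongr
      _ = _ := by ring
  have hshare : ∑ x, ∑ z, (if x = z then (1 : ℝ) else 0) * (∑ y, d x y) * ∑ y, d z y ≤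
      4 * Δ ^ 3 := by
    have : ∑ x, ∑ z, (if x = z then (1 : ℝ) else 0) * (∑ y, d x y) * ∑ y, d z y = ∑ x, w x ^ 2 :=
      sum_congr rfl fun x _ => by simp [hw, sq]
    linarith
  have hlink : ∑ x, ∑ z, a x z * (∑ y, d x y) * ∑ y, d z y ≤ Δ * (2 * Δ ^ 3 + W) := by
    have h1 : ∀ x z, a x z * w x * w z ≤ a x z * w x ^ 2 / 2 + a z x * w z ^ 2 / 2 := fun x z => by
      rw [hsymm z x]
      nlinarith [mul_nonneg (ha0 x z) (sq_nonneg (w x - w z))]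
    have h2 : ∑ x, ∑ z, a x z * w x ^ 2 / 2 ≤ Δ * (2 * Δ ^ 3 + W) / 2 := by
      calc _ = ∑ x, (∑ z, a x z) * w x ^ 2 / 2 := by simp only [sum_mul, sum_div]
        _ ≤ ∑ x, Δ * w x ^ 2 / 2 := by
          gcongr with x; exact hrow x
        _ = Δ * (∑ x, w x ^ 2) / 2 := by rw [mul_sum, sum_div]
        _ ≤ _ := by gcongr
    calc _ ≤ ∑ x, ∑ z, (a x z * w x ^ 2 / 2 + a z x * w z ^ 2 / 2) :=
          sum_le_sum fun x _ => sum_le_sum fun z _ => h1 x z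
      _ = ∑ x, ∑ z, a x z * w x ^ 2 / 2 + ∑ x, ∑ z, a x z * w x ^ 2 / 2 := by
          simp only [sum_add_distrib]; rw [sum_comm (f := fun x z => a z x * w z ^ 2 / 2)]
      _ ≤ _ := by linarith
  set Q : ℝ := ∑ p : V × V, ∑ q : V × V,
      t p.1 p.2 * t q.2 p.2 * (t p.1 q.1 * t q.2 q.1) with hQ
  have hQ0 : 0 ≤ Q := sum_nonneg fun p _ => sum_nonneg fun q _ =>
    mul_nonneg (mul_nonneg (ht0 _ _) (ht0 _ _)) (mul_nonneg (ht0 _ _) (ht0 _ _))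
  have hCS : W ^ 2 ≤ (2 * Δ) ^ 2 * Q :=
    (sq_sum_sq_le_mul_sum_cycles A fun x y hx => by rw [ht, if_neg fun h => hx h.1]).trans
      (mul_le_mul_of_nonneg_right (pow_le_pow_left₀ (Nat.cast_nonneg _) hA 2) hQ0)
  have hQ' : ∑ p : V × V, ∑ q : V × V,
      t p.2 p.1 * t q.1 p.1 * (t p.2 q.2 * t q.1 q.2) = Q := by
    have h1 := sum_sum_swap_left fun p q : V × V =>
      t p.1 p.2 * t q.1 p.2 * (t p.1 q.2 * t q.1 q.2)
    have h2 := sum_sum_swap_right fun p q : V × V =>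
      t p.1 p.2 * t q.2 p.2 * (t p.1 q.1 * t q.2 q.1)
    simp only [Prod.fst_swap, Prod.snd_swap] at h1 h2
    rw [h1, h2]
  have hcross : 2 * Q ≤ ∑ p : V × V, ∑ q : V × V,
      d p.1 p.2 * d q.1 q.2 * (a p.1 q.1 * a p.2 q.2) := by
    have h2 := sum_le_sum fun (p : V × V) (_ : p ∈ univ) =>
      sum_le_sum fun (q : V × V) (_ : q ∈ univ) =>
        alternating_cycles_le ha0 hsymm A hd ht p.1 p.2 q.1 q.2
    simp only [sum_add_distrib] at h2
    rw [← hQ, hQ'] at h2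
    linarith
  have hcross' : ∑ p : V × V, ∑ q : V × V, d p.1 p.2 * d q.1 q.2 * (a p.1 q.2 * a p.2 q.1) =
      ∑ p : V × V, ∑ q : V × V, d p.1 p.2 * d q.1 q.2 * (a p.1 q.1 * a p.2 q.2) := by
    have h1 := sum_sum_swap_right fun p q : V × V =>
      d p.1 p.2 * d q.1 q.2 * (a p.1 q.1 * a p.2 q.2)
    simpa only [Prod.fst_swap, Prod.snd_swap, fun p : V × V => hdsymm p.2 p.1] using h1
  have e1 := sum_sum_mul_ends hdsymm fun x z => if x = z then (1 : ℝ) else 0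
  have e2 := sum_sum_mul_ends hdsymm a
  have hsq : Δ * W - Q ≤ Δ ^ 4 := by
    have h1 : 0 < (2 * Δ) ^ 2 := by positivity
    refine le_of_mul_le_mul_left ?_ h1
    nlinarith [sq_nonneg (W - 2 * Δ ^ 3)]
  calc _ = ∑ p : V × V, ∑ q : V × V, d p.1 p.2 * d q.1 q.2 *
        ((if p.1 = q.1 then 1 else 0) + (if p.1 = q.2 then 1 else 0) +
        (if p.2 = q.1 then 1 else 0) + (if p.2 = q.2 then 1 else 0)) +
        ∑ p : V × V, ∑ q : V × V, d p.1 p.2 * d q.1 q.2 *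
        (a p.1 q.1 + a p.1 q.2 + a p.2 q.1 + a p.2 q.2) -
        (∑ p : V × V, ∑ q : V × V, d p.1 p.2 * d q.1 q.2 * (a p.1 q.1 * a p.2 q.2) +
          ∑ p : V × V, ∑ q : V × V, d p.1 p.2 * d q.1 q.2 * (a p.1 q.2 * a p.2 q.1)) := by
        simp only [← sum_add_distrib, ← sum_sub_distrib]
        exact sum_congr rfl fun p _ => sum_congr rfl fun q _ => by ring
    _ ≤ _ := by
      rw [e1, e2, hcross']
      nlinarith

end LinkCount

section LineGraphSquare

variable {V : Type*} {G : SimpleGraph V}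

/-- Edges adjacent in `lineGraphSq G` share a vertex or are joined by an edge. -/
lemma exists_eq_or_adj_of_lineGraphSq_adj {e f : G.edgeSet} (h : (lineGraphSq G).Adj e f) :
    ∃ x ∈ e.1, ∃ y ∈ f.1, x = y ∨ G.Adj x y := by
  obtain ⟨-, ⟨v, h1, h2⟩ | ⟨⟨g, hg⟩, ⟨v, h1, h2⟩, w, h3, h4⟩⟩ := h
  · exact ⟨v, h1, v, h2, Or.inl rfl⟩
  · refine ⟨v, h1, w, h4, ?_⟩
    rcases eq_or_ne v w with h | h
    · exact Or.inl h
    · right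
      have hgvw : g = s(v, w) := (Sym2.mem_and_mem_iff h).1 ⟨h2, h3⟩
      rw [hgvw] at hg
      exact hg

variable [Fintype V] [DecidableEq V] [DecidableRel G.Adj]

/-- The edges adjacent to `e` in `lineGraphSq G` are covered by at most `2 * Δ` vertices. -/
lemma exists_mem_card_le_of_edge (e : G.edgeSet) : ∃ A : Finset V, #A ≤ 2 * G.maxDegree ∧
    ∀ f, (lineGraphSq G).Adj e f → ∃ y ∈ f.1, y ∈ A := by
  obtain ⟨e, he⟩ := e
  induction e using Sym2.ind with
  | _ u v =>
    refine ⟨G.neighborFinset u ∪ G.neighborFinset v, ?_, fun f hf => ?_⟩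
    · refine (card_union_le _ _).trans ?_
      rw [SimpleGraph.card_neighborFinset_eq_degree, SimpleGraph.card_neighborFinset_eq_degree]
      have h1 := G.degree_le_maxDegree u
      have h2 := G.degree_le_maxDegree v
      omega
    · obtain ⟨x, hx, y, hy, hxy⟩ := exists_eq_or_adj_of_lineGraphSq_adj hf
      refine ⟨y, hy, ?_⟩
      have huv : G.Adj u v := he
      simp only [mem_union, SimpleGraph.mem_neighborFinset]
      rcases Sym2.mem_iff.1 hx with rfl | rfl <;> rcases hxy with rfl | h
      · exact Or.inr huv.symm
      · exact Or.inl h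
      · exact Or.inl huv
      · exact Or.inr h

lemma four_mul_card_le_card_darts [DecidableEq G.edgeSet] (S : Finset (G.edgeSet × G.edgeSet)) :
    4 * #S ≤ #{P : (V × V) × (V × V) | ∃ p ∈ S, s(P.1.1, P.1.2) = p.1.1 ∧
      s(P.2.1, P.2.2) = p.2.1} := by
  let T : G.edgeSet × G.edgeSet → Finset ((V × V) × (V × V)) := fun p =>
    {P | s(P.1.1, P.1.2) = p.1.1 ∧ s(P.2.1, P.2.2) = p.2.1}
  have hdisj : (S : Set (G.edgeSet × G.edgeSet)).PairwiseDisjoint T := by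
    intro p _ q _ hpq
    rw [Function.onFun, disjoint_left]
    intro P hp hq
    simp only [T, mem_filter, mem_univ, true_and] at hp hq
    exact hpq (Prod.ext (Subtype.ext (hp.1.symm.trans hq.1)) (Subtype.ext (hp.2.symm.trans hq.2)))
  have hcard : ∀ p ∈ S, 4 ≤ #(T p) := by
    rintro ⟨⟨e, he⟩, f, hf⟩ -
    induction e using Sym2.ind with
    | _ a b =>
      induction f using Sym2.ind with
      | _ c d =>
        have hab : a ≠ b := SimpleGraph.Adj.ne he
        have hcd : c ≠ d := SimpleGraph.Adj.ne hf
        have h4 : #(({(a, b), (b, a)} : Finset (V × V)) ×ˢ ({(c, d), (d, c)} : Finset (V × V)))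
            = 4 := by
          rw [card_product, card_pair (by simp [hab]), card_pair (by simp [hcd])]
        rw [← h4]
        refine card_le_card fun P hP => ?_
        simp only [mem_product, mem_insert, mem_singleton] at hP
        simp only [T, mem_filter, mem_univ, true_and]
        rcases hP with ⟨h1 | h1, h2 | h2⟩ <;> simp [h1, h2, Sym2.eq_swap]
  calc 4 * #S = ∑ p ∈ S, 4 := by rw [sum_const, smul_eq_mul, mul_comm]
    _ ≤ ∑ p ∈ S, #(T p) := sum_le_sum hcard
    _ = #(S.biUnion T) := (card_biUnion hdisj).symm
    _ ≤ _ := card_le_card fun P hP => by simpa [T] using hP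

variable [Fintype G.edgeSet] [DecidableRel (lineGraphSq G).Adj]

lemma degree_lineGraphSq_le (e : G.edgeSet) :
    (lineGraphSq G).degree e ≤ 2 * G.maxDegree ^ 2 := by
  obtain ⟨A, hA, h⟩ := exists_mem_card_le_of_edge e
  rw [← SimpleGraph.card_neighborFinset_eq_degree, ← card_map ⟨_, Subtype.val_injective⟩]
  refine (card_le_card (t := A.biUnion fun a => G.incidenceFinset a) fun f hf => ?_).trans
    ((card_biUnion_le_card_mul _ _ G.maxDegree fun a _ => ?_).trans ?_)
  · obtain ⟨g, hg, rfl⟩ := mem_map.1 hf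
    rw [SimpleGraph.mem_neighborFinset] at hg
    obtain ⟨y, hy, hyA⟩ := h g hg
    refine mem_biUnion.2 ⟨y, hyA, ?_⟩
    rw [SimpleGraph.mem_incidenceFinset]
    exact ⟨g.2, hy⟩
  · rw [SimpleGraph.card_incidenceFinset_eq_degree]
    exact G.degree_le_maxDegree a
  · nlinarith

lemma card_adj_pairs_lineGraphSq_le [DecidableEq G.edgeSet] (hΔ : 0 < G.maxDegree) (e : G.edgeSet) :
    (#{p ∈ (lineGraphSq G).neighborFinset e ×ˢ (lineGraphSq G).neighborFinset e |
      (lineGraphSq G).Adj p.1 p.2} : ℝ) ≤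
      3 * (G.maxDegree : ℝ) ^ 4 + 4 * (G.maxDegree : ℝ) ^ 3 := by
  obtain ⟨A, hA, hAdj⟩ := exists_mem_card_le_of_edge e
  obtain ⟨a, ha⟩ : ∃ a : V → V → ℝ, ∀ x y, a x y = if G.Adj x y then 1 else 0 :=
    ⟨_, fun _ _ => rfl⟩
  obtain ⟨d, hd⟩ : ∃ d : V → V → ℝ, ∀ x y, d x y = if x ∈ A ∨ y ∈ A then a x y else 0 :=
    ⟨_, fun _ _ => rfl⟩
  have ha01 : ∀ x y, a x y = 0 ∨ a x y = 1 := fun x y => by rw [ha]; split_ifs <;> simp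
  have ha0 : ∀ x y, 0 ≤ a x y := fun x y => by rcases ha01 x y with h | h <;> simp [h]
  have ha1 : ∀ x y, a x y ≤ 1 := fun x y => by rcases ha01 x y with h | h <;> simp [h]
  have hd0 : ∀ x y, 0 ≤ d x y := fun x y => by rw [hd]; split_ifs <;> simp [ha0]
  have key := sum_links_le a ha01 (fun x y => by simp only [ha, G.adj_comm])
    (Δ := G.maxDegree) (by exact_mod_cast hΔ)
    (fun x => by
      simp only [ha, sum_boole, ← SimpleGraph.neighborFinset_eq_filter,
        SimpleGraph.card_neighborFinset_eq_degree]
      exact_mod_cast G.degree_le_maxDegree x) A (by exact_mod_cast hA) hd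
  set S := {p ∈ (lineGraphSq G).neighborFinset e ×ˢ (lineGraphSq G).neighborFinset e |
      (lineGraphSq G).Adj p.1 p.2} with hS
  have h4 : (4 * #S : ℝ) ≤ #{P : (V × V) × (V × V) | ∃ p ∈ S, s(P.1.1, P.1.2) = p.1.1 ∧
      s(P.2.1, P.2.2) = p.2.1} := by exact_mod_cast four_mul_card_le_card_darts S
  have h5 : (#{P : (V × V) × (V × V) | ∃ p ∈ S, s(P.1.1, P.1.2) = p.1.1 ∧
      s(P.2.1, P.2.2) = p.2.1} : ℝ) ≤ 4 * (3 * (G.maxDegree : ℝ) ^ 4 + 4 * G.maxDegree ^ 3) := by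
    refine le_trans ?_ key
    rw [← sum_boole, Fintype.sum_prod_type]
    refine sum_le_sum fun P _ => sum_le_sum fun Q _ => ?_
    obtain ⟨x, y⟩ := P
    obtain ⟨x', y'⟩ := Q
    dsimp only
    have hx1 : a x x' * a y y' ≤ a x x' := mul_le_of_le_one_right (ha0 _ _) (ha1 _ _)
    have hx2 : a x x' * a y y' ≤ a y y' := mul_le_of_le_one_left (ha0 _ _) (ha1 _ _)
    have hx3 : a x y' * a y x' ≤ a x y' := mul_le_of_le_one_right (ha0 _ _) (ha1 _ _)
    have hx4 : a x y' * a y x' ≤ a y x' := mul_le_of_le_one_left (ha0 _ _) (ha1 _ _)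
    have hb1 := ha0 x x'
    have hb2 := ha0 x y'
    have hb3 := ha0 y x'
    have hb4 := ha0 y y'
    have hi : ∀ u v : V, (0 : ℝ) ≤ if u = v then 1 else 0 := fun u v => by split_ifs <;> norm_num
    have hc1 := hi x x'
    have hc2 := hi x y'
    have hc3 := hi y x'
    have hc4 := hi y y'
    by_cases h : ∃ p ∈ S, s(x, y) = p.1.1 ∧ s(x', y') = p.2.1
    · rw [if_pos h]
      obtain ⟨⟨⟨f, hf⟩, ⟨f', hf'⟩⟩, hp, h1, h2⟩ := h
      dsimp only at h1 h2
      subst h1 h2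
      simp only [hS, mem_filter, mem_product, SimpleGraph.mem_neighborFinset] at hp
      obtain ⟨⟨he1, he2⟩, hff⟩ := hp
      have hdf : d x y = 1 := by
        obtain ⟨z, hz, hzA⟩ := hAdj _ he1
        have hxy : G.Adj x y := hf
        rw [hd, ha, if_pos hxy, if_pos]
        rcases Sym2.mem_iff.1 hz with rfl | rfl
        · exact Or.inl hzA
        · exact Or.inr hzA
      have hdf' : d x' y' = 1 := by
        obtain ⟨z, hz, hzA⟩ := hAdj _ he2
        have hxy : G.Adj x' y' := hf'
        rw [hd, ha, if_pos hxy, if_pos]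
        rcases Sym2.mem_iff.1 hz with rfl | rfl
        · exact Or.inl hzA
        · exact Or.inr hzA
      rw [hdf, hdf']
      obtain ⟨z, hz, z', hz', hzz⟩ := exists_eq_or_adj_of_lineGraphSq_adj hff
      have hlink : z = z' → (if z = z' then (1 : ℝ) else 0) = 1 := fun h => if_pos h
      have hadj : G.Adj z z' → a z z' = 1 := fun h => by rw [ha, if_pos h]
      rcases Sym2.mem_iff.1 hz with rfl | rfl <;> rcases Sym2.mem_iff.1 hz' with rfl | rfl <;>
        rcases hzz with h | h <;> first | (have h' := hlink h; linarith) | (have h' := hadj h; linarith)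
    · rw [if_neg h]
      exact mul_nonneg (mul_nonneg (hd0 _ _) (hd0 _ _)) (by linarith)
  linarith

end LineGraphSquare

/-- The strong chromatic index of a graph `G` of sufficiently large maximum degree `Δ` is
at most `1.93 * Δ ^ 2`. -/
theorem strong_chromatic_index_le :
    ∃ Δ₀ : ℕ, ∀ (V : Type) [Fintype V] [DecidableEq V]
      (G : SimpleGraph V) [DecidableRel G.Adj],
      Δ₀ ≤ G.maxDegree →
      ∃ n : ℕ, (n : ℝ) ≤ 1.93 * (G.maxDegree : ℝ) ^ 2 ∧ (lineGraphSq G).Colorable n := by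
  classical
  obtain ⟨r₀, h⟩ := exists_forall_colorable_of_degree_le
  refine ⟨max r₀ 1000, fun V _ _ G _ hG => ?_⟩
  have hG1 : r₀ ≤ G.maxDegree := le_of_max_le_left hG
  have hG2 : 1000 ≤ G.maxDegree := le_of_max_le_right hG
  have hG3 : (1000 : ℝ) ≤ G.maxDegree := by exact_mod_cast hG2
  refine ⟨⌊0.965 * ((2 * G.maxDegree ^ 2 : ℕ) : ℝ)⌋₊, ?_,
    h _ (by nlinarith) _ (lineGraphSq G) degree_lineGraphSq_le fun e => ?_⟩
  · refine (Nat.floor_le (by positivity)).trans (le_of_eq ?_)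
    push_cast; ring
  · refine (card_adj_pairs_lineGraphSq_le (by omega) e).trans ?_
    push_cast
    nlinarith [pow_pos (by linarith : (0 : ℝ) < G.maxDegree) 3]
end

section
/- Let G be a simple graph of maximum degree Δ ≥ 1, and let e be an edge of G. Then the strong neighborhood N^s_e of e induces in L²(G) a graph with at most (3/2)·Δ⁴ + 5·Δ³ edges. -/
namespace SimpleGraph

open Finset

lemma exists_adj_of_lineGraphSq_adj {V : Type*} {G : SimpleGraph V}
    {f g : G.edgeSet} (h : (lineGraphSq G).Adj f g) :
    ∃ v ∈ f.1, ∃ w ∈ g.1, G.Adj v w := by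
  have other : ∀ (f : G.edgeSet) (v : V), v ∈ f.1 → ∃ w ∈ f.1, G.Adj v w := by
    rintro ⟨f, hf⟩ v hv
    obtain ⟨w, rfl⟩ := Sym2.mem_iff_exists.1 hv
    exact ⟨w, Sym2.mem_mk_right _ _, hf⟩
  rcases h.2 with ⟨v, hv, hv'⟩ | ⟨⟨i, hi⟩, ⟨v, hv, hv'⟩, ⟨w, hw, hw'⟩⟩
  · obtain ⟨w, hw, hadj⟩ := other g v hv'
    exact ⟨v, hv, w, hw, hadj⟩
  · by_cases hvw : v = w
    · subst hvw
      obtain ⟨w, hw, hadj⟩ := other g v hw'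
      exact ⟨v, hv, w, hw, hadj⟩
    · refine ⟨v, hv, w, hw', ?_⟩
      rwa [← mem_edgeSet, ← (Sym2.mem_and_mem_iff hvw).1 ⟨hv', hw⟩]

variable {V : Type*} [Fintype V] [DecidableEq V] (G : SimpleGraph V) [DecidableRel G.Adj]
  (A : Finset V)

/-- The neighbors of `v` inside `A`. -/
def innerNeighbors (v : V) : Finset V := G.neighborFinset v ∩ A

/-- The neighbors of `v` outside `A`. -/
def outerNeighbors (v : V) : Finset V := G.neighborFinset v \ A

/-- The edges leaving `A`, oriented away from `A`. -/
def outerDarts : Finset (Σ _ : V, V) := A.sigma fun a => G.outerNeighbors A a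

/-- The edges with both ends in `A`. -/
def innerEdges : Finset (Sym2 V) := G.edgeFinset.filter fun f => ∀ v ∈ f, v ∈ A

variable {G A}

lemma mem_innerNeighbors {v w : V} : w ∈ G.innerNeighbors A v ↔ G.Adj v w ∧ w ∈ A := by
  simp [innerNeighbors]

lemma mem_outerNeighbors {v w : V} : w ∈ G.outerNeighbors A v ↔ G.Adj v w ∧ w ∉ A := by
  simp [outerNeighbors]

lemma mem_outerDarts {p : Σ _ : V, V} :
    p ∈ G.outerDarts A ↔ p.1 ∈ A ∧ G.Adj p.1 p.2 ∧ p.2 ∉ A := by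
  simp [outerDarts, mem_outerNeighbors]

variable (G A)

lemma card_innerNeighbors_add_card_outerNeighbors_le (v : V) :
    #(G.innerNeighbors A v) + #(G.outerNeighbors A v) ≤ G.maxDegree := by
  rw [innerNeighbors, outerNeighbors, card_inter_add_card_sdiff, card_neighborFinset_eq_degree]
  exact G.degree_le_maxDegree v

lemma two_mul_card_innerEdges :
    2 * #(G.innerEdges A) = ∑ a ∈ A, #(G.innerNeighbors A a) := by
  classical
  let H : SimpleGraph V :=
    { Adj := fun a b => G.Adj a b ∧ a ∈ A ∧ b ∈ A
      symm := ⟨fun a b h => ⟨h.1.symm, h.2.2, h.2.1⟩⟩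
      loopless := ⟨fun a h => G.loopless.irrefl a h.1⟩ }
  have hE : G.innerEdges A = H.edgeFinset := by
    ext f
    induction f with
    | _ a b => simp [innerEdges, H]
  rw [hE, ← H.sum_degrees_eq_twice_card_edges, ← Finset.sum_subset (subset_univ A)]
  · refine Finset.sum_congr rfl fun a ha => ?_
    rw [← card_neighborFinset_eq_degree]
    congr 1
    ext b
    simp [mem_innerNeighbors, H, ha]
  · intro a _ ha
    rw [← card_neighborFinset_eq_degree, card_eq_zero, eq_empty_iff_forall_notMem]
    intro b
    simp [H, ha]

lemma sum_outerDarts_fst (F : V → ℝ) :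
    ∑ p ∈ G.outerDarts A, F p.1 = ∑ a ∈ A, #(G.outerNeighbors A a) * F a := by
  rw [outerDarts, sum_sigma]
  simp

lemma sum_outerDarts_snd (F : V → ℝ) :
    ∑ p ∈ G.outerDarts A, F p.2 = ∑ b ∈ Aᶜ, #(G.innerNeighbors A b) * F b := by
  rw [outerDarts, sum_sigma, sum_comm' (t' := Aᶜ) (s' := fun b => G.innerNeighbors A b)]
  · simp
  · intro a b
    simp [mem_outerNeighbors, mem_innerNeighbors, G.adj_comm a b]
    tauto

lemma card_outerDarts : (#(G.outerDarts A) : ℝ) = ∑ a ∈ A, (#(G.outerNeighbors A a) : ℝ) := by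
  simp [outerDarts]

/-- Counting paths of length two between vertices of `A` through vertices outside `A`. -/
lemma sum_card_inter_outerNeighbors :
    ∑ a ∈ A, ∑ c ∈ A, (#(G.outerNeighbors A a ∩ G.outerNeighbors A c) : ℝ) =
      ∑ b ∈ Aᶜ, (#(G.innerNeighbors A b) : ℝ) ^ 2 := by
  have h : ∀ a ∈ A, ∑ c ∈ A, (#(G.outerNeighbors A a ∩ G.outerNeighbors A c) : ℝ) =
      ∑ b ∈ G.outerNeighbors A a, (#(G.innerNeighbors A b) : ℝ) := by
    intro a _
    simp only [card_eq_sum_ones, Nat.cast_sum, Nat.cast_one]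
    apply sum_comm'
    intro c b
    simp [mem_outerNeighbors, mem_innerNeighbors, G.adj_comm c b]
    tauto
  rw [sum_congr rfl h, ← sum_sigma A (fun a => G.outerNeighbors A a)
    (fun p => (#(G.innerNeighbors A p.2) : ℝ))]
  exact (G.sum_outerDarts_snd A fun b => (#(G.innerNeighbors A b) : ℝ)).trans
    (sum_congr rfl fun b _ => by ring)

/-- Pairs of outward darts in which one tail is adjacent to the other head. -/
lemma card_crossing_pairs :
    (#{q ∈ G.outerDarts A ×ˢ G.outerDarts A | G.Adj q.1.2 q.2.1 ∨ G.Adj q.1.1 q.2.2} : ℝ) =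
      ∑ a ∈ A, ∑ c ∈ A, ((#(G.outerNeighbors A a ∩ G.outerNeighbors A c) : ℝ) *
        (#(G.outerNeighbors A a) + #(G.outerNeighbors A c)) -
        (#(G.outerNeighbors A a ∩ G.outerNeighbors A c) : ℝ) ^ 2) := by
  have key : ∀ S T : Finset V, (#{q ∈ S ×ˢ T | q.1 ∈ T ∨ q.2 ∈ S} : ℝ) =
      (#(S ∩ T) : ℝ) * (#S + #T) - (#(S ∩ T) : ℝ) ^ 2 := by
    intro S T
    have h1 := card_filter_add_card_filter_not (s := S ×ˢ T) (fun q => q.1 ∈ T ∨ q.2 ∈ S)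
    have h2 : {q ∈ S ×ˢ T | ¬ (q.1 ∈ T ∨ q.2 ∈ S)} = (S \ T) ×ˢ (T \ S) := by
      ext q
      simp
      tauto
    have h3 := card_inter_add_card_sdiff S T
    have h4 := card_inter_add_card_sdiff T S
    rw [inter_comm] at h4
    rw [h2, card_product, card_product] at h1
    have h1' : (#{q ∈ S ×ˢ T | q.1 ∈ T ∨ q.2 ∈ S} : ℝ) + #(S \ T) * #(T \ S) = #S * #T := by
      exact_mod_cast h1
    have h3' : (#(S ∩ T) : ℝ) + #(S \ T) = #S := by exact_mod_cast h3
    have h4' : (#(S ∩ T) : ℝ) + #(T \ S) = #T := by exact_mod_cast h4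
    rw [← h3', ← h4'] at h1' ⊢
    linarith
  simp only [← key]
  rw [← sum_product', card_eq_sum_card_fiberwise (t := A ×ˢ A) (f := fun q => (q.1.1, q.2.1))]
  · push_cast
    refine sum_congr rfl fun ac hac => ?_
    obtain ⟨a, c⟩ := ac
    rw [mem_product] at hac
    norm_cast
    refine card_bij (fun q _ => (q.1.2, q.2.2)) ?_ ?_ ?_
    · rintro ⟨⟨a', b⟩, ⟨c', d⟩⟩ h
      simp only [mem_filter, mem_product, mem_outerDarts, Prod.mk.injEq] at h
      obtain ⟨⟨h, h'⟩, rfl, rfl⟩ := h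
      simp only [mem_filter, mem_product, mem_outerNeighbors]
      refine ⟨⟨h.1.2, h.2.2⟩, h'.imp (fun t => ⟨t.symm, h.1.2.2⟩) (fun t => ⟨t, h.2.2.2⟩)⟩
    · rintro ⟨⟨a', b⟩, ⟨c', d⟩⟩ h ⟨⟨a'', b'⟩, ⟨c'', d'⟩⟩ h' heq
      simp only [mem_filter, Prod.mk.injEq] at h h' heq
      obtain ⟨_, rfl, rfl⟩ := h
      obtain ⟨_, rfl, rfl⟩ := h'
      obtain ⟨rfl, rfl⟩ := heq
      rfl
    · rintro ⟨b, d⟩ h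
      simp only [mem_filter, mem_product, mem_outerNeighbors] at h
      refine ⟨(⟨a, b⟩, ⟨c, d⟩), ?_, rfl⟩
      simp only [mem_filter, mem_product, mem_outerDarts, and_true]
      exact ⟨⟨⟨hac.1, h.1.1⟩, ⟨hac.2, h.1.2⟩⟩,
        h.2.imp (fun t => t.1.symm) (fun t => t.1)⟩
  · intro q hq
    simp only [coe_filter, Set.mem_ofPred_eq, mem_product, mem_outerDarts] at hq
    simp [hq.1.1.1, hq.1.2.1]

lemma card_filter_product_le {α : Type*} (s : Finset α) (r : α → α → Prop)
    [DecidableRel r] (F : α → ℝ) (h : ∀ p ∈ s, (#{q ∈ s | r p q} : ℝ) ≤ F p) :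
    (#{q ∈ s ×ˢ s | r q.1 q.2} : ℝ) ≤ ∑ p ∈ s, F p := by
  refine le_trans (le_of_eq ?_) (sum_le_sum h)
  rw [card_filter, sum_product, Nat.cast_sum]
  exact sum_congr rfl fun p _ => by rw [card_filter]

/-- Pairs of outward darts with adjacent heads. -/
lemma card_pairs_adj_snd_le :
    (#{q ∈ G.outerDarts A ×ˢ G.outerDarts A | G.Adj q.1.2 q.2.2} : ℝ) ≤
      ∑ b ∈ Aᶜ, (#(G.innerNeighbors A b) : ℝ) *
        ((G.maxDegree - #(G.innerNeighbors A b)) * G.maxDegree) := by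
  rw [← sum_outerDarts_snd G A
    fun b => ((G.maxDegree - #(G.innerNeighbors A b) : ℝ) * G.maxDegree)]
  refine card_filter_product_le _ (fun p q : Σ _ : V, V => G.Adj p.2 q.2) _ fun p _ => ?_
  have hsub : #{q ∈ G.outerDarts A | G.Adj p.2 q.2} ≤
      #((G.outerNeighbors A p.2).sigma fun d => G.innerNeighbors A d) := by
    refine card_le_card_of_injOn (fun q => ⟨q.2, q.1⟩) ?_ ?_
    · intro q hq
      simp only [coe_filter, Set.mem_ofPred_eq, mem_outerDarts] at hq
      simp [mem_outerNeighbors, mem_innerNeighbors, hq.1.1, hq.1.2.1.symm, hq.1.2.2, hq.2]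
    · rintro ⟨a, b⟩ _ ⟨c, d⟩ _ h
      simp at h
      simp [h]
  rw [card_sigma] at hsub
  have h2 : ∑ d ∈ G.outerNeighbors A p.2, #(G.innerNeighbors A d) ≤
      #(G.outerNeighbors A p.2) * G.maxDegree := by
    refine sum_le_card_nsmul _ _ G.maxDegree fun d _ => ?_
    exact le_trans (Nat.le_add_right _ _) (G.card_innerNeighbors_add_card_outerNeighbors_le A d)
  have h3 : (#(G.innerNeighbors A p.2) : ℝ) + #(G.outerNeighbors A p.2) ≤ G.maxDegree := by
    exact_mod_cast G.card_innerNeighbors_add_card_outerNeighbors_le A p.2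
  calc (#{q ∈ G.outerDarts A | G.Adj p.2 q.2} : ℝ)
      ≤ #(G.outerNeighbors A p.2) * G.maxDegree := by exact_mod_cast hsub.trans h2
    _ ≤ _ := by
      gcongr
      linarith

/-- Pairs of outward darts with adjacent tails. -/
lemma card_pairs_adj_fst_le :
    (#{q ∈ G.outerDarts A ×ˢ G.outerDarts A | G.Adj q.1.1 q.2.1} : ℝ) ≤
      ∑ a ∈ A, (#(G.outerNeighbors A a) : ℝ) *
        (#(G.innerNeighbors A a) * G.maxDegree) := by
  rw [← sum_outerDarts_fst G A fun a => (#(G.innerNeighbors A a) * G.maxDegree : ℝ)]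
  refine card_filter_product_le _ (fun p q : Σ _ : V, V => G.Adj p.1 q.1) _ fun p _ => ?_
  have hsub : #{q ∈ G.outerDarts A | G.Adj p.1 q.1} ≤
      #((G.innerNeighbors A p.1).sigma fun d => G.outerNeighbors A d) := by
    refine card_le_card fun q hq => ?_
    simp only [mem_filter, mem_outerDarts] at hq
    simp [mem_outerNeighbors, mem_innerNeighbors, hq.1.1, hq.1.2.1, hq.1.2.2, hq.2]
  rw [card_sigma] at hsub
  have h2 : ∑ d ∈ G.innerNeighbors A p.1, #(G.outerNeighbors A d) ≤
      #(G.innerNeighbors A p.1) * G.maxDegree := by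
    refine sum_le_card_nsmul _ _ G.maxDegree fun d _ => ?_
    exact le_trans (Nat.le_add_left _ _) (G.card_innerNeighbors_add_card_outerNeighbors_le A d)
  exact_mod_cast hsub.trans h2

/-- The optimization behind the edge bound: `k` and `o` are the inner and outer degrees and
`x` the outer codegrees of the vertices of `A`. -/
lemma degree_optimization {α : Type*} (A : Finset α) (k o : α → ℝ) (x : α → α → ℝ) (D : ℝ)
    (hA : (#A : ℝ) ≤ 2 * D) (hk : ∀ a, 0 ≤ k a) (hx : ∀ a c, 0 ≤ x a c)
    (hko : ∀ a, k a + o a ≤ D) :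
    ∑ a ∈ A, ∑ c ∈ A, (x a c * (o a + o c) - x a c ^ 2) +
      (D ^ 2 * ∑ a ∈ A, o a - D * ∑ a ∈ A, ∑ c ∈ A, x a c) +
      ∑ a ∈ A, o a * (k a * D) + (∑ a ∈ A, k a) * (∑ a ∈ A, o a) + (∑ a ∈ A, k a) ^ 2 / 4 ≤
      3 * D ^ 4 := by
  have hn : (0 : ℝ) ≤ #A := Nat.cast_nonneg _
  have hD : 0 ≤ D := by linarith
  have hK : 0 ≤ ∑ a ∈ A, k a := sum_nonneg fun a _ => hk a
  have hK2 : 0 ≤ ∑ a ∈ A, k a ^ 2 := sum_nonneg fun a _ => sq_nonneg _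
  have hO : ∑ a ∈ A, o a ≤ #A * D - ∑ a ∈ A, k a := by
    rw [← nsmul_eq_mul, ← sum_const, ← sum_sub_distrib]
    exact sum_le_sum fun a _ => by linarith [hko a]
  have hOK : ∑ a ∈ A, o a * (k a * D) ≤ D ^ 2 * ∑ a ∈ A, k a - D * ∑ a ∈ A, k a ^ 2 := by
    rw [mul_sum, mul_sum, ← sum_sub_distrib]
    refine sum_le_sum fun a _ => ?_
    nlinarith [mul_le_mul_of_nonneg_right (hko a) (mul_nonneg (hk a) hD)]
  have hX : ∑ a ∈ A, ∑ c ∈ A, (x a c * (o a + o c) - x a c ^ 2) -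
      D * ∑ a ∈ A, ∑ c ∈ A, x a c ≤ ∑ a ∈ A, ∑ c ∈ A, (D - k a - k c) ^ 2 / 4 := by
    simp only [mul_sum, ← sum_sub_distrib]
    refine sum_le_sum fun a _ => sum_le_sum fun c _ => ?_
    nlinarith [sq_nonneg (x a c - (D - k a - k c) / 2),
      mul_le_mul_of_nonneg_left (add_le_add (hko a) (hko c)) (hx a c)]
  have hsq : ∑ a ∈ A, ∑ c ∈ A, (D - k a - k c) ^ 2 / 4 =
      (#A : ℝ) ^ 2 * D ^ 2 / 4 - #A * D * ∑ a ∈ A, k a + #A * (∑ a ∈ A, k a ^ 2) / 2 +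
        (∑ a ∈ A, k a) ^ 2 / 2 := by
    have h1 : ∀ a c, (D - k a - k c) ^ 2 / 4 = D ^ 2 / 4 - D / 2 * k a + 1 / 4 * k a ^ 2 +
        (-(D / 2)) * k c + 1 / 4 * k c ^ 2 + 1 / 2 * (k a * k c) := fun a c => by ring
    simp only [h1, sum_add_distrib, sum_sub_distrib, ← mul_sum, ← sum_mul, sum_const,
      nsmul_eq_mul]
    ring
  have hDO := mul_le_mul_of_nonneg_left hO (sq_nonneg D)
  have hKO := mul_le_mul_of_nonneg_left hO hK
  have hnK := mul_le_mul_of_nonneg_right hA hK2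
  have hnD : (#A : ℝ) * D ^ 3 ≤ 2 * D * D ^ 3 :=
    mul_le_mul_of_nonneg_right hA (pow_nonneg hD 3)
  have hnn : (#A : ℝ) ^ 2 * D ^ 2 ≤ (2 * D) ^ 2 * D ^ 2 := by gcongr
  nlinarith [sq_nonneg (∑ a ∈ A, k a)]

/-- The ordered pairs of strongly adjacent edges leaving `A`, together with all the pairs
containing an edge inside `A`, number at most `3 Δ⁴`. -/
lemma card_pairs_le (hA : #A ≤ 2 * G.maxDegree) :
    (#{q ∈ G.outerDarts A ×ˢ G.outerDarts A | (G.Adj q.1.2 q.2.1 ∨ G.Adj q.1.1 q.2.2) ∨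
        G.Adj q.1.2 q.2.2 ∨ G.Adj q.1.1 q.2.1} : ℝ) +
      2 * #(G.innerEdges A) * #(G.outerDarts A) + (#(G.innerEdges A) : ℝ) ^ 2 ≤
      3 * (G.maxDegree : ℝ) ^ 4 := by
  have hopt := degree_optimization A (fun a => (#(G.innerNeighbors A a) : ℝ))
    (fun a => (#(G.outerNeighbors A a) : ℝ))
    (fun a c => (#(G.outerNeighbors A a ∩ G.outerNeighbors A c) : ℝ)) G.maxDegree
    (by exact_mod_cast hA) (fun _ => Nat.cast_nonneg _) (fun _ _ => Nat.cast_nonneg _)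
    (fun a => by exact_mod_cast G.card_innerNeighbors_add_card_outerNeighbors_le A a)
  have hI : 2 * (#(G.innerEdges A) : ℝ) = ∑ a ∈ A, (#(G.innerNeighbors A a) : ℝ) := by
    exact_mod_cast G.two_mul_card_innerEdges A
  have hm : (#(G.outerDarts A) : ℝ) = ∑ b ∈ Aᶜ, (#(G.innerNeighbors A b) : ℝ) := by
    simpa using G.sum_outerDarts_snd A fun _ => 1
  have hsnd : ∑ b ∈ Aᶜ, (#(G.innerNeighbors A b) : ℝ) *
      ((G.maxDegree - #(G.innerNeighbors A b)) * G.maxDegree) =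
      (G.maxDegree : ℝ) ^ 2 * #(G.outerDarts A) -
        G.maxDegree * ∑ b ∈ Aᶜ, (#(G.innerNeighbors A b) : ℝ) ^ 2 := by
    rw [hm, mul_sum, mul_sum, ← sum_sub_distrib]
    exact sum_congr rfl fun b _ => by ring
  have h1 := G.card_crossing_pairs A
  have h2 := G.card_pairs_adj_snd_le A
  have h3 := G.card_pairs_adj_fst_le A
  rw [hsnd] at h2
  rw [← h1, sum_card_inter_outerNeighbors, ← hI, ← card_outerDarts] at hopt
  have hunion : (#{q ∈ G.outerDarts A ×ˢ G.outerDarts A |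
        (G.Adj q.1.2 q.2.1 ∨ G.Adj q.1.1 q.2.2) ∨ G.Adj q.1.2 q.2.2 ∨ G.Adj q.1.1 q.2.1} : ℝ) ≤
      #{q ∈ G.outerDarts A ×ˢ G.outerDarts A | G.Adj q.1.2 q.2.1 ∨ G.Adj q.1.1 q.2.2} +
      (#{q ∈ G.outerDarts A ×ˢ G.outerDarts A | G.Adj q.1.2 q.2.2} +
      #{q ∈ G.outerDarts A ×ˢ G.outerDarts A | G.Adj q.1.1 q.2.1}) := by
    rw [filter_or, filter_or (fun q : (Σ _ : V, V) × (Σ _ : V, V) => G.Adj q.1.2 q.2.2)]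
    exact_mod_cast (card_union_le _ _).trans (Nat.add_le_add_left (card_union_le _ _) _)
  linarith

variable {G A}

lemma mem_innerEdges_or_exists_outerDart {f : Sym2 V} (hf : f ∈ G.edgeSet)
    (hfA : ∃ v ∈ f, v ∈ A) :
    f ∈ G.innerEdges A ∨ ∃ p ∈ G.outerDarts A, s(p.1, p.2) = f := by
  obtain ⟨a, haf, haA⟩ := hfA
  obtain ⟨b, rfl⟩ := Sym2.mem_iff_exists.1 haf
  rw [mem_edgeSet] at hf
  by_cases hb : b ∈ A
  · left
    simp [innerEdges, hf, haA, hb]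
  · exact Or.inr ⟨⟨a, b⟩, mem_outerDarts.2 ⟨haA, hf, hb⟩, rfl⟩

/-- A set of ordered pairs of strongly adjacent edges, all meeting a set of at most `2Δ`
vertices, has at most `3 Δ⁴` elements. -/
lemma card_strongly_adjacent_pairs_le (hA : #A ≤ 2 * G.maxDegree)
    (R : Finset (Sym2 V × Sym2 V))
    (hR : ∀ q ∈ R, (q.1 ∈ G.edgeSet ∧ ∃ v ∈ q.1, v ∈ A) ∧
      (q.2 ∈ G.edgeSet ∧ ∃ v ∈ q.2, v ∈ A) ∧ ∃ v ∈ q.1, ∃ w ∈ q.2, G.Adj v w) :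
    (#R : ℝ) ≤ 3 * (G.maxDegree : ℝ) ^ 4 := by
  set I := G.innerEdges A
  set P := G.outerDarts A
  set O : Finset (Sym2 V) := P.image fun p => s(p.1, p.2)
  set T := {q ∈ P ×ˢ P | (G.Adj q.1.2 q.2.1 ∨ G.Adj q.1.1 q.2.2) ∨
        G.Adj q.1.2 q.2.2 ∨ G.Adj q.1.1 q.2.1}
  have hsub : R ⊆ T.image (fun q => (s(q.1.1, q.1.2), s(q.2.1, q.2.2))) ∪
      (I ×ˢ O ∪ (O ×ˢ I ∪ I ×ˢ I)) := by
    rintro ⟨f, g⟩ hq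
    obtain ⟨⟨hf, hfA⟩, ⟨hg, hgA⟩, v, hv, w, hw, hadj⟩ := hR _ hq
    dsimp only at hf hfA hg hgA hv hw
    rcases mem_innerEdges_or_exists_outerDart hf hfA with hfI | ⟨p, hp, rfl⟩ <;>
      rcases mem_innerEdges_or_exists_outerDart hg hgA with hgI | ⟨p', hp', rfl⟩
    · simp [I, hfI, hgI]
    · have : s(p'.1, p'.2) ∈ O := mem_image_of_mem _ hp'
      simp only [mem_union, mem_product]
      exact Or.inr (Or.inl ⟨hfI, this⟩)
    · have : s(p.1, p.2) ∈ O := mem_image_of_mem _ hp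
      simp only [mem_union, mem_product]
      exact Or.inr (Or.inr (Or.inl ⟨this, hgI⟩))
    · refine mem_union_left _ (mem_image.2 ⟨(p, p'), ?_, rfl⟩)
      refine mem_filter.2 ⟨mem_product.2 ⟨hp, hp'⟩, ?_⟩
      rw [Sym2.mem_iff] at hv hw
      rcases hv with rfl | rfl <;> rcases hw with rfl | rfl <;> simp [hadj]
  have hcard : #R ≤ #T + (#I * #P + (#P * #I + #I * #I)) := by
    have hOP : #O ≤ #P := card_image_le
    refine (card_le_card hsub).trans ((card_union_le _ _).trans
      (add_le_add card_image_le ((card_union_le _ _).trans (add_le_add ?_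
        ((card_union_le _ _).trans (add_le_add ?_ ?_))))))
    · rw [card_product]
      gcongr
    · rw [card_product]
      gcongr
    · rw [card_product]
  have hcard' : (#R : ℝ) ≤ #T + (#I * #P + (#P * #I + #I * #I)) := by exact_mod_cast hcard
  have := G.card_pairs_le A hA
  linarith

end SimpleGraph

/-- If `G` has maximum degree `Δ ≥ 1` and `e` is an edge of `G`, then the strong
neighborhood of `e` (its neighborhood in `L²(G)`) induces in `L²(G)` a graph with at
most `(3/2)Δ⁴ + 5Δ³` edges. -/
theorem strong_neighborhood_sparse (V : Type) [Fintype V] [DecidableEq V]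
    (G : SimpleGraph V) [DecidableRel G.Adj] (hΔ : 1 ≤ G.maxDegree) (e : G.edgeSet) :
    ((((lineGraphSq G).induce ((lineGraphSq G).neighborSet e)).edgeSet.ncard : ℝ)) ≤
      3 / 2 * (G.maxDegree : ℝ) ^ 4 + 5 * (G.maxDegree : ℝ) ^ 3 := by
  classical
  obtain ⟨⟨u, v⟩, he⟩ := e
  set e : G.edgeSet := ⟨s(u, v), he⟩
  set A : Finset V := G.neighborFinset u ∪ G.neighborFinset v with hAdef
  have hA : A.card ≤ 2 * G.maxDegree := by
    refine (Finset.card_union_le _ _).trans ?_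
    rw [G.card_neighborFinset_eq_degree, G.card_neighborFinset_eq_degree]
    linarith [G.degree_le_maxDegree u, G.degree_le_maxDegree v]
  have hmeet : ∀ f : G.edgeSet, (lineGraphSq G).Adj e f → ∃ w ∈ f.1, w ∈ A := by
    intro f hf
    obtain ⟨z, hz, w, hw, hadj⟩ := SimpleGraph.exists_adj_of_lineGraphSq_adj hf
    refine ⟨w, hw, ?_⟩
    rcases Sym2.mem_iff.1 hz with rfl | rfl <;> simp [hAdef, hadj]
  set H := (lineGraphSq G).induce ((lineGraphSq G).neighborSet e)
  let φ : H.Dart → Sym2 V × Sym2 V := fun d => (d.fst.1.1, d.snd.1.1)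
  have hφ : Function.Injective φ := by
    intro d d' h
    simp only [φ, Prod.mk.injEq] at h
    exact SimpleGraph.Dart.ext _ _ (Prod.ext (Subtype.ext (Subtype.ext h.1))
      (Subtype.ext (Subtype.ext h.2)))
  have hR := SimpleGraph.card_strongly_adjacent_pairs_le hA (Finset.univ.image φ) (by
    intro q hq
    obtain ⟨d, -, rfl⟩ := Finset.mem_image.1 hq
    exact ⟨⟨d.fst.1.2, hmeet _ d.fst.2⟩, ⟨d.snd.1.2, hmeet _ d.snd.2⟩,
      SimpleGraph.exists_adj_of_lineGraphSq_adj (SimpleGraph.induce_adj.1 d.adj)⟩)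
  rw [Finset.card_image_of_injective _ hφ, Finset.card_univ, H.dart_card_eq_twice_card_edges]
    at hR
  rw [← H.coe_edgeFinset, Set.ncard_coe_finset]
  push_cast at hR
  have : (0 : ℝ) ≤ (G.maxDegree : ℝ) ^ 3 := by positivity
  linarith
end

section
/- If G is a simple graph with maximum degree Δ ≥ 400, then every strong clique of G has size at most 1.74·Δ², i.e., ω(L²(G)) ≤ 1.74·Δ². -/
/-- A clamped linear weight: for an edge whose end vertices see proportions `s` and `t` of a set
they jointly cover, the weights of `s` and `t` add up to at least `1`. -/
noncomputable def coverWeight (t : ℝ) : ℝ := max 0 (min 1 (2 * t - 1 / 2))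

theorem one_le_coverWeight_add {s t : ℝ} (h : 1 ≤ s + t) :
    1 ≤ coverWeight s + coverWeight t := by
  unfold coverWeight
  rcases max_cases 0 (min 1 (2 * s - 1 / 2)) with h1 | h1 <;>
  rcases max_cases 0 (min 1 (2 * t - 1 / 2)) with h2 | h2 <;>
  rcases min_cases 1 (2 * s - 1 / 2) with h3 | h3 <;>
  rcases min_cases 1 (2 * t - 1 / 2) with h4 | h4 <;> linarith

theorem add_mul_coverWeight_le {k h d x : ℝ} (hk : 0 < k) (h0 : 0 ≤ h)
    (hx : h ≤ x) (hd : h + d ≤ k) : h + d * coverWeight (x / k) ≤ 3 / 2 * x := by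
  obtain ⟨t, rfl⟩ : ∃ t, x = t * k := ⟨x / k, by field_simp⟩
  rw [mul_div_cancel_right₀ _ hk.ne']
  have ht : 0 ≤ t := by
    by_contra! hneg
    nlinarith
  unfold coverWeight
  rcases max_cases 0 (min 1 (2 * t - 1 / 2)) with h1 | h1
  · rw [h1.1]; nlinarith
  rcases min_cases 1 (2 * t - 1 / 2) with h2 | h2
  · rw [h1.1, h2.1]; nlinarith
  · rw [h1.1, h2.1]
    have hp : d * (2 * t - 1 / 2) ≤ (k - h) * (2 * t - 1 / 2) :=
      mul_le_mul_of_nonneg_right (by linarith) (by linarith)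
    have hq : h * (3 / 2 - 2 * t) ≤ t * k * (3 / 2 - 2 * t) :=
      mul_le_mul_of_nonneg_right hx (by linarith)
    nlinarith [mul_nonneg hk.le (sq_nonneg (t - 1 / 2))]

section

variable {V : Type*}

/-- The number of ordered pairs in `A × B` that are adjacent in `G`. -/
def SimpleGraph.pairCount (G : SimpleGraph V) [DecidableRel G.Adj] (A B : Finset V) : ℝ :=
  ∑ a ∈ A, ∑ b ∈ B, if G.Adj a b then 1 else 0

namespace SimpleGraph

variable (G H : SimpleGraph V) [DecidableRel G.Adj] [DecidableRel H.Adj]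

theorem pairCount_comm (A B : Finset V) : G.pairCount A B = G.pairCount B A := by
  unfold pairCount
  rw [Finset.sum_comm]
  simp only [G.adj_comm]

theorem pairCount_nonneg (A B : Finset V) : 0 ≤ G.pairCount A B :=
  Finset.sum_nonneg fun a _ => Finset.sum_nonneg fun b _ => by
    split_ifs <;> norm_num

variable {G H} in
theorem pairCount_mono (hHG : H ≤ G) (A B : Finset V) : H.pairCount A B ≤ G.pairCount A B := by
  refine Finset.sum_le_sum fun a _ => Finset.sum_le_sum fun b _ => ?_
  by_cases h : H.Adj a b
  · simp [h, hHG h]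
  · rw [if_neg h]; split_ifs <;> norm_num

theorem pairCount_eq_sum_singleton (A B : Finset V) :
    G.pairCount A B = ∑ a ∈ A, G.pairCount {a} B := by
  simp [pairCount]

variable [Fintype V]

theorem pairCount_univ_right (A : Finset V) :
    G.pairCount A Finset.univ = ∑ a ∈ A, (G.degree a : ℝ) := by
  simp [pairCount, ← card_neighborFinset_eq_degree, neighborFinset_eq_filter]

theorem pairCount_singleton_neighborFinset (v : V) :
    G.pairCount {v} (G.neighborFinset v) = G.degree v := by
  simp only [pairCount, Finset.sum_singleton]
  rw [Finset.sum_congr rfl fun b hb => if_pos ((G.mem_neighborFinset v b).1 hb)]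
  simp

variable [DecidableEq V]

/-- The vertices outside the closed neighbourhood of `v`. -/
def farFinset (v : V) : Finset V := Finset.univ.filter fun a => a ≠ v ∧ ¬ G.Adj v a

variable {G H} in
theorem sum_univ_eq_sum_neighborFinset (hHG : H ≤ G) (v : V) (f : V → ℝ) :
    ∑ a, f a = f v + ∑ a ∈ H.neighborFinset v, f a
      + ∑ a ∈ G.neighborFinset v \ H.neighborFinset v, f a + ∑ a ∈ G.farFinset v, f a := by
  have h1 : Disjoint ({v} : Finset V) (H.neighborFinset v) := by simp
  have h2 : Disjoint ({v} ∪ H.neighborFinset v) (G.neighborFinset v \ H.neighborFinset v) := by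
    rw [Finset.disjoint_left]; intro a; simp; grind [SimpleGraph.irrefl]
  have h3 : Disjoint ({v} ∪ H.neighborFinset v ∪ (G.neighborFinset v \ H.neighborFinset v))
      (G.farFinset v) := by
    rw [Finset.disjoint_left]; intro a ha; simp [farFinset] at *
    have := @hHG v a
    tauto
  rw [← Finset.sum_singleton f v, ← Finset.sum_union h1, ← Finset.sum_union h2,
    ← Finset.sum_union h3]
  congr 1
  ext a
  simp [farFinset]
  tauto

variable {G H} in
theorem pairCount_univ_eq (hHG : H ≤ G) (v : V) (G' : SimpleGraph V) [DecidableRel G'.Adj]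
    (A : Finset V) :
    G'.pairCount A Finset.univ = G'.pairCount A {v} + G'.pairCount A (H.neighborFinset v)
      + G'.pairCount A (G.neighborFinset v \ H.neighborFinset v)
      + G'.pairCount A (G.farFinset v) := by
  simp only [pairCount, ← Finset.sum_add_distrib, Finset.sum_singleton]
  exact Finset.sum_congr rfl fun a _ => sum_univ_eq_sum_neighborFinset hHG v _

/-- Any two edges of `H` share a vertex or are joined by an edge of `G`. -/
def IsStrongCliqueIn (H G : SimpleGraph V) : Prop :=
  ∀ ⦃a b c d⦄, H.Adj a b → H.Adj c d →
    (a = c ∨ a = d ∨ b = c ∨ b = d) ∨ G.Adj a c ∨ G.Adj a d ∨ G.Adj b c ∨ G.Adj b d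

variable {G H}

/-- An edge of a strong clique away from `v` sees all `H`-neighbours of `v`. -/
theorem IsStrongCliqueIn.degree_le (hHG : H ≤ G) (hS : IsStrongCliqueIn H G) {v a b : V}
    (ha : a ∈ G.farFinset v) (hb : b ∈ G.farFinset v) (hab : H.Adj a b) :
    (H.degree v : ℝ) ≤
      G.pairCount {a} (H.neighborFinset v) + G.pairCount {b} (H.neighborFinset v) := by
  simp only [farFinset, Finset.mem_filter, Finset.mem_univ, true_and] at ha hb
  simp only [pairCount, Finset.sum_singleton, ← Finset.sum_add_distrib]
  rw [← card_neighborFinset_eq_degree, ← nsmul_one]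
  refine Finset.card_nsmul_le_sum _ _ _ fun x hx => ?_
  rw [mem_neighborFinset] at hx
  have hGx := hHG hx
  have key : G.Adj a x ∨ G.Adj b x := by
    rcases hS hx hab with h | h
    · rcases h with rfl | rfl | rfl | rfl <;> tauto
    · have h1 := G.adj_comm x a
      have h2 := G.adj_comm x b
      tauto
  rcases key with h | h <;> rw [if_pos h] <;> split_ifs <;> norm_num

theorem pairCount_far_le (hHG : H ≤ G) (hS : IsStrongCliqueIn H G) {v : V}
    (hv : ∀ a, H.degree a ≤ H.degree v) :
    2 * H.pairCount (G.farFinset v) (H.neighborFinset v)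
      + H.pairCount (G.farFinset v) (G.farFinset v)
      ≤ 3 * G.pairCount (G.farFinset v) (H.neighborFinset v) := by
  set O := G.farFinset v with hO
  set X := H.neighborFinset v with hX
  rcases Nat.eq_zero_or_pos (H.degree v) with hk | hk
  · have hzero : ∀ B, H.pairCount O B = 0 := fun B => by
      refine Finset.sum_eq_zero fun a _ => Finset.sum_eq_zero fun b _ => ?_
      rw [if_neg]
      intro hab
      have := (H.degree_pos_iff_exists_adj a).2 ⟨b, hab⟩
      have := hv a
      omega
    rw [hzero, hzero]
    have := G.pairCount_nonneg O X
    linarith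
  have hk' : (0 : ℝ) < H.degree v := by exact_mod_cast hk
  set w : V → ℝ := fun a => coverWeight (G.pairCount {a} X / H.degree v)
  have hOO : H.pairCount O O ≤ 2 * ∑ a ∈ O, H.pairCount {a} O * w a := by
    have h1 : H.pairCount O O ≤ ∑ a ∈ O,
        ∑ b ∈ O, (if H.Adj a b then (1 : ℝ) else 0) * (w a + w b) := by
      refine Finset.sum_le_sum fun a ha => Finset.sum_le_sum fun b hb => ?_
      split_ifs with hab
      · rw [one_mul]
        refine one_le_coverWeight_add ?_
        rw [← add_div, one_le_div hk']
        exact hS.degree_le hHG ha hb hab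
      · simp
    have h2 : ∑ a ∈ O, ∑ b ∈ O, (if H.Adj a b then (1 : ℝ) else 0) * w a =
        ∑ a ∈ O, H.pairCount {a} O * w a := by
      simp only [pairCount, Finset.sum_mul, Finset.sum_singleton]
    have h3 : ∑ a ∈ O, ∑ b ∈ O, (if H.Adj a b then (1 : ℝ) else 0) * w b =
        ∑ a ∈ O, H.pairCount {a} O * w a := by
      rw [Finset.sum_comm, ← h2]
      simp only [H.adj_comm]
    simp only [mul_add, Finset.sum_add_distrib] at h1
    linarith
  have hpt : ∑ a ∈ O, (H.pairCount {a} X + H.pairCount {a} O * w a)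
      ≤ ∑ a ∈ O, 3 / 2 * G.pairCount {a} X := by
    refine Finset.sum_le_sum fun a _ => ?_
    refine add_mul_coverWeight_le hk' (H.pairCount_nonneg _ _) (pairCount_mono hHG _ _) ?_
    have hdeg := pairCount_univ_eq hHG v H {a}
    rw [pairCount_univ_right, Finset.sum_singleton] at hdeg
    have h1 := H.pairCount_nonneg {a} {v}
    have h2 := H.pairCount_nonneg {a} (G.neighborFinset v \ H.neighborFinset v)
    have h3 : (H.degree a : ℝ) ≤ H.degree v := by exact_mod_cast hv a
    linarith
  rw [Finset.sum_add_distrib, ← Finset.mul_sum, ← pairCount_eq_sum_singleton,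
    ← pairCount_eq_sum_singleton] at hpt
  linarith

/-- A strong clique has at most `3 / 2 * Δ ^ 2` edges. -/
theorem IsStrongCliqueIn.card_edgeFinset_le (hHG : H ≤ G) (hS : IsStrongCliqueIn H G) :
    (H.edgeFinset.card : ℝ) ≤ 3 / 2 * (G.maxDegree : ℝ) ^ 2 := by
  rcases isEmpty_or_nonempty V with hV | hV
  · have : H.edgeFinset = ∅ := by
      rw [edgeFinset_eq_empty]; exact Subsingleton.elim _ _
    rw [this, Finset.card_empty, Nat.cast_zero]; positivity
  obtain ⟨v, hv⟩ := H.exists_maximal_degree_vertex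
  have hmax : ∀ a, H.degree a ≤ H.degree v := fun a => hv ▸ H.degree_le_maxDegree a
  have hfar := pairCount_far_le hHG hS hmax
  set X := H.neighborFinset v with hX
  set Y := G.neighborFinset v \ X with hY
  set O := G.farFinset v with hO
  set k : ℝ := (H.degree v : ℝ) with hk
  set Δ : ℝ := (G.maxDegree : ℝ) with hΔ
  have hk0 : 0 ≤ k := Nat.cast_nonneg _
  have hXk : (X.card : ℝ) = k := by simp [hX, hk]
  have hsub : X ⊆ G.neighborFinset v := fun a ha => by
    rw [hX, mem_neighborFinset] at ha
    exact (G.mem_neighborFinset v a).2 (hHG ha)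
  have hYk : (Y.card : ℝ) ≤ Δ - k := by
    have h1 : Y.card + X.card = G.degree v := by
      rw [hY, Finset.card_sdiff_add_card_eq_card hsub, card_neighborFinset_eq_degree]
    have h2 : (Y.card : ℝ) + X.card = G.degree v := by exact_mod_cast h1
    have h3 : (G.degree v : ℝ) ≤ Δ := Nat.cast_le.2 (G.degree_le_maxDegree v)
    linarith
  have hkΔ : k ≤ Δ := by
    have : (0 : ℝ) ≤ Y.card := Nat.cast_nonneg _
    linarith
  have hYdeg : H.pairCount Y Finset.univ ≤ k * (Δ - k) := by
    rw [pairCount_univ_right]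
    calc ∑ a ∈ Y, (H.degree a : ℝ) ≤ Y.card • k :=
          Finset.sum_le_card_nsmul _ _ _ fun a _ => Nat.cast_le.2 (hmax a)
      _ ≤ k * (Δ - k) := by
          rw [nsmul_eq_mul, mul_comm]; exact mul_le_mul_of_nonneg_left hYk hk0
  have hXdeg : G.pairCount X Finset.univ ≤ k * Δ := by
    rw [pairCount_univ_right]
    calc ∑ a ∈ X, (G.degree a : ℝ) ≤ X.card • Δ :=
          Finset.sum_le_card_nsmul _ _ _ fun a _ => Nat.cast_le.2 (G.degree_le_maxDegree a)
      _ = k * Δ := by rw [nsmul_eq_mul, hXk]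
  have hvX : H.pairCount X {v} = k := by
    rw [pairCount_comm, hX, pairCount_singleton_neighborFinset]
  have hvX' : k ≤ G.pairCount X {v} := hvX ▸ pairCount_mono hHG _ _
  have hXX : H.pairCount X X ≤ G.pairCount X X := pairCount_mono hHG _ _
  have htotal : 2 * (H.edgeFinset.card : ℝ) = H.pairCount Finset.univ Finset.univ := by
    rw [pairCount_univ_right]
    exact_mod_cast H.sum_degrees_eq_twice_card_edges.symm
  have hsplit : H.pairCount Finset.univ Finset.univ = H.pairCount {v} Finset.univ
      + H.pairCount X Finset.univ + H.pairCount Y Finset.univ + H.pairCount O Finset.univ := by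
    rw [H.pairCount_comm {v}, H.pairCount_comm X, H.pairCount_comm Y, H.pairCount_comm O]
    exact pairCount_univ_eq hHG v H Finset.univ
  have hdegv : H.pairCount {v} Finset.univ = k := by
    rw [pairCount_univ_right, Finset.sum_singleton]
  have eX := pairCount_univ_eq hHG v H X
  have eY := pairCount_univ_eq hHG v H Y
  have eO := pairCount_univ_eq hHG v H O
  have eGX := pairCount_univ_eq hHG v G X
  have hvO : H.pairCount O {v} = 0 := by
    refine Finset.sum_eq_zero fun a ha => ?_
    rw [Finset.sum_singleton, if_neg]
    intro h
    exact ((Finset.mem_filter.1 ha).2).2 (hHG h).symm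
  have c1 := H.pairCount_comm X Y
  have c2 := H.pairCount_comm X O
  have c3 := H.pairCount_comm Y O
  have c4 := G.pairCount_comm X O
  have n1 := H.pairCount_nonneg Y {v}
  have n2 := H.pairCount_nonneg Y Y
  have n3 := G.pairCount_nonneg X Y
  have n4 := G.pairCount_nonneg X X
  have hquad : 5 * (k * Δ) - 2 * k ^ 2 ≤ 3 * Δ ^ 2 := by nlinarith
  nlinarith

end SimpleGraph

end

/-- If `G` is a simple graph with maximum degree `Δ ≥ 400`, then every strong clique of
`G`, i.e. every clique of `L²(G)`, has size at most `1.74 * Δ²`. -/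
theorem strong_clique_le (V : Type) [Fintype V] [DecidableEq V]
    (G : SimpleGraph V) [DecidableRel G.Adj] (hΔ : 400 ≤ G.maxDegree)
    (K : Set G.edgeSet) (hK : (lineGraphSq G).IsClique K) :
    (K.ncard : ℝ) ≤ 1.74 * (G.maxDegree : ℝ) ^ 2 := by
  classical
  set H : SimpleGraph V := SimpleGraph.fromEdgeSet (Subtype.val '' K) with hH
  have hadj : ∀ {a b}, H.Adj a b → ∃ h : s(a, b) ∈ G.edgeSet, (⟨s(a, b), h⟩ : G.edgeSet) ∈ K := by
    intro a b h
    obtain ⟨⟨⟨e, he⟩, heK, rfl⟩, -⟩ := (SimpleGraph.fromEdgeSet_adj _).1 h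
    exact ⟨he, heK⟩
  have hHG : H ≤ G := fun a b h => (hadj h).1
  have hS : SimpleGraph.IsStrongCliqueIn H G := by
    intro a b c d hab hcd
    obtain ⟨h1, h1K⟩ := hadj hab
    obtain ⟨h2, h2K⟩ := hadj hcd
    by_cases hne : (⟨s(a, b), h1⟩ : G.edgeSet) = ⟨s(c, d), h2⟩
    · have := congrArg Subtype.val hne
      simp only [Sym2.eq_iff] at this
      tauto
    obtain ⟨-, ⟨x, hx1, hx2⟩ | ⟨⟨g, hg⟩, ⟨x, hx1, hx2⟩, ⟨y, hy1, hy2⟩⟩⟩ := hK h1K h2K hne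
    · simp only [Sym2.mem_iff] at hx1 hx2
      grind
    · simp only [Sym2.mem_iff] at hx1 hy2
      by_cases hxy : x = y
      · grind
      · have : G.Adj x y := by
          rw [← SimpleGraph.mem_edgeSet, ← (Sym2.mem_and_mem_iff hxy).1 ⟨hx2, hy1⟩]
          exact hg
        grind
  have hcard : K.ncard = H.edgeFinset.card := by
    rw [← Set.ncard_image_of_injective K Subtype.val_injective, ← Set.ncard_coe_finset,
      SimpleGraph.coe_edgeFinset, hH, SimpleGraph.edgeSet_fromEdgeSet]
    congr 1
    refine (sdiff_eq_left.2 ?_).symm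
    rw [Set.disjoint_left]
    rintro _ ⟨e, -, rfl⟩ hdiag
    exact G.not_isDiag_of_mem_edgeSet e.2 hdiag
  have hbound : (K.ncard : ℝ) ≤ 3 / 2 * (G.maxDegree : ℝ) ^ 2 := by
    rw [hcard]
    convert hS.card_edgeFinset_le hHG
  norm_num
  nlinarith [sq_nonneg (G.maxDegree : ℝ)]
end

section
/- There is a constant c > 0 such that for every integer k ≥ 2, setting n = 2^k and Δ = n + 1, there exists a simple graph G of maximum degree Δ containing an edge e = uv such that the strong neighborhood N^s_e induces in L²(G) at least (3/2)·Δ⁴ − c·Δ³ edges. -/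
/-- The number of ordered pairs of adjacent vertices that can be indexed injectively is at most
twice the number of edges. -/
theorem card_le_two_mul_ncard_edgeSet {α ι : Type*} [Finite α] [Fintype ι] (H : SimpleGraph α)
    (f g : ι → α) (hadj : ∀ i, H.Adj (f i) (g i))
    (hinj : ∀ i j, f i = f j → g i = g j → i = j) :
    Fintype.card ι ≤ 2 * H.edgeSet.ncard := by
  classical
  have := Fintype.ofFinite α
  rw [← SimpleGraph.coe_edgeFinset, Set.ncard_coe_finset, ← H.dart_card_eq_twice_card_edges]
  refine Fintype.card_le_of_injective (fun i => (⟨(f i, g i), hadj i⟩ : H.Dart)) ?_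
  intro i j hij
  simp only [SimpleGraph.Dart.mk.injEq, Prod.mk.injEq] at hij
  exact hinj i j hij.1 hij.2

/-- The binary vectors whose dot product with `x` is nonzero. -/
def oddSet {k : ℕ} (x : Fin (k + 1) → ZMod 2) : Finset (Fin (k + 1) → ZMod 2) :=
  {y | x ⬝ᵥ y = 1}

theorem mem_oddSet {k : ℕ} {x y : Fin (k + 1) → ZMod 2} : y ∈ oddSet x ↔ x ⬝ᵥ y = 1 := by
  simp [oddSet]

theorem zmod_two_eq (a : ZMod 2) : a = 0 ∨ a = 1 := by
  revert a; decide

theorem card_oddSet {k : ℕ} {x : Fin (k + 1) → ZMod 2} (hx : x ≠ 0) :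
    (oddSet x).card = 2 ^ k := by
  obtain ⟨i, hi⟩ := Function.ne_iff.1 hx
  have hi1 : x i = 1 := (zmod_two_eq (x i)).resolve_left hi
  have hshift : (oddSet x).card = (oddSet x)ᶜ.card := by
    refine Finset.card_equiv (Equiv.addRight (Pi.single i 1)) fun y => ?_
    simp only [Finset.mem_compl, mem_oddSet, Equiv.coe_addRight, dotProduct_add,
      dotProduct_single, hi1]
    generalize x ⬝ᵥ y = a
    revert a; decide
  have htotal := Finset.card_add_card_compl (oddSet x)
  simp only [Fintype.card_pi, ZMod.card, Finset.prod_const, Finset.card_univ,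
    Fintype.card_fin, pow_succ] at htotal
  omega

theorem two_mul_card_oddSet_sdiff {k : ℕ} {x x' : Fin (k + 1) → ZMod 2} (hx : x ≠ 0)
    (hx' : x' ≠ 0) (hne : x ≠ x') : 2 * (oddSet x \ oddSet x').card = 2 ^ k := by
  have hsum : x + x' ≠ 0 := fun h => hne (by
    rw [add_eq_zero_iff_eq_neg] at h
    rw [h]; ext i; simp)
  have hunion : oddSet (x + x') = (oddSet x \ oddSet x') ∪ (oddSet x' \ oddSet x) := by
    ext y
    simp only [Finset.mem_union, Finset.mem_sdiff, mem_oddSet, add_dotProduct]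
    generalize x ⬝ᵥ y = a
    generalize x' ⬝ᵥ y = b
    revert a b; decide
  have hdisj : Disjoint (oddSet x \ oddSet x') (oddSet x' \ oddSet x) :=
    Finset.disjoint_left.2 fun y h h' =>
      (Finset.mem_sdiff.1 h).2 (Finset.mem_sdiff.1 h').1
  have hcard := card_oddSet hsum
  rw [hunion, Finset.card_union_of_disjoint hdisj] at hcard
  have h := Finset.card_sdiff_add_card_inter (oddSet x) (oddSet x')
  have h' := Finset.card_sdiff_add_card_inter (oddSet x') (oddSet x)
  rw [card_oddSet hx] at h
  rw [card_oddSet hx', Finset.inter_comm] at h'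
  omega

/-- The pairs `(y, y')` for which the edges `x y` and `x' y'` of the bipartite odd dot product
graph are joined by the edge `x y'` or by the edge `x' y`. -/
def linkedPairs {k : ℕ} (x x' : Fin (k + 1) → ZMod 2) :
    Finset ((Fin (k + 1) → ZMod 2) × (Fin (k + 1) → ZMod 2)) :=
  (oddSet x ×ˢ oddSet x') \ ((oddSet x \ oddSet x') ×ˢ (oddSet x' \ oddSet x))

theorem four_mul_card_linkedPairs {k : ℕ} {x x' : Fin (k + 1) → ZMod 2} (hx : x ≠ 0)
    (hx' : x' ≠ 0) (hne : x ≠ x') : 4 * (linkedPairs x x').card = 3 * (2 ^ k) ^ 2 := by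
  have h := Finset.card_sdiff_add_card_eq_card (Finset.product_subset_product
    (Finset.sdiff_subset (s := oddSet x) (t := oddSet x'))
    (Finset.sdiff_subset (s := oddSet x') (t := oddSet x)))
  change (linkedPairs x x').card + _ = _ at h
  rw [Finset.card_product, Finset.card_product, card_oddSet hx, card_oddSet hx'] at h
  have h₁ := two_mul_card_oddSet_sdiff hx hx' hne
  have h₂ := two_mul_card_oddSet_sdiff hx' hx hne.symm
  generalize (2 : ℕ) ^ k = n at *
  subst h₁
  have h₃ : (oddSet x' \ oddSet x).card = (oddSet x \ oddSet x').card := by omega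
  rw [h₃] at h
  nlinarith

/-- The quadruples `(x, x', y, y')` indexing linked pairs of edges `x y` and `x' y'` with distinct
first endpoints. -/
def linkedQuadruples (k : ℕ) : Finset (Σ _ : (Fin (k + 1) → ZMod 2) × (Fin (k + 1) → ZMod 2),
    (Fin (k + 1) → ZMod 2) × (Fin (k + 1) → ZMod 2)) :=
  (Finset.univ.erase 0).offDiag.sigma fun p => linkedPairs p.1 p.2

theorem four_mul_card_linkedQuadruples (k : ℕ) :
    (4 * (linkedQuadruples k).card : ℝ) =
      (2 * 2 ^ k - 1) * (2 * 2 ^ k - 2) * (3 * (2 ^ k) ^ 2) := by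
  have hcard : (Finset.univ.erase (0 : Fin (k + 1) → ZMod 2)).card + 1 = 2 * 2 ^ k := by
    rw [Finset.card_erase_add_one (Finset.mem_univ _)]
    simp [pow_succ']
  have hsum : 4 * (linkedQuadruples k).card =
      (Finset.univ.erase (0 : Fin (k + 1) → ZMod 2)).offDiag.card * (3 * (2 ^ k) ^ 2) := by
    rw [linkedQuadruples, Finset.card_sigma, Finset.mul_sum, ← smul_eq_mul (a := Finset.card _)]
    refine Finset.sum_eq_card_nsmul fun p hp => ?_
    simp only [Finset.mem_offDiag, Finset.mem_erase, Finset.mem_univ, and_true] at hp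
    exact four_mul_card_linkedPairs hp.1 hp.2.1 hp.2.2
  have hle := Nat.le_mul_self (Finset.univ.erase (0 : Fin (k + 1) → ZMod 2)).card
  rw [Finset.offDiag_card] at hsum
  have hsum' := congrArg (Nat.cast (R := ℝ)) hsum
  have hcard' := congrArg (Nat.cast (R := ℝ)) hcard
  push_cast [Nat.cast_sub hle] at hsum' hcard'
  rw [hsum', ← hcard']
  ring

/-- A graph containing an edge `u v`, vertices `a x` each joined to `u` or `v`, and vertices `b y`
with `a x` joined to `b y` whenever the dot product of `x` and `y` is odd, has many edges in its
squared line graph within the neighborhood of `u v`. -/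
theorem card_linkedQuadruples_le {V : Type*} [Finite V] {k : ℕ} (G : SimpleGraph V) {u v : V}
    (huv : G.Adj u v) (a b : (Fin (k + 1) → ZMod 2) → V)
    (ha : a.Injective) (hb : b.Injective) (hab : ∀ x y, a x ≠ b y)
    (hau : ∀ x, a x ≠ u) (hav : ∀ x, a x ≠ v)
    (hadj : ∀ x, G.Adj u (a x) ∨ G.Adj v (a x))
    (hodd : ∀ x y, x ⬝ᵥ y = 1 → G.Adj (a x) (b y)) :
    (linkedQuadruples k).card ≤ 2 * ((lineGraphSq G).induce
      ((lineGraphSq G).neighborSet ⟨s(u, v), huv⟩)).edgeSet.ncard := by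
  have hnbr : ∀ x y (h : x ⬝ᵥ y = 1),
      (⟨s(a x, b y), hodd x y h⟩ : G.edgeSet) ∈
        (lineGraphSq G).neighborSet ⟨s(u, v), huv⟩ := by
    intro x y h
    refine ⟨fun heq => ?_, Or.inr ?_⟩
    · have : a x ∈ s(u, v) := by
        rw [Subtype.mk.inj heq]; exact Sym2.mem_mk_left _ _
      rcases Sym2.mem_iff.1 this with h | h
      exacts [hau x h, hav x h]
    · rcases hadj x with h | h
      · exact ⟨⟨s(u, a x), h⟩, ⟨u, by simp⟩, ⟨a x, by simp⟩⟩
      · exact ⟨⟨s(v, a x), h⟩, ⟨v, by simp⟩, ⟨a x, by simp⟩⟩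
  have hmk : ∀ x y x' y', s(a x, b y) = s(a x', b y') → x = x' ∧ y = y' := by
    intro x y x' y' h
    rcases Sym2.eq_iff.1 h with h | h
    · exact ⟨ha h.1, hb h.2⟩
    · exact absurd h.1 (hab _ _)
  have hmem : ∀ q : linkedQuadruples k, q.1.1.1 ≠ q.1.1.2 ∧
      q.1.1.1 ⬝ᵥ q.1.2.1 = 1 ∧ q.1.1.2 ⬝ᵥ q.1.2.2 = 1 ∧
      (q.1.1.2 ⬝ᵥ q.1.2.1 = 1 ∨ q.1.1.1 ⬝ᵥ q.1.2.2 = 1) := by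
    rintro ⟨⟨⟨x, x'⟩, ⟨y, y'⟩⟩, hq⟩
    simp only [linkedQuadruples, linkedPairs, Finset.mem_sigma, Finset.mem_offDiag,
      Finset.mem_sdiff, Finset.mem_product, mem_oddSet] at hq ⊢
    tauto
  rw [← Fintype.card_coe]
  refine card_le_two_mul_ncard_edgeSet _
    (fun q => ⟨_, hnbr q.1.1.1 q.1.2.1 (hmem q).2.1⟩)
    (fun q => ⟨_, hnbr q.1.1.2 q.1.2.2 (hmem q).2.2.1⟩) ?_ ?_
  · intro q
    obtain ⟨hne, -, -, hlink⟩ := hmem q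
    refine ⟨fun heq => hne (hmk _ _ _ _ (congrArg Subtype.val heq)).1, Or.inr ?_⟩
    rcases hlink with h | h
    · exact ⟨⟨s(_, _), hodd _ _ h⟩, ⟨b q.1.2.1, by simp⟩, ⟨a q.1.1.2, by simp⟩⟩
    · exact ⟨⟨s(_, _), hodd _ _ h⟩, ⟨a q.1.1.1, by simp⟩, ⟨b q.1.2.2, by simp⟩⟩
  · rintro ⟨⟨⟨x₁, x₁'⟩, ⟨y₁, y₁'⟩⟩, hq₁⟩ ⟨⟨⟨x₂, x₂'⟩, ⟨y₂, y₂'⟩⟩, hq₂⟩ hf hg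
    obtain ⟨rfl, rfl⟩ := hmk _ _ _ _ (congrArg (fun z => z.1.1) hf)
    obtain ⟨rfl, rfl⟩ := hmk _ _ _ _ (congrArg (fun z => z.1.1) hg)
    rfl

/-- The adjacency relation of `oddGraph`. -/
def oddAdj (k : ℕ) : Bool ⊕ (Fin (k + 1) → ZMod 2) ⊕ (Fin (k + 1) → ZMod 2) →
    Bool ⊕ (Fin (k + 1) → ZMod 2) ⊕ (Fin (k + 1) → ZMod 2) → Prop
  | .inl c, .inl d => c ≠ d
  | .inl c, .inr (.inl x) => c = true ↔ x ∈ oddSet (Pi.single 0 1)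
  | .inr (.inl x), .inl c => c = true ↔ x ∈ oddSet (Pi.single 0 1)
  | .inr (.inl x), .inr (.inr y) => y ∈ oddSet x
  | .inr (.inr y), .inr (.inl x) => y ∈ oddSet x
  | _, _ => False

/-- An edge whose two ends are joined to the two halves of the first copy of the binary vectors of
length `k + 1`, with vectors of the first copy joined to those of the second copy with odd
dot product. -/
def oddGraph (k : ℕ) : SimpleGraph (Bool ⊕ (Fin (k + 1) → ZMod 2) ⊕ (Fin (k + 1) → ZMod 2)) where
  Adj := oddAdj k
  symm := ⟨by rintro (c | x | y) (d | x' | y') h <;> simp_all [oddAdj, eq_comm]⟩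
  loopless := ⟨by rintro (c | x | y) h <;> simp [oddAdj] at h⟩

theorem oddSet_zero (k : ℕ) : oddSet (0 : Fin (k + 1) → ZMod 2) = ∅ := by
  ext; simp [mem_oddSet]

theorem card_oddSet_le {k : ℕ} (x : Fin (k + 1) → ZMod 2) : (oddSet x).card ≤ 2 ^ k := by
  by_cases hx : x = 0
  · simp [hx, oddSet_zero]
  · exact (card_oddSet hx).le

theorem mem_oddSet_comm {k : ℕ} {x y : Fin (k + 1) → ZMod 2} : y ∈ oddSet x ↔ x ∈ oddSet y := by
  rw [mem_oddSet, mem_oddSet, dotProduct_comm]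

theorem degree_oddGraph (k : ℕ) [DecidableRel (oddGraph k).Adj] [DecidableRel (oddAdj k)]
    (v : Bool ⊕ (Fin (k + 1) → ZMod 2) ⊕ (Fin (k + 1) → ZMod 2)) :
    (oddGraph k).degree v = Finset.card {c | oddAdj k v (.inl c)} +
      (Finset.card {x | oddAdj k v (.inr (.inl x))} +
        Finset.card {y | oddAdj k v (.inr (.inr y))}) := by
  simp only [Finset.card_filter]
  rw [← Fintype.sum_sum_type fun w => if oddAdj k v (.inr w) then 1 else 0,
    ← Fintype.sum_sum_type fun w => if oddAdj k v w then 1 else 0,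
    ← SimpleGraph.card_neighborFinset_eq_degree, SimpleGraph.neighborFinset_eq_filter,
    Finset.card_filter]
  exact Finset.sum_congr rfl fun w _ => if_congr Iff.rfl rfl rfl

theorem maxDegree_oddGraph (k : ℕ) [DecidableRel (oddGraph k).Adj] :
    (oddGraph k).maxDegree = 2 ^ k + 1 := by
  classical
  have hhalf : (oddSet (Pi.single (0 : Fin (k + 1)) (1 : ZMod 2))).card = 2 ^ k :=
    card_oddSet (by simp)
  have hhalf' : (oddSet (Pi.single (0 : Fin (k + 1)) (1 : ZMod 2)))ᶜ.card = 2 ^ k := by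
    rw [Finset.card_compl, hhalf]
    simp [pow_succ, mul_two]
  have hend : ∀ c, (oddGraph k).degree (.inl c) = 2 ^ k + 1 := by
    intro c
    have h₁ : ({d | oddAdj k (.inl c) (.inl d)} : Finset Bool) = {!c} := by
      ext d; cases c <;> cases d <;> simp [oddAdj]
    have h₂ : Finset.card {x | oddAdj k (.inl c) (.inr (.inl x))} = 2 ^ k := by
      cases c
      · rw [← hhalf']; congr 1; ext x; rw [Finset.mem_filter]; simp [oddAdj]
      · rw [← hhalf]; congr 1; ext x; rw [Finset.mem_filter]; simp [oddAdj]
    have h₃ : ({y | oddAdj k (.inl c) (.inr (.inr y))} : Finset (Fin (k + 1) → ZMod 2)) = ∅ := by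
      ext y; rw [Finset.mem_filter]; simp [oddAdj]
    rw [degree_oddGraph, h₁, h₂, h₃, Finset.card_singleton, Finset.card_empty, add_zero, add_comm]
  apply le_antisymm
  · refine SimpleGraph.maxDegree_le_of_forall_degree_le _ _ fun v => ?_
    rcases v with c | x | y
    · exact (hend c).le
    · have h₁ : Finset.card {c | oddAdj k (.inr (.inl x)) (.inl c)} ≤ 1 := by
        refine Finset.card_le_one.2 fun c hc d hd => ?_
        rw [Finset.mem_filter] at hc hd
        exact Bool.eq_iff_iff.2 (Iff.trans hc.2 (Iff.symm hd.2))
      have h₂ : ({x' | oddAdj k (.inr (.inl x)) (.inr (.inl x'))} :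
          Finset (Fin (k + 1) → ZMod 2)) = ∅ := by
        ext y; rw [Finset.mem_filter]; simp [oddAdj]
      have h₃ : ({y | oddAdj k (.inr (.inl x)) (.inr (.inr y))} :
          Finset (Fin (k + 1) → ZMod 2)) = oddSet x := by
        ext y; rw [Finset.mem_filter]; simp [oddAdj]
      have := card_oddSet_le x
      rw [degree_oddGraph, h₂, h₃, Finset.card_empty]
      omega
    · have h₁ : ({c | oddAdj k (.inr (.inr y)) (.inl c)} : Finset Bool) = ∅ := by
        ext c; rw [Finset.mem_filter]; simp [oddAdj]
      have h₂ : ({x | oddAdj k (.inr (.inr y)) (.inr (.inl x))} :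
          Finset (Fin (k + 1) → ZMod 2)) = oddSet y := by
        ext x; rw [Finset.mem_filter]; simp [oddAdj, mem_oddSet_comm (y := y)]
      have h₃ : ({y' | oddAdj k (.inr (.inr y)) (.inr (.inr y'))} :
          Finset (Fin (k + 1) → ZMod 2)) = ∅ := by
        ext y'; rw [Finset.mem_filter]; simp [oddAdj]
      have := card_oddSet_le y
      rw [degree_oddGraph, h₁, h₂, h₃, Finset.card_empty, Finset.card_empty]
      omega
  · exact (hend true).ge.trans (SimpleGraph.degree_le_maxDegree _ _)

/-- There is a constant `c > 0` such that for every `k ≥ 2`, with `n = 2 ^ k` and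
`Δ = n + 1`, there is a simple graph `G` of maximum degree `Δ` with an edge `e` whose
strong neighborhood induces in `L²(G)` at least `(3/2)Δ⁴ − cΔ³` edges. -/
theorem sparsity_best_possible :
    ∃ c : ℝ, 0 < c ∧ ∀ k : ℕ, 2 ≤ k →
      ∃ (m : ℕ) (G : SimpleGraph (Fin m)) (inst : DecidableRel G.Adj) (e : G.edgeSet),
        @SimpleGraph.maxDegree (Fin m) G _ inst = 2 ^ k + 1 ∧
        3 / 2 * ((2 ^ k + 1 : ℕ) : ℝ) ^ 4 - c * ((2 ^ k + 1 : ℕ) : ℝ) ^ 3 ≤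
          (((lineGraphSq G).induce ((lineGraphSq G).neighborSet e)).edgeSet.ncard : ℝ) := by
  classical
  refine ⟨9, by norm_num, fun k _ => ?_⟩
  let σ := Fintype.equivFin (Bool ⊕ (Fin (k + 1) → ZMod 2) ⊕ (Fin (k + 1) → ZMod 2))
  let G := (oddGraph k).map σ.toEmbedding
  have hG : ∀ v w, oddAdj k v w → G.Adj (σ v) (σ w) := fun v w h =>
    (SimpleGraph.map_adj _ _ _ _).2 ⟨v, w, h, rfl, rfl⟩
  have huv : G.Adj (σ (.inl false)) (σ (.inl true)) := hG _ _ (by simp [oddAdj])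
  refine ⟨_, G, inferInstance, ⟨s(_, _), huv⟩, ?_, ?_⟩
  · rw [← maxDegree_oddGraph k]
    exact (SimpleGraph.Iso.maxDegree_eq (SimpleGraph.Iso.map σ (oddGraph k))).symm
  · have hle := card_linkedQuadruples_le G huv
      (fun x => σ (.inr (.inl x))) (fun y => σ (.inr (.inr y)))
      (fun x x' h => by simpa using h) (fun y y' h => by simpa using h)
      (fun x y => by simp) (fun x => by simp) (fun x => by simp)
      (fun x => by
        by_cases hx : x ∈ oddSet (Pi.single 0 1)
        · exact Or.inr (hG _ _ (by simp [oddAdj, hx]))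
        · exact Or.inl (hG _ _ (by simp [oddAdj, hx])))
      (fun x y h => hG _ _ (by simpa [oddAdj, mem_oddSet] using h))
    have hcard := four_mul_card_linkedQuadruples k
    have hle' := Nat.cast_le (α := ℝ).2 hle
    rw [Nat.cast_mul, Nat.cast_ofNat] at hle'
    refine le_trans ?_ (show ((linkedQuadruples k).card : ℝ) / 2 ≤ _ by linarith)
    have hpos : (0 : ℝ) < 2 ^ k := by positivity
    push_cast
    generalize (2 : ℝ) ^ k = n at *
    have h₂ : 0 < n ^ 2 := by positivity
    have h₃ : 0 < n ^ 3 := by positivity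
    have hc : ((linkedQuadruples k).card : ℝ) = (2 * n - 1) * (2 * n - 2) * (3 * n ^ 2) / 4 := by
      linarith
    rw [hc]
    nlinarith
end
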